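/- arXiv:1801.00367 — 3 statements merged into one kernel-verified Lean document; each statement's English description precedes it below -/
import Mathlib

section
/- Let 2*(s) − 1 < q < 2* − 1 and set R* := (ℓ_q/μ)^{1/λ}. Every positive radial solution u of (E) on some (0,R), R > 0, satisfying limsup_{r→0⁺} r^{(n−2)/2} u(r) < ∞, extends to a positive radial solution of (E) on (0, R*]; that is, there exists a positive radial solution ũ of (E) on (0,R*] with ũ = u on (0, min(R, R*)). -/
/-!
Put `w(t) = e^{mt} u(e^t)` with `m = (n-2)/2`. Equation (E) becomes
`w'' = m² w - w^p + μ e^{λt} w^q` with `p = 2*(s) - 1`. Let `F t` be the primitive of the right-hand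
side in `w`. The energy `w'²/2 - F(t, w)` strictly decreases, because the coefficient `μ e^{λt}`
increases and `λ > 0`.

The upper bound on `u` says that `w` is bounded near `-∞`, and this forces the energy to be negative
at all times. Indeed, if it were nonnegative at some time, it would exceed a constant `e > 0` near
`-∞`, and `H = w'/w` would satisfy `H' ≤ -c < 0` and `H' ≤ C - H²` there; such an `H` blows up
backwards in finite time (`riccati_false`, `EF.Sol.J_pos`).

The radius `R*` is the one for which `F (log R*)` has a positive double zero `x₁`
(`EF.Barrier`). For `t ≤ log R*` one has `F t x₁ ≤ 0`, so a state with `w = x₁` has nonnegative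
energy and `w` stays below `x₁` (`EF.Sol.lt_barrier`). Since the energy is bounded away from `0`
from any fixed time on, `(w, w')` is confined to a bounded rectangle away from `w = 0`
(`EF.Barrier.confine`). A solution of the equation truncated outside this rectangle exists on an
interval reaching past `log R*`; it cannot leave the rectangle before `log R*`, and it agrees with
`w` by uniqueness (`EF.Sol.exists_continuation`). Changing variables back gives the extension of
`u` when `R ≤ R*`; when `R > R*` the function `u` itself is already a solution on `(0, R*]`.
-/

open Filter Set Real
open scoped Topology ENNReal

noncomputable section

/-- The critical Hardy–Sobolev exponent `2*(s) = 2(n-s)/(n-2)`. -/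
def twoStarS (n : ℕ) (s : ℝ) : ℝ := 2 * ((n : ℝ) - s) / ((n : ℝ) - 2)

/-- The critical Sobolev exponent `2* = 2n/(n-2)`. -/
def twoStar (n : ℕ) : ℝ := 2 * (n : ℝ) / ((n : ℝ) - 2)

/-- The radial form of the equation `-Δu = |x|^{-s} u^{2*(s)-1} - μ u^q` at a point `r`. -/
def radialEq (n : ℕ) (s μ q : ℝ) (u : ℝ → ℝ) (r : ℝ) : Prop :=
  deriv (deriv u) r + (((n : ℝ) - 1) / r) * deriv u r
    + r ^ (-s) * u r ^ (twoStarS n s - 1) - μ * u r ^ q = 0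

/-- A positive radial solution of (E) on a set `I ⊆ (0,∞)`. -/
def IsRadialSol (n : ℕ) (s μ q : ℝ) (I : Set ℝ) (u : ℝ → ℝ) : Prop :=
  ContDiffOn ℝ 2 u I ∧ (∀ r ∈ I, 0 < u r) ∧ ∀ r ∈ I, radialEq n s μ q u r

/-- `limsup_{r→0⁺} r^{(n-2)/2} u(r) < ∞`, phrased via the `ℝ≥0∞`-valued limsup. -/
def UpliBound (n : ℕ) (u : ℝ → ℝ) : Prop :=
  Filter.limsup (fun r : ℝ => ENNReal.ofReal (r ^ (((n : ℝ) - 2) / 2) * u r))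
    (𝓝[>] (0 : ℝ)) < ⊤

/-- `λ = (n-2)(2* - 1 - q)/2`. -/
def lam (n : ℕ) (q : ℝ) : ℝ := ((n : ℝ) - 2) * (twoStar n - 1 - q) / 2

/-- `ℓ_q` from the paper, defined for `q > 2*(s) - 1`. -/
def ellq (n : ℕ) (s q : ℝ) : ℝ :=
  ((2 - s) * (q + 1) / (((n : ℝ) - s) * (q - 1)))
    * (((n : ℝ) - 2) * ((n : ℝ) - s) * (q - 1) / (4 * (q - twoStarS n s + 1)))
        ^ (-(q - twoStarS n s + 1) / (twoStarS n s - 2))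

/-! ### A Riccati inequality -/

/-- A function on `(-∞, b]` with `H' ≤ -c < 0` and `H' ≤ C - H²` does not exist: going backwards in
time `H` grows past `√(2C)`, after which `(1/H)' ≥ 1/2` forces blow-up at a finite time. -/
lemma riccati_false {H H' : ℝ → ℝ} {b c C : ℝ} (hc : 0 < c)
    (hH : ∀ t ≤ b, HasDerivAt H (H' t) t) (h1 : ∀ t ≤ b, H' t ≤ -c)
    (h2 : ∀ t ≤ b, H' t ≤ C - H t ^ 2) : False := by
  have anti : AntitoneOn (fun t => H t + c * t) (Iic b) := by
    have hd : ∀ t ≤ b, HasDerivAt (fun t => H t + c * t) (H' t + c) t := fun t ht =>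
      (hH t ht).add (by simpa using (hasDerivAt_id t).const_mul c)
    refine antitoneOn_of_hasDerivWithinAt_nonpos (convex_Iic b) (f' := fun t => H' t + c)
      (fun t ht => (hd t ht).continuousAt.continuousWithinAt) ?_ ?_
    · intro t ht
      exact (hd t (interior_subset ht : t ∈ Iic b)).hasDerivWithinAt
    · intro t ht
      have := h1 t (interior_subset ht : t ∈ Iic b)
      linarith
  -- the level `B` satisfies `B² ≥ 2C`
  set B : ℝ := 1 + 2 * |C| with hB
  have hBpos : 0 < B := by positivity
  have hBC : 2 * C ≤ B ^ 2 := by nlinarith [abs_nonneg C, le_abs_self C]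
  set b' : ℝ := b - (B + |H b|) / c with hb'
  have hb'b : b' ≤ b := by
    have : 0 ≤ (B + |H b|) / c := by positivity
    linarith
  have hlarge : ∀ t ≤ b', B ≤ H t := by
    intro t ht
    have h := anti (show t ∈ Iic b from ht.trans hb'b) self_mem_Iic
      (ht.trans hb'b)
    simp only at h
    have h3 : c * (b - t) ≥ B + |H b| := by
      have : (B + |H b|) / c ≤ b - t := by linarith
      rw [div_le_iff₀ hc] at this
      linarith
    have := neg_abs_le (H b)
    nlinarith
  have mono : MonotoneOn (fun t => (H t)⁻¹ - t / 2) (Iic b') := by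
    have hd : ∀ t ≤ b', HasDerivAt (fun t => (H t)⁻¹ - t / 2) (-H' t / H t ^ 2 - 1 / 2) t :=
      fun t ht => by
        have hne : H t ≠ 0 := (hBpos.trans_le (hlarge t ht)).ne'
        exact ((hH t (ht.trans hb'b)).inv hne).sub ((hasDerivAt_id t).div_const 2)
    refine monotoneOn_of_hasDerivWithinAt_nonneg (convex_Iic b')
      (f' := fun t => -H' t / H t ^ 2 - 1 / 2)
      (fun t ht => (hd t ht).continuousAt.continuousWithinAt) ?_ ?_
    · intro t ht
      exact (hd t (interior_subset ht : t ∈ Iic b')).hasDerivWithinAt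
    · intro t ht
      have ht' : t ≤ b' := (interior_subset ht : t ∈ Iic b')
      have hl := hlarge t ht'
      have hpos : 0 < H t ^ 2 := by have := hBpos.trans_le hl; positivity
      have := h2 t (ht'.trans hb'b)
      have hsq : B ^ 2 ≤ H t ^ 2 := by gcongr
      rw [sub_nonneg, div_le_div_iff₀ (by norm_num) hpos]
      linarith
  have hHb := hBpos.trans_le (hlarge b' le_rfl)
  have hlt : b' - 2 * (H b')⁻¹ - 2 ≤ b' := by
    have : 0 < (H b')⁻¹ := inv_pos.2 hHb
    linarith
  have h := mono (show b' - 2 * (H b')⁻¹ - 2 ∈ Iic b' from hlt) self_mem_Iic hlt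
  have hp : 0 < (H (b' - 2 * (H b')⁻¹ - 2))⁻¹ := inv_pos.2 (hBpos.trans_le (hlarge _ hlt))
  simp only at h
  linarith

/-! ### The equation in logarithmic time -/

/-- The parameters of the equation `w'' = m²w - w^p + μ e^{kt} w^q` solved by
`w(t) = e^{mt} u(e^t)`, with `m = (n-2)/2`, `p = 2*(s)-1` and `k = λ`. -/
structure EF where
  (m p q μ k : ℝ)
  hm : 0 < m
  hp : 1 < p
  hpq : p < q
  hμ : 0 < μ
  hk : 0 < k

namespace EF

variable (P : EF)

/-- The right-hand side of `w'' = G t w`. -/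
def G (t x : ℝ) : ℝ := P.m ^ 2 * x - x ^ P.p + P.μ * exp (P.k * t) * x ^ P.q

/-- The primitive of `G t` vanishing at `0`. -/
def F (t x : ℝ) : ℝ :=
  P.m ^ 2 * x ^ 2 / 2 - x ^ (P.p + 1) / (P.p + 1) + P.μ * exp (P.k * t) * x ^ (P.q + 1) / (P.q + 1)

/-- The negative of the energy (the Pohozaev quantity) of the state `(x, y) = (w, w')`
at time `t`. -/
def J (t x y : ℝ) : ℝ := P.F t x - y ^ 2 / 2

/-- `w` is a positive solution of `w'' = G t w` on `I`, with derivative `z`. -/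
def Sol (I : Set ℝ) (w z : ℝ → ℝ) : Prop :=
  ∀ t ∈ I, 0 < w t ∧ HasDerivAt w (z t) t ∧ HasDerivAt z (P.G t (w t)) t

variable {P}

lemma hq (P : EF) : 1 < P.q := P.hp.trans P.hpq

lemma hasDerivAt_J {w z : ℝ → ℝ} {t : ℝ} (hw0 : 0 < w t) (hw : HasDerivAt w (z t) t)
    (hz : HasDerivAt z (P.G t (w t)) t) :
    HasDerivAt (fun t => P.J t (w t) (z t))
      (P.μ * P.k * exp (P.k * t) * w t ^ (P.q + 1) / (P.q + 1)) t := by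
  have hp := P.hp
  have hq := P.hq
  have e1 : HasDerivAt (fun t => exp (P.k * t)) (exp (P.k * t) * P.k) t := by
    simpa using ((hasDerivAt_id t).const_mul P.k).exp
  have a1 := ((hw.pow 2).const_mul (P.m ^ 2)).div_const 2
  have a2 := (hw.rpow_const (p := P.p + 1) (Or.inl hw0.ne')).div_const (P.p + 1)
  have a3 := ((e1.const_mul P.μ).mul
    (hw.rpow_const (p := P.q + 1) (Or.inl hw0.ne'))).div_const (P.q + 1)
  have a4 := (hz.pow 2).div_const 2
  refine (((a1.sub a2).add a3).sub a4).congr_deriv ?_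
  have n1 : P.p + 1 ≠ 0 := by linarith
  have n2 : P.q + 1 ≠ 0 := by linarith
  simp only [G, add_sub_cancel_right, Nat.cast_ofNat]
  field_simp
  ring

lemma J_strictMonoOn {w z : ℝ → ℝ} {D : Set ℝ} (hD : Convex ℝ D)
    (hw : ContinuousOn w D) (hz : ContinuousOn z D)
    (hpos : ∀ t ∈ D, 0 < w t) (hs : P.Sol (interior D) w z) :
    StrictMonoOn (fun t => P.J t (w t) (z t)) D := by
  have hq := P.hq
  have hp := P.hp
  refine strictMonoOn_of_hasDerivWithinAt_pos hD
    (f' := fun t => P.μ * P.k * exp (P.k * t) * w t ^ (P.q + 1) / (P.q + 1)) ?_ ?_ ?_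
  · unfold J F
    have h1 : ContinuousOn (fun t => w t ^ (P.p + 1)) D :=
      hw.rpow_const fun t ht => Or.inl (hpos t ht).ne'
    have h2 : ContinuousOn (fun t => w t ^ (P.q + 1)) D :=
      hw.rpow_const fun t ht => Or.inl (hpos t ht).ne'
    fun_prop
  · intro t ht
    obtain ⟨h0, h1, h2⟩ := hs t ht
    exact (hasDerivAt_J h0 h1 h2).hasDerivWithinAt
  · intro t ht
    have h0 := (hs t ht).1
    have := P.hμ
    have := P.hk
    have : 0 < P.q + 1 := by linarith
    positivity

lemma Sol.mono {I I' : Set ℝ} {w z : ℝ → ℝ} (h : P.Sol I w z) (hI : I' ⊆ I) : P.Sol I' w z :=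
  fun t ht => h t (hI ht)

lemma Sol.J_strictMonoOn {w z : ℝ → ℝ} {D : Set ℝ} (hD : Convex ℝ D) (hs : P.Sol D w z) :
    StrictMonoOn (fun t => P.J t (w t) (z t)) D :=
  EF.J_strictMonoOn hD (fun t ht => (hs t ht).2.1.continuousAt.continuousWithinAt)
    (fun t ht => (hs t ht).2.2.continuousAt.continuousWithinAt) (fun t ht => (hs t ht).1)
    (hs.mono interior_subset)

/-- The exponentially decaying coefficient is eventually below any positive level at `-∞`. -/
lemma eventually_coeff_le (P : EF) (A : ℝ) {δ : ℝ} (hδ : 0 < δ) :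
    ∀ᶠ t in atBot, P.μ * exp (P.k * t) * A ≤ δ := by
  have h1 : Tendsto (fun t => P.k * t) atBot atBot := tendsto_id.const_mul_atBot P.hk
  have h2 : Tendsto (fun t => P.μ * exp (P.k * t) * A) atBot (𝓝 (P.μ * 0 * A)) :=
    ((tendsto_exp_atBot.comp h1).const_mul P.μ).mul_const A
  rw [mul_zero, zero_mul] at h2
  exact (h2.eventually_lt_const hδ).mono fun t ht => ht.le

/-- A positive solution bounded near `-∞` has negative energy at all times. Otherwise the energy is
bounded below by some `e > 0` near `-∞`, and the logarithmic derivative `w'/w` satisfies the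
inequalities excluded by `riccati_false`. -/
lemma Sol.J_pos {w z : ℝ → ℝ} {T M : ℝ} (hs : P.Sol (Iio T) w z)
    (hM : ∀ᶠ t in atBot, w t ≤ M) {t₀ : ℝ} (ht₀ : t₀ < T) : 0 < P.J t₀ (w t₀) (z t₀) := by
  by_contra hcon
  rw [not_lt] at hcon
  have hp := P.hp
  have hq := P.hq
  have hpq := P.hpq
  have hμ := P.hμ
  have smono := hs.J_strictMonoOn (convex_Iio T)
  have he : P.J (t₀ - 1) (w (t₀ - 1)) (z (t₀ - 1)) < 0 :=
    (smono (show t₀ - 1 ∈ Iio T by simp; linarith) ht₀ (by linarith)).trans_le hcon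
  set e := -P.J (t₀ - 1) (w (t₀ - 1)) (z (t₀ - 1)) with hedef
  have hsmall := P.eventually_coeff_le ((P.q - 1) / (P.q + 1) * M ^ (P.q - P.p))
    (δ := (P.p - 1) / (P.p + 1)) (div_pos (by linarith) (by linarith))
  obtain ⟨b, hb⟩ := eventually_atBot.1 ((hM.and hsmall).and (eventually_le_atBot (t₀ - 1)))
  have hM0 : 0 < M := by
    obtain ⟨⟨h1, -⟩, h2⟩ := hb b le_rfl
    exact ((hs b (show b < T by linarith)).1).trans_le h1
  refine riccati_false (H := fun t => z t / w t)
    (H' := fun t => (P.G t (w t) * w t - z t * z t) / w t ^ 2) (b := b) (c := 2 * e / M ^ 2)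
    (C := P.m ^ 2 + P.μ * exp (P.k * b) * M ^ (P.q - 1)) (div_pos (by linarith) (by positivity))
    ?_ ?_ ?_
  · intro t ht
    obtain ⟨h0, h1, h2⟩ := hs t (show t < T by linarith [(hb t ht).2])
    exact h2.div h1 h0.ne'
  · intro t ht
    obtain ⟨⟨hwM, hsm⟩, htt⟩ := hb t ht
    obtain ⟨h0, -, -⟩ := hs t (show t < T by linarith)
    have hJ : P.J t (w t) (z t) ≤ -e := by
      rw [hedef, neg_neg]
      exact smono.monotoneOn (show t < T by linarith) (show t₀ - 1 < T by linarith) htt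
    have hx1 : w t ^ (P.p + 1) = w t ^ P.p * w t := by rw [rpow_add_one h0.ne']
    have hx2 : w t ^ (P.q + 1) = w t ^ P.q * w t := by rw [rpow_add_one h0.ne']
    have hx3 : w t ^ P.q = w t ^ (P.q - P.p) * w t ^ P.p := by
      rw [← rpow_add h0]; congr 1; ring
    have hx4 : w t ^ (P.q - P.p) ≤ M ^ (P.q - P.p) :=
      rpow_le_rpow h0.le hwM (by linarith)
    have hx5 : 0 < w t ^ P.p := rpow_pos_of_pos h0 _
    have key : P.G t (w t) * w t - 2 * P.F t (w t) ≤ 0 := by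
      have e1 : P.G t (w t) * w t - 2 * P.F t (w t) = w t ^ P.p * w t *
          (P.μ * exp (P.k * t) * ((P.q - 1) / (P.q + 1) * w t ^ (P.q - P.p))
            - (P.p - 1) / (P.p + 1)) := by
        have n1 : P.p + 1 ≠ 0 := by linarith
        have n2 : P.q + 1 ≠ 0 := by linarith
        simp only [G, F, hx1, hx2, hx3]
        field_simp
        ring
      rw [e1]
      refine mul_nonpos_of_nonneg_of_nonpos (by positivity) ?_
      have : P.μ * exp (P.k * t) * ((P.q - 1) / (P.q + 1) * w t ^ (P.q - P.p)) ≤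
          P.μ * exp (P.k * t) * ((P.q - 1) / (P.q + 1) * M ^ (P.q - P.p)) := by
        have : 0 ≤ (P.q - 1) / (P.q + 1) := div_nonneg (by linarith) (by linarith)
        gcongr
      linarith
    have hnum : P.G t (w t) * w t - z t * z t ≤ -(2 * e) := by
      simp only [J] at hJ
      nlinarith
    rw [← neg_div, div_le_div_iff₀ (by positivity) (by positivity)]
    have hsq : w t ^ 2 ≤ M ^ 2 := by gcongr
    nlinarith [sq_nonneg (w t), sq_nonneg M]
  · intro t ht
    obtain ⟨⟨hwM, -⟩, htt⟩ := hb t ht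
    obtain ⟨h0, -, -⟩ := hs t (show t < T by linarith)
    have hx3 : w t ^ P.q = w t ^ (P.q - 1) * w t := by
      rw [← rpow_add_one h0.ne']; congr 1; ring
    have hx5 : 0 < w t ^ P.p := rpow_pos_of_pos h0 _
    have hle : P.μ * exp (P.k * t) * w t ^ (P.q - 1) ≤ P.μ * exp (P.k * b) * M ^ (P.q - 1) := by
      have hk := P.hk
      have : w t ^ (P.q - 1) ≤ M ^ (P.q - 1) := rpow_le_rpow h0.le hwM (by linarith)
      have : 0 ≤ w t ^ (P.q - 1) := by positivity
      gcongr
    have hGle : P.G t (w t) ≤ (P.m ^ 2 + P.μ * exp (P.k * b) * M ^ (P.q - 1)) * w t := by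
      have := mul_le_mul_of_nonneg_right hle h0.le
      simp only [G, hx3]
      nlinarith
    rw [div_pow, sub_div, mul_div_assoc]
    have : P.G t (w t) * (w t / w t ^ 2) ≤ P.m ^ 2 + P.μ * exp (P.k * b) * M ^ (P.q - 1) := by
      have e1 : w t / w t ^ 2 = 1 / w t := by field_simp
      rw [e1, mul_one_div, div_le_iff₀ h0]
      exact hGle
    have e2 : z t * z t / w t ^ 2 = z t ^ 2 / w t ^ 2 := by ring
    linarith

/-! ### The barrier -/

/-- `x₁` is the point where `x ↦ F t x / x²` is minimal at the critical time `t = τ`, and that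
minimum is `0`. -/
structure Barrier (P : EF) (x₁ τ : ℝ) : Prop where
  pos : 0 < x₁
  pow_eq : x₁ ^ (P.p - 1) = P.m ^ 2 * (P.p + 1) * (P.q - 1) / (2 * (P.q - P.p))
  coeff_eq : P.μ * exp (P.k * τ) * x₁ ^ (P.q - P.p) =
    (P.q + 1) * (P.p - 1) / ((P.p + 1) * (P.q - 1))

lemma F_mono_time {t t' x : ℝ} (hx : 0 ≤ x) (h : t ≤ t') : P.F t x ≤ P.F t' x := by
  have hk := P.hk
  have hμ := P.hμ
  have hq := P.hq
  have : 0 < P.q + 1 := by linarith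
  simp only [F]
  gcongr

lemma F_eq {x t : ℝ} (hx : 0 < x) : P.F t x = x ^ 2 * (P.m ^ 2 / 2 -
    x ^ (P.p - 1) * (1 / (P.p + 1) - P.μ * exp (P.k * t) * x ^ (P.q - P.p) / (P.q + 1))) := by
  have h1 : x ^ (P.p + 1) = x ^ (P.p - 1) * x ^ 2 := by
    rw [← rpow_two, ← rpow_add hx]; congr 1; ring
  have h2 : x ^ (P.q + 1) = x ^ (P.q - P.p) * x ^ (P.p - 1) * x ^ 2 := by
    rw [← rpow_two, ← rpow_add hx, ← rpow_add hx]; congr 1; ring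
  simp only [F, h1, h2]
  ring

/-- The algebraic identity behind the double root. -/
lemma Barrier.identity {x₁ τ : ℝ} (hB : P.Barrier x₁ τ) :
    P.m ^ 2 / 2 = x₁ ^ (P.p - 1) * ((P.q - P.p) / ((P.p + 1) * (P.q - 1))) := by
  have hp := P.hp
  have hq := P.hq
  have hpq := P.hpq
  have n1 : P.p + 1 ≠ 0 := by linarith
  have n2 : P.q - 1 ≠ 0 := by linarith
  have n3 : P.q - P.p ≠ 0 := by linarith
  rw [hB.pow_eq]
  field_simp

lemma Barrier.F_nonpos {x₁ τ t : ℝ} (hB : P.Barrier x₁ τ) (ht : t ≤ τ) : P.F t x₁ ≤ 0 := by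
  refine (F_mono_time hB.pos.le ht).trans ?_
  have hp := P.hp
  have hq := P.hq
  have n1 : P.p + 1 ≠ 0 := by linarith
  have n2 : P.q - 1 ≠ 0 := by linarith
  have n3 : P.q + 1 ≠ 0 := by linarith
  rw [F_eq hB.pos, hB.coeff_eq, hB.identity]
  apply le_of_eq
  field_simp
  ring

/-- Up to the critical time a solution bounded near `-∞` stays below the barrier: it starts below,
since `F t` is nonpositive on all of `[x₁, M]` for `t` near `-∞`, and cannot cross `x₁`, where
`F t x₁ ≤ 0` would give nonnegative energy. -/
lemma Sol.lt_barrier {w z : ℝ → ℝ} {T M x₁ τ : ℝ} (hB : P.Barrier x₁ τ) (hT : T ≤ τ)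
    (hs : P.Sol (Iio T) w z) (hM : ∀ᶠ t in atBot, w t ≤ M) {t : ℝ} (ht : t < T) :
    w t < x₁ := by
  have hp := P.hp
  have hq := P.hq
  have hpq := P.hpq
  have hμ := P.hμ
  have hFpos : ∀ t < T, 0 < P.F t (w t) := fun t ht => by
    have := hs.J_pos hM ht
    simp only [J] at this
    nlinarith [sq_nonneg (z t)]
  -- a time at which the solution is below the barrier
  obtain ⟨b, hbt, hb⟩ : ∃ b ≤ t, w b < x₁ := by
    have hsmall := P.eventually_coeff_le (M ^ (P.q - P.p))
      (δ := (P.q + 1) * (P.p - 1) / ((P.p + 1) * (P.q - 1)))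
      (div_pos (mul_pos (by linarith) (by linarith)) (mul_pos (by linarith) (by linarith)))
    obtain ⟨b, ⟨hbM, hbs⟩, hbt⟩ := ((hM.and hsmall).and (eventually_le_atBot t)).exists
    refine ⟨b, hbt, ?_⟩
    by_contra hcon
    rw [not_lt] at hcon
    have h0 := (hs b (show b < T by linarith)).1
    have hF := hFpos b (by linarith)
    rw [F_eq h0, hB.identity] at hF
    have hF' := pos_of_mul_pos_right hF (sq_nonneg (w b))
    have h1 : P.μ * exp (P.k * b) * w b ^ (P.q - P.p) ≤
        (P.q + 1) * (P.p - 1) / ((P.p + 1) * (P.q - 1)) := by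
      refine le_trans ?_ hbs
      have : w b ^ (P.q - P.p) ≤ M ^ (P.q - P.p) := rpow_le_rpow h0.le hbM (by linarith)
      gcongr
    have h2 : (P.q - P.p) / ((P.p + 1) * (P.q - 1)) ≤
        1 / (P.p + 1) - P.μ * exp (P.k * b) * w b ^ (P.q - P.p) / (P.q + 1) := by
      have hq1 : 0 < P.q + 1 := by linarith
      have h3 := div_le_div_of_nonneg_right h1 hq1.le
      have n1 : P.p + 1 ≠ 0 := by linarith
      have n2 : P.q - 1 ≠ 0 := by linarith
      have e1 : (P.q - P.p) / ((P.p + 1) * (P.q - 1)) = 1 / (P.p + 1) -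
          (P.q + 1) * (P.p - 1) / ((P.p + 1) * (P.q - 1)) / (P.q + 1) := by
        field_simp
        ring
      rw [e1]
      linarith
    have h3 : x₁ ^ (P.p - 1) ≤ w b ^ (P.p - 1) := rpow_le_rpow hB.pos.le hcon (by linarith)
    have h4 : 0 ≤ (P.q - P.p) / ((P.p + 1) * (P.q - 1)) :=
      div_nonneg (by linarith) (mul_nonneg (by linarith) (by linarith))
    have h5 : 0 ≤ w b ^ (P.p - 1) := by positivity
    have := mul_le_mul h3 h2 h4 h5
    linarith
  by_contra hcon
  rw [not_lt] at hcon
  have hcont : ContinuousOn w (Icc b t) := fun r hr =>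
    (hs r (show r < T by linarith [hr.2])).2.1.continuousAt.continuousWithinAt
  obtain ⟨r, hr, hrx⟩ := intermediate_value_Icc hbt hcont ⟨hb.le, hcon⟩
  have h1 := hFpos r (by linarith [hr.2])
  rw [hrx] at h1
  exact absurd (hB.F_nonpos (t := r) (by linarith [hr.2])) (not_le.2 h1)

end EF

/-! ### Continuation of solutions -/

/-- Existence on a whole interval for a bounded, uniformly Lipschitz vector field. -/
lemma exists_sol_of_bounded {E : Type*} [NormedAddCommGroup E] [NormedSpace ℝ E] [CompleteSpace E]
    {V : ℝ → E → E} {K C : NNReal} {a b : ℝ} (hab : a ≤ b)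
    (hL : ∀ t ∈ Icc a b, LipschitzWith K (V t))
    (hc : ∀ x, ContinuousOn (fun t => V t x) (Icc a b))
    (hb : ∀ t ∈ Icc a b, ∀ x, ‖V t x‖ ≤ C) (x₀ : E) :
    ∃ α : ℝ → E, α a = x₀ ∧ ∀ t ∈ Icc a b, HasDerivWithinAt α (V t (α t)) (Icc a b) t := by
  have hPL : IsPicardLindelof V (tmin := a) (tmax := b) ⟨a, left_mem_Icc.2 hab⟩ x₀
      (C * (b - a).toNNReal) 0 C K :=
    { lipschitzOnWith := fun t ht => (hL t ht).lipschitzOnWith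
      continuousOn := fun x _ => hc x
      norm_le := fun t ht x _ => hb t ht x
      mul_max_le := by
        have : 0 ≤ b - a := sub_nonneg.2 hab
        simp [this] }
  exact hPL.exists_eq_forall_mem_Icc_hasDerivWithinAt₀

/-- Projection of the line onto `[a, b]`. -/
def clamp (a b x : ℝ) : ℝ := max a (min x b)

lemma lipschitz_clamp (a b : ℝ) : LipschitzWith 1 (clamp a b) :=
  (LipschitzWith.id.min_const b).const_max a

lemma clamp_mem {a b : ℝ} (h : a ≤ b) (x : ℝ) : clamp a b x ∈ Icc a b :=
  ⟨le_max_left _ _, max_le h (min_le_right _ _)⟩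

lemma clamp_eq {a b x : ℝ} (hx : x ∈ Ioo a b) : clamp a b x = x := by
  rw [clamp, min_eq_left hx.2.le, max_eq_right hx.1.le]

namespace EF

variable {P : EF}

/-- Up to the critical time, states below the barrier with energy at most `-e < 0` are confined to
a bounded open rectangle `(ε, x₁) × (-B, B)` away from `w = 0`. -/
lemma Barrier.confine {x₁ τ e : ℝ} (hB : P.Barrier x₁ τ) (he : 0 < e) :
    ∃ ε B, 0 < ε ∧ ∀ t ≤ τ, ∀ x y, 0 < x → x ≤ x₁ → e ≤ P.J t x y →
      (x, y) ∈ Ioo ε x₁ ×ˢ Ioo (-B) B := by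
  have hp := P.hp
  have hq := P.hq
  have hcont : Continuous (P.F τ) := by
    unfold F
    have h1 : Continuous fun x : ℝ => x ^ (P.p + 1) :=
      continuous_id.rpow_const fun x => Or.inr (by linarith)
    have h2 : Continuous fun x : ℝ => x ^ (P.q + 1) :=
      continuous_id.rpow_const fun x => Or.inr (by linarith)
    fun_prop
  have h0 : P.F τ 0 = 0 := by
    have n1 : P.p + 1 ≠ 0 := by linarith
    have n2 : P.q + 1 ≠ 0 := by linarith
    simp [F, zero_rpow n1, zero_rpow n2]
  have hev : ∀ᶠ x in 𝓝 (0 : ℝ), P.F τ x < e :=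
    hcont.continuousAt.eventually_lt_const (by rw [h0]; exact he)
  obtain ⟨ε, hε, hball⟩ := Metric.eventually_nhds_iff.1 hev
  obtain ⟨C, hC⟩ := (isCompact_Icc (a := (0 : ℝ)) (b := x₁)).exists_bound_of_continuousOn
    hcont.continuousOn
  refine ⟨ε / 2, 1 + 2 * |C|, by linarith, ?_⟩
  intro t ht x y hx hxx hJ
  simp only [J] at hJ
  have hF : P.F t x ≤ P.F τ x := F_mono_time hx.le ht
  refine ⟨⟨?_, ?_⟩, abs_lt.1 ?_⟩
  · by_contra hcon
    simp only [not_lt] at hcon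
    have := @hball x (by rw [dist_zero_right, norm_eq_abs, abs_of_pos hx]; linarith)
    nlinarith [sq_nonneg y]
  · refine lt_of_le_of_ne hxx fun h => ?_
    simp only at h
    have := hB.F_nonpos ht
    rw [← h] at this
    nlinarith [sq_nonneg y]
  · have h1 := (le_abs_self _).trans (hC x ⟨hx.le, hxx⟩)
    have h2 := le_abs_self C
    have h3 := abs_nonneg C
    refine abs_lt_of_sq_lt_sq (b := 1 + 2 * |C|) ?_ (by positivity)
    nlinarith

/-- The continuation principle: a solution bounded near `-∞` continues beyond the critical
time. The vector field is truncated outside the rectangle of `Barrier.confine`, so that a solution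
of the truncated problem exists globally; by monotonicity of the energy that solution
never leaves the rectangle before the critical time. -/
lemma Sol.exists_continuation {w z : ℝ → ℝ} {T M x₁ τ : ℝ} (hB : P.Barrier x₁ τ) (hT : T ≤ τ)
    (hs : P.Sol (Iio T) w z) (hM : ∀ᶠ t in atBot, w t ≤ M) {T₀ : ℝ} (hT₀ : T₀ < T) :
    ∃ (W Z : ℝ → ℝ) (b : ℝ), τ < b ∧ P.Sol (Ioo T₀ b) W Z ∧ ∀ t ∈ Ioo T₀ T, W t = w t := by
  have he := hs.J_pos hM hT₀
  have smono := hs.J_strictMonoOn (convex_Iio T)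
  obtain ⟨ε, B, hε, hconf⟩ := hB.confine he
  have hwU : ∀ t ∈ Ico T₀ T, (w t, z t) ∈ Ioo ε x₁ ×ˢ Ioo (-B) B := fun t ht =>
    hconf t (ht.2.le.trans hT) _ _ (hs t ht.2).1 (hs.lt_barrier hB hT hM ht.2).le
      (smono.monotoneOn (show T₀ ∈ Iio T from hT₀) (show t ∈ Iio T from ht.2) ht.1)
  have hU₀ := hwU T₀ ⟨le_rfl, hT₀⟩
  have hεx : ε ≤ x₁ := (hU₀.1.1.trans hU₀.1.2).le
  have hBB : -B ≤ B := (hU₀.2.1.trans hU₀.2.2).le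
  have hTτ : T₀ < τ := hT₀.trans_le hT
  -- Lipschitz and size bounds for `G` on the truncation region
  set Q : Set (ℝ × ℝ) := Icc T₀ (τ + 1) ×ˢ Icc ε x₁ with hQ
  have hQc : IsCompact Q := isCompact_Icc.prod isCompact_Icc
  have hGd : ContDiffOn ℝ 1 (fun v : ℝ × ℝ => P.G v.1 v.2) Q := by
    intro v hv
    have hv0 : v.2 ≠ 0 := (hε.trans_le hv.2.1).ne'
    apply ContDiffAt.contDiffWithinAt
    unfold G
    have h1 : ContDiffAt ℝ 1 (fun v : ℝ × ℝ => v.2 ^ P.p) v :=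
      contDiffAt_snd.rpow_const_of_ne hv0
    have h2 : ContDiffAt ℝ 1 (fun v : ℝ × ℝ => v.2 ^ P.q) v :=
      contDiffAt_snd.rpow_const_of_ne hv0
    have h3 : ContDiffAt ℝ 1 (fun v : ℝ × ℝ => exp (P.k * v.1)) v := by fun_prop
    fun_prop
  obtain ⟨K, hK⟩ := hGd.exists_lipschitzOnWith one_ne_zero
    ((convex_Icc _ _).prod (convex_Icc _ _)) hQc
  obtain ⟨C, hC⟩ := hQc.exists_bound_of_continuousOn hGd.continuousOn
  set V : ℝ → ℝ × ℝ → ℝ × ℝ := fun t v => (clamp (-B) B v.2, P.G t (clamp ε x₁ v.1)) with hV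
  have hVeq : ∀ t, ∀ v ∈ Ioo ε x₁ ×ˢ Ioo (-B) B, V t v = (v.2, P.G t v.1) := fun t v hv => by
    simp only [hV, clamp_eq hv.1, clamp_eq hv.2]
  have hVL : ∀ t ∈ Icc T₀ (τ + 1), LipschitzWith (max 1 K) (V t) := by
    intro t ht
    have h1 : LipschitzWith 1 fun v : ℝ × ℝ => clamp (-B) B v.2 := by
      simpa [Function.comp_def] using (lipschitz_clamp (-B) B).comp LipschitzWith.prod_snd
    have h2 : LipschitzWith K fun v : ℝ × ℝ => P.G t (clamp ε x₁ v.1) := by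
      have h3 : LipschitzWith 1 fun v : ℝ × ℝ => clamp ε x₁ v.1 := by
        simpa [Function.comp_def] using (lipschitz_clamp ε x₁).comp LipschitzWith.prod_fst
      refine LipschitzWith.of_dist_le_mul fun v v' => ?_
      have h4 := hK.dist_le_mul (t, clamp ε x₁ v.1) ⟨ht, clamp_mem hεx _⟩
        (t, clamp ε x₁ v'.1) ⟨ht, clamp_mem hεx _⟩
      refine h4.trans ?_
      gcongr
      rw [Prod.dist_eq]
      simpa using h3.dist_le_mul v v'
    exact h1.prodMk h2
  have hVc : ∀ v, ContinuousOn (fun t => V t v) (Icc T₀ (τ + 1)) := by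
    intro v
    simp only [hV, G]
    fun_prop
  have hVb : ∀ t ∈ Icc T₀ (τ + 1), ∀ v, ‖V t v‖ ≤ (max B C).toNNReal := by
    intro t ht v
    refine le_trans ?_ (le_coe_toNNReal _)
    rw [Prod.norm_def]
    refine max_le_max ?_ (hC (t, clamp ε x₁ v.1) ⟨ht, clamp_mem hεx _⟩)
    exact abs_le.2 (clamp_mem hBB v.2)
  obtain ⟨α, hα0, hα⟩ := exists_sol_of_bounded (by linarith) hVL hVc hVb (w T₀, z T₀)
  have hαc : ContinuousOn α (Icc T₀ (τ + 1)) := fun t ht => (hα t ht).continuousWithinAt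
  have hαs : ∀ t ∈ Ioo T₀ (τ + 1), α t ∈ Ioo ε x₁ ×ˢ Ioo (-B) B →
      0 < (α t).1 ∧ HasDerivAt (fun t => (α t).1) (α t).2 t ∧
        HasDerivAt (fun t => (α t).2) (P.G t (α t).1) t := by
    intro t ht hU
    have h := (hα t (Ioo_subset_Icc_self ht)).hasDerivAt (Icc_mem_nhds ht.1 ht.2)
    rw [hVeq t _ hU] at h
    exact ⟨hε.trans hU.1.1, (hasFDerivAt_fst (𝕜 := ℝ) (p := α t)).comp_hasDerivAt t h,
      (hasFDerivAt_snd (𝕜 := ℝ) (p := α t)).comp_hasDerivAt t h⟩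
  have hUo : IsOpen (Ioo ε x₁ ×ˢ Ioo (-B) B) := isOpen_Ioo.prod isOpen_Ioo
  -- no exit from the truncation region before the critical time
  have hstay : ∀ t ∈ Icc T₀ τ, α t ∈ Ioo ε x₁ ×ˢ Ioo (-B) B := by
    by_contra! hcon
    obtain ⟨t', ht', hexit⟩ := hcon
    have hαc' : ContinuousOn α (Icc T₀ τ) := hαc.mono (Icc_subset_Icc_right (by linarith))
    have hcl : IsCompact (Icc T₀ τ ∩ α ⁻¹' (Ioo ε x₁ ×ˢ Ioo (-B) B)ᶜ) :=
      isCompact_Icc.of_isClosed_subset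
        (hαc'.preimage_isClosed_of_isClosed isClosed_Icc hUo.isClosed_compl) inter_subset_left
    obtain ⟨t₁, ⟨ht₁, hout⟩, hleast⟩ := hcl.exists_isLeast ⟨t', ht', hexit⟩
    have hin : ∀ t ∈ Ico T₀ t₁, α t ∈ Ioo ε x₁ ×ˢ Ioo (-B) B := by
      intro t ht
      by_contra h
      exact absurd (hleast ⟨⟨ht.1, ht.2.le.trans ht₁.2⟩, h⟩) (not_le.2 ht.2)
    have hlt : T₀ < t₁ := by
      refine lt_of_le_of_ne ht₁.1 fun h => hout ?_
      rw [← h, hα0]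
      exact hU₀
    have hαc1 : ContinuousOn α (Icc T₀ t₁) := hαc'.mono (Icc_subset_Icc_right ht₁.2)
    have hcls : α t₁ ∈ Icc ε x₁ ×ˢ Icc (-B) B := by
      have h1 : MapsTo α (Ico T₀ t₁) (Icc ε x₁ ×ˢ Icc (-B) B) := fun t ht =>
        prod_mono Ioo_subset_Icc_self Ioo_subset_Icc_self (hin t ht)
      have h2 := h1.closure_of_continuousOn (by rwa [closure_Ico hlt.ne])
      rw [closure_Ico hlt.ne, (isClosed_Icc.prod isClosed_Icc).closure_eq] at h2
      exact h2 (right_mem_Icc.2 hlt.le)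
    have hpos : ∀ t ∈ Icc T₀ t₁, 0 < (α t).1 := by
      intro t ht
      rcases eq_or_lt_of_le ht.2 with h | h
      · rw [h]; exact hε.trans_le hcls.1.1
      · exact hε.trans (hin t ⟨ht.1, h⟩).1.1
    have hmono := EF.J_strictMonoOn (P := P) (convex_Icc T₀ t₁) (continuous_fst.comp_continuousOn hαc1)
      (continuous_snd.comp_continuousOn hαc1) hpos (by
        rw [interior_Icc]
        intro t ht
        exact hαs t ⟨ht.1, by linarith [ht.2, ht₁.2]⟩ (hin t ⟨ht.1.le, ht.2⟩))
    have hJ := hmono.monotoneOn (left_mem_Icc.2 hlt.le) (right_mem_Icc.2 hlt.le) hlt.le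
    simp only [Function.comp, hα0] at hJ
    exact hout (hconf t₁ ht₁.2 _ _ (hε.trans_le hcls.1.1) hcls.1.2 hJ)
  -- by openness the solution stays in the region slightly beyond the critical time
  obtain ⟨δ, hδ, hδU⟩ : ∃ δ > 0, ∀ t, |t - τ| < δ → α t ∈ Ioo ε x₁ ×ˢ Ioo (-B) B := by
    have h1 : ContinuousAt α τ := hαc.continuousAt (Icc_mem_nhds hTτ (by linarith))
    have h2 := h1.eventually_mem (hUo.mem_nhds (hstay τ (right_mem_Icc.2 hTτ.le)))
    obtain ⟨δ, hδ, h⟩ := Metric.eventually_nhds_iff.1 h2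
    exact ⟨δ, hδ, fun t ht => h ht⟩
  refine ⟨fun t => (α t).1, fun t => (α t).2, min (τ + 1) (τ + δ), by simp [hδ], ?_, ?_⟩
  · intro t ht
    have ht1 : t < τ + 1 := ht.2.trans_le (min_le_left _ _)
    have ht2 : t < τ + δ := ht.2.trans_le (min_le_right _ _)
    refine hαs t ⟨ht.1, ht1⟩ ?_
    rcases le_or_gt t τ with h | h
    · exact hstay t ⟨ht.1.le, h⟩
    · exact hδU t (by rw [abs_of_pos (sub_pos.2 h)]; linarith)
  · intro t ht
    have hg : ∀ r ∈ Icc T₀ t, HasDerivAt (fun r => (w r, z r)) (V r (w r, z r)) r := by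
      intro r hr
      have hrT : r < T := hr.2.trans_lt ht.2
      rw [hVeq r _ (hwU r ⟨hr.1, hrT⟩)]
      exact (hs r hrT).2.1.prodMk (hs r hrT).2.2
    have htle : t ≤ τ + 1 := by linarith [ht.2]
    have heq := ODE_solution_unique_of_mem_Icc_right (v := V) (s := fun _ => univ) (K := max 1 K)
      (f := α) (g := fun r => (w r, z r)) (a := T₀) (b := t)
      (fun r hr => (hVL r ⟨hr.1, hr.2.le.trans htle⟩).lipschitzOnWith)
      (hαc.mono (Icc_subset_Icc_right htle))
      (fun r hr => (hα r ⟨hr.1, hr.2.le.trans htle⟩).mono_of_mem_nhdsWithin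
        (mem_of_superset (Icc_mem_nhdsGE hr.2) (Icc_subset_Icc hr.1 htle)))
      (fun _ _ => mem_univ _)
      (fun r hr => (hg r hr).continuousAt.continuousWithinAt)
      (fun r hr => (hg r (Ico_subset_Icc_self hr)).hasDerivWithinAt)
      (fun _ _ => mem_univ _) hα0
    have := heq (right_mem_Icc.2 ht.1.le)
    exact congrArg Prod.fst this

end EF

/-! ### Change of variables -/

lemma contDiffOn_two_of_hasDerivAt {f f₁ f₂ : ℝ → ℝ} {O : Set ℝ} (hO : IsOpen O)
    (h₁ : ∀ t ∈ O, HasDerivAt f (f₁ t) t) (h₂ : ∀ t ∈ O, HasDerivAt f₁ (f₂ t) t)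
    (hc : ContinuousOn f₂ O) : ContDiffOn ℝ 2 f O := by
  have key : ∀ {g g' : ℝ → ℝ} {k : ℕ}, (∀ t ∈ O, HasDerivAt g (g' t) t) →
      ContDiffOn ℝ k g' O → ContDiffOn ℝ (k + 1) g O := by
    intro g g' k hg hg'
    rw [contDiffOn_succ_iff_deriv_of_isOpen hO]
    exact ⟨fun t ht => (hg t ht).differentiableAt.differentiableWithinAt, by simp,
      hg'.congr fun t ht => (hg t ht).deriv⟩
  have h0 : ContDiffOn ℝ ((0 : ℕ) : WithTop ℕ∞) f₂ O := contDiffOn_zero.2 hc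
  have h1 : ContDiffOn ℝ ((1 : ℕ) : WithTop ℕ∞) f₁ O := by simpa using key h₂ h0
  have h2 := key h₁ h1
  norm_num at h2
  exact h2

lemma deriv_deriv_of_hasDerivAt {f f₁ f₂ : ℝ → ℝ} {O : Set ℝ} (hO : IsOpen O)
    (h₁ : ∀ t ∈ O, HasDerivAt f (f₁ t) t) (h₂ : ∀ t ∈ O, HasDerivAt f₁ (f₂ t) t) {t : ℝ}
    (ht : t ∈ O) : deriv (deriv f) t = f₂ t := by
  have h : deriv f =ᶠ[𝓝 t] f₁ := by
    filter_upwards [hO.mem_nhds ht] with r hr using (h₁ r hr).deriv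
  rw [h.deriv_eq, (h₂ t ht).deriv]

lemma radialEq_congr {n : ℕ} {s μ q : ℝ} {u v : ℝ → ℝ} {r : ℝ} (h : u =ᶠ[𝓝 r] v)
    (hu : radialEq n s μ q u r) : radialEq n s μ q v r := by
  unfold radialEq at *
  rw [← h.deriv.deriv_eq, ← h.deriv_eq, ← h.eq_of_nhds]
  exact hu

namespace EF

variable {P : EF}

/-- The Emden–Fowler change of variables `w(t) = e^{mt} u(e^t)`. -/
lemma Sol.of_radial {n : ℕ} {s R : ℝ} {u : ℝ → ℝ} (hR : 0 < R)
    (hm : P.m = ((n : ℝ) - 2) / 2) (hp : P.p = twoStarS n s - 1)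
    (hmp : P.m * P.p = P.m + 2 - s) (hk : P.k + P.m * P.q = P.m + 2)
    (hu : IsRadialSol n s P.μ P.q (Ioo 0 R) u) :
    P.Sol (Iio (log R)) (fun t => exp (P.m * t) * u (exp t))
      (fun t => exp (P.m * t) * (P.m * u (exp t) + exp t * deriv u (exp t))) := by
  intro t ht
  obtain ⟨hC, hpos, heq⟩ := hu
  have hr : exp t ∈ Ioo 0 R := ⟨exp_pos t, (lt_log_iff_exp_lt hR).1 ht⟩
  have hu0 := hpos _ hr
  have hd1 : HasDerivAt u (deriv u (exp t)) (exp t) :=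
    ((hC.differentiableOn (by norm_num)).differentiableAt (isOpen_Ioo.mem_nhds hr)).hasDerivAt
  have hd2 : HasDerivAt (deriv u) (deriv (deriv u) (exp t)) (exp t) :=
    (((hC.deriv_of_isOpen (m := 1) isOpen_Ioo (by norm_num)).differentiableOn
      (by norm_num)).differentiableAt (isOpen_Ioo.mem_nhds hr)).hasDerivAt
  have he : HasDerivAt (fun t => exp (P.m * t)) (exp (P.m * t) * P.m) t := by
    simpa using ((hasDerivAt_id t).const_mul P.m).exp
  have hx := hasDerivAt_exp t
  have c1 := hd1.comp t hx
  have c2 := hd2.comp t hx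
  refine ⟨mul_pos (exp_pos _) hu0, (he.mul c1).congr_deriv ?_,
    (he.mul ((c1.const_mul P.m).add (hx.mul c2))).congr_deriv ?_⟩
  · simp only [Function.comp]
    ring
  · have h := heq _ hr
    unfold radialEq at h
    rw [← hp, ← exp_mul] at h
    have e1 : (exp (P.m * t) * u (exp t)) ^ P.p =
        exp (P.m * t) * exp t ^ 2 * exp (t * -s) * u (exp t) ^ P.p := by
      rw [mul_rpow (exp_pos _).le hu0.le, ← exp_mul, ← exp_nat_mul, ← exp_add, ← exp_add]
      congr 2
      push_cast
      linear_combination t * hmp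
    have e2 : exp (P.k * t) * (exp (P.m * t) * u (exp t)) ^ P.q =
        exp (P.m * t) * exp t ^ 2 * u (exp t) ^ P.q := by
      rw [mul_rpow (exp_pos _).le hu0.le, ← exp_mul, ← exp_nat_mul, ← exp_add, ← mul_assoc,
        ← exp_add]
      congr 2
      push_cast
      linear_combination t * hk
    have hn : (n : ℝ) = 2 * P.m + 2 := by rw [hm]; ring
    rw [hn] at h
    simp only [G, Function.comp, Pi.add_apply, Pi.mul_apply]
    rw [e1, mul_assoc P.μ, e2]
    have hode : exp t ^ 2 * deriv (deriv u) (exp t) = -(2 * P.m + 1) * exp t * deriv u (exp t)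
        - exp t ^ 2 * exp (t * -s) * u (exp t) ^ P.p
        + P.μ * (exp t ^ 2 * u (exp t) ^ P.q) := by
      have hx0 := (exp_pos t).ne'
      rw [mul_neg] at h ⊢
      field_simp at h
      linear_combination exp t * h
    linear_combination exp (P.m * t) * hode

/-- The inverse change of variables `u(r) = r^{-m} w(log r)`. -/
lemma Sol.to_radial {n : ℕ} {s a b : ℝ} {W Z : ℝ → ℝ}
    (hm : P.m = ((n : ℝ) - 2) / 2) (hp : P.p = twoStarS n s - 1)
    (hmp : P.m * P.p = P.m + 2 - s) (hk : P.k + P.m * P.q = P.m + 2)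
    (hs : P.Sol (Ioo a b) W Z) :
    IsRadialSol n s P.μ P.q (Ioo (exp a) (exp b)) (fun r => exp (-P.m * log r) * W (log r)) := by
  set v₁ : ℝ → ℝ := fun r => exp (-P.m * log r) * ((Z (log r) - P.m * W (log r)) * r⁻¹) with hv₁
  set v₂ : ℝ → ℝ := fun r => exp (-P.m * log r) * ((P.G (log r) (W (log r))
    - (2 * P.m + 1) * Z (log r) + (P.m ^ 2 + P.m) * W (log r)) * (r⁻¹) ^ 2) with hv₂
  have hpos : ∀ r ∈ Ioo (exp a) (exp b), 0 < r := fun r hr => (exp_pos a).trans hr.1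
  have hlog : ∀ r ∈ Ioo (exp a) (exp b), log r ∈ Ioo a b := fun r hr =>
    ⟨(lt_log_iff_exp_lt (hpos r hr)).2 hr.1, (log_lt_iff_lt_exp (hpos r hr)).2 hr.2⟩
  have hE : ∀ r ∈ Ioo (exp a) (exp b), HasDerivAt (fun r => exp (-P.m * log r))
      (exp (-P.m * log r) * (-P.m * r⁻¹)) r := fun r hr =>
    ((hasDerivAt_log (hpos r hr).ne').const_mul (-P.m)).exp
  have hd1 : ∀ r ∈ Ioo (exp a) (exp b),
      HasDerivAt (fun r => exp (-P.m * log r) * W (log r)) (v₁ r) r := by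
    intro r hr
    have h := (hE r hr).mul
      ((hs _ (hlog r hr)).2.1.comp r (hasDerivAt_log (hpos r hr).ne'))
    refine h.congr_deriv ?_
    simp only [Function.comp, hv₁]
    ring
  have hd2 : ∀ r ∈ Ioo (exp a) (exp b), HasDerivAt v₁ (v₂ r) r := by
    intro r hr
    have hr0 := (hpos r hr).ne'
    have hW := (hs _ (hlog r hr)).2.1.comp r (hasDerivAt_log hr0)
    have hZ := (hs _ (hlog r hr)).2.2.comp r (hasDerivAt_log hr0)
    have h := (hE r hr).mul ((hZ.sub (hW.const_mul P.m)).mul (hasDerivAt_inv hr0))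
    refine h.congr_deriv ?_
    simp only [Function.comp, hv₂, Pi.sub_apply, Pi.mul_apply]
    field_simp
    ring
  have hWp : ∀ r ∈ Ioo (exp a) (exp b), 0 < W (log r) := fun r hr => (hs _ (hlog r hr)).1
  refine ⟨contDiffOn_two_of_hasDerivAt isOpen_Ioo hd1 hd2 ?_,
    fun r hr => mul_pos (exp_pos _) (hWp r hr), fun r hr => ?_⟩
  · have cl : ContinuousOn log (Ioo (exp a) (exp b)) := fun r hr =>
      (continuousAt_log (hpos r hr).ne').continuousWithinAt
    have ci : ContinuousOn (fun r : ℝ => r⁻¹) (Ioo (exp a) (exp b)) := fun r hr =>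
      (continuousAt_inv₀ (hpos r hr).ne').continuousWithinAt
    have cW : ContinuousOn (fun r => W (log r)) (Ioo (exp a) (exp b)) := fun r hr =>
      ((hs _ (hlog r hr)).2.1.comp r
        (hasDerivAt_log (hpos r hr).ne')).continuousAt.continuousWithinAt
    have cZ : ContinuousOn (fun r => Z (log r)) (Ioo (exp a) (exp b)) := fun r hr =>
      ((hs _ (hlog r hr)).2.2.comp r
        (hasDerivAt_log (hpos r hr).ne')).continuousAt.continuousWithinAt
    have cp : ContinuousOn (fun r => W (log r) ^ P.p) (Ioo (exp a) (exp b)) :=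
      cW.rpow_const fun r hr => Or.inl (hWp r hr).ne'
    have cq : ContinuousOn (fun r => W (log r) ^ P.q) (Ioo (exp a) (exp b)) :=
      cW.rpow_const fun r hr => Or.inl (hWp r hr).ne'
    have cE : ∀ c : ℝ, ContinuousOn (fun r => exp (c * log r)) (Ioo (exp a) (exp b)) :=
      fun c => (continuousOn_const.mul cl).rexp
    simp only [hv₂, G]
    exact (cE _).mul ((((((continuousOn_const.mul cW).sub cp).add
      ((continuousOn_const.mul (cE _)).mul cq)).sub (continuousOn_const.mul cZ)).add
      (continuousOn_const.mul cW)).mul (ci.pow 2))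
  · have hr0 := hpos r hr
    have hW := hWp r hr
    have hn : (n : ℝ) = 2 * P.m + 2 := by rw [hm]; ring
    have hre : r = exp (log r) := (exp_log hr0).symm
    have e1 : r ^ (-s) * (exp (-P.m * log r) * W (log r)) ^ P.p =
        exp (-P.m * log r) * (r⁻¹) ^ 2 * W (log r) ^ P.p := by
      rw [mul_rpow (exp_pos _).le hW.le, ← exp_mul, rpow_def_of_pos hr0,
        show r⁻¹ = exp (-log r) by rw [exp_neg, exp_log hr0], ← exp_nat_mul, ← exp_add,
        ← mul_assoc, ← exp_add]
      congr 2
      push_cast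
      linear_combination -log r * hmp
    have e2 : (exp (-P.m * log r) * W (log r)) ^ P.q =
        exp (-P.m * log r) * (r⁻¹) ^ 2 * (exp (P.k * log r) * W (log r) ^ P.q) := by
      rw [mul_rpow (exp_pos _).le hW.le, ← exp_mul,
        show r⁻¹ = exp (-log r) by rw [exp_neg, exp_log hr0], ← exp_nat_mul, ← exp_add,
        ← mul_assoc, ← exp_add]
      congr 2
      push_cast
      linear_combination -log r * hk
    unfold radialEq
    rw [deriv_deriv_of_hasDerivAt isOpen_Ioo hd1 hd2 hr, (hd1 r hr).deriv, ← hp, e1, e2, hn]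
    simp only [hv₁, hv₂, G]
    ring

end EF

/-! ### Continuation up to the critical radius -/

theorem stmt9 (n : ℕ) (hn : 3 ≤ n) (s μ q : ℝ) (hs0 : 0 < s) (hs2 : s < 2)
    (hμ : 0 < μ) (hq1 : twoStarS n s - 1 < q) (hq2 : q < twoStar n - 1)
    (R : ℝ) (hR : 0 < R) (u : ℝ → ℝ)
    (hu : IsRadialSol n s μ q (Set.Ioo 0 R) u)
    (hbd : UpliBound n u) :
    ∃ v : ℝ → ℝ,
      IsRadialSol n s μ q (Set.Ioc 0 ((ellq n s q / μ) ^ (1 / lam n q))) v ∧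
      Set.EqOn v u (Set.Ioo 0 (min R ((ellq n s q / μ) ^ (1 / lam n q)))) := by
  have hN : (3 : ℝ) ≤ n := by exact_mod_cast hn
  have hN2 : (n : ℝ) - 2 ≠ 0 := by linarith
  have hm : 0 < ((n : ℝ) - 2) / 2 := by linarith
  have hp : 1 < twoStarS n s - 1 := by
    have : 2 < twoStarS n s := by
      rw [twoStarS, lt_div_iff₀ (by linarith)]
      linarith
    linarith
  have hk : 0 < lam n q := by
    unfold lam
    have : 0 < ((n : ℝ) - 2) * (twoStar n - 1 - q) := mul_pos (by linarith) (by linarith)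
    linarith
  let P : EF := ⟨((n : ℝ) - 2) / 2, twoStarS n s - 1, q, μ, lam n q, hm, hp, hq1, hμ, hk⟩
  have hmp : P.m * P.p = P.m + 2 - s := by
    simp only [P, twoStarS]
    field_simp
    ring
  have hkq : P.k + P.m * P.q = P.m + 2 := by
    simp only [P, lam, twoStar]
    field_simp
    ring
  -- the barrier and the critical time
  set X : ℝ := ((n : ℝ) - 2) * ((n : ℝ) - s) * (q - 1) / (4 * (q - twoStarS n s + 1)) with hX
  have hXpos : 0 < X :=
    div_pos (mul_pos (mul_pos (by linarith) (by linarith)) (by linarith)) (by linarith)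
  have hA : 0 < (2 - s) * (q + 1) / (((n : ℝ) - s) * (q - 1)) :=
    div_pos (mul_pos (by linarith) (by linarith)) (mul_pos (by linarith) (by linarith))
  have hell : 0 < ellq n s q := mul_pos hA (rpow_pos_of_pos hXpos _)
  set ρ : ℝ := (ellq n s q / μ) ^ (1 / lam n q) with hρ
  have hρpos : 0 < ρ := rpow_pos_of_pos (div_pos hell hμ) _
  have hB : P.Barrier (X ^ (1 / (twoStarS n s - 2))) (log ρ) := by
    have n1 : twoStarS n s - 2 ≠ 0 := by linarith
    refine ⟨rpow_pos_of_pos hXpos _, ?_, ?_⟩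
    · simp only [P]
      rw [← rpow_mul hXpos.le, show 1 / (twoStarS n s - 2) * (twoStarS n s - 1 - 1) = 1 by
        field_simp; ring, rpow_one, hX]
      have n2 : q - twoStarS n s + 1 ≠ 0 := by linarith
      have e : (((n : ℝ) - 2) / 2) ^ 2 * twoStarS n s = ((n : ℝ) - 2) * (n - s) / 2 := by
        rw [twoStarS]
        field_simp
      rw [sub_add_cancel, e, show q - (twoStarS n s - 1) = q - twoStarS n s + 1 by ring]
      field_simp
      ring
    · simp only [P]
      have e1 : exp (lam n q * log ρ) = ellq n s q / μ := by
        rw [hρ, log_rpow (div_pos hell hμ), ← mul_assoc, mul_one_div_cancel hk.ne', one_mul,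
          exp_log (div_pos hell hμ)]
      rw [e1, mul_div_cancel₀ _ hμ.ne', ellq, ← hX, mul_assoc, ← rpow_mul hXpos.le,
        ← rpow_add hXpos]
      have e2 : -(q - twoStarS n s + 1) / (twoStarS n s - 2) +
          1 / (twoStarS n s - 2) * (q - (twoStarS n s - 1)) = 0 := by
        field_simp
        ring
      rw [e2, rpow_zero, mul_one, twoStarS]
      have n3 : (n : ℝ) - s ≠ 0 := by linarith
      have n4 : q - 1 ≠ 0 := by linarith
      field_simp
      ring
  rcases lt_or_ge ρ R with hlt | hge
  -- `u` itself is defined past the critical radius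
  · have hsub : Ioc 0 ρ ⊆ Ioo 0 R := fun r hr => ⟨hr.1, hr.2.trans_lt hlt⟩
    exact ⟨u, ⟨hu.1.mono hsub, fun r hr => hu.2.1 r (hsub hr), fun r hr => hu.2.2 r (hsub hr)⟩,
      fun r _ => rfl⟩
  have hsol := EF.Sol.of_radial (P := P) hR rfl rfl hmp hkq hu
  obtain ⟨M, hM⟩ : ∃ M : ℝ, ∀ᶠ t in atBot, exp (P.m * t) * u (exp t) ≤ M := by
    obtain ⟨c, hc1, hc2⟩ := exists_between hbd
    have h := (tendsto_exp_atBot_nhdsGT).eventually (eventually_lt_of_limsup_lt hc1)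
    refine ⟨c.toReal, h.mono fun t ht => ?_⟩
    rw [← exp_mul] at ht
    have := (ENNReal.ofReal_le_iff_le_toReal hc2.ne).1 ht.le
    rw [mul_comm P.m t]
    exact this
  obtain ⟨W, Z, b, hb, hWZ, hWeq⟩ := hsol.exists_continuation hB
    (log_le_log hR hge) hM (sub_one_lt (log R))
  have hrad := EF.Sol.to_radial (P := P) rfl rfl hmp hkq hWZ
  have haR : exp (log R - 1) < R := by
    rw [← lt_log_iff_exp_lt hR]
    linarith
  have hρb : ρ < exp b := (log_lt_iff_lt_exp hρpos).1 hb
  set V : ℝ → ℝ := fun r => exp (-P.m * log r) * W (log r) with hV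
  have huV : ∀ r ∈ Ioo (exp (log R - 1)) R, u r = V r := by
    intro r hr
    have hr0 : 0 < r := (exp_pos _).trans hr.1
    have h := hWeq (log r) ⟨(lt_log_iff_exp_lt hr0).2 hr.1, log_lt_log hr0 hr.2⟩
    simp only [exp_log hr0] at h
    rw [hV]
    simp only
    rw [h, ← mul_assoc, ← exp_add]
    simp
  -- glue `u` to the continued solution `V`, with which it agrees on `(R/e, R)`
  set v : ℝ → ℝ := fun r => if r < R then u r else V r with hv
  have hvu : ∀ r ∈ Ioo 0 R, u =ᶠ[𝓝 r] v := by
    intro r hr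
    filter_upwards [Iio_mem_nhds hr.2] with x hx
    exact (if_pos hx).symm
  have hvV : ∀ r ∈ Ioo (exp (log R - 1)) (exp b), V =ᶠ[𝓝 r] v := by
    intro r hr
    filter_upwards [Ioi_mem_nhds hr.1] with x hx
    by_cases h : x < R
    · rw [hv]
      simp only [if_pos h]
      exact (huV x ⟨hx, h⟩).symm
    · exact (if_neg h).symm
  have hloc : ∀ r ∈ Ioc 0 ρ, ContDiffAt ℝ 2 v r ∧ 0 < v r ∧ radialEq n s μ q v r := by
    intro r hr
    rcases lt_or_ge r R with h | h
    · have hr' : r ∈ Ioo 0 R := ⟨hr.1, h⟩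
      have he := hvu r hr'
      exact ⟨(hu.1.contDiffAt (isOpen_Ioo.mem_nhds hr')).congr_of_eventuallyEq he.symm,
        he.eq_of_nhds ▸ hu.2.1 r hr', radialEq_congr he (hu.2.2 r hr')⟩
    · have hr' : r ∈ Ioo (exp (log R - 1)) (exp b) := ⟨haR.trans_le h, hr.2.trans_lt hρb⟩
      have he := hvV r hr'
      exact ⟨(hrad.1.contDiffAt (isOpen_Ioo.mem_nhds hr')).congr_of_eventuallyEq he.symm,
        he.eq_of_nhds ▸ hrad.2.1 r hr', radialEq_congr he (hrad.2.2 r hr')⟩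
  refine ⟨v, ⟨fun r hr => (hloc r hr).1.contDiffWithinAt, fun r hr => (hloc r hr).2.1,
    fun r hr => (hloc r hr).2.2⟩, fun r hr => ?_⟩
  exact if_pos (hr.2.trans_le (min_le_left _ _))
end
end

section
/- Let 1 < q < 2* − 1. Define Λ₀ := [(n−2)(n−s)/4]^{1/(2*(s)−2)} and, for Λ > Λ₀, R_Λ := [ −(q+1)·F₀(Λ)/(2μΛ^{q+1}) ]^{1/λ} (which is positive since F₀(Λ) < 0 for Λ > Λ₀). Then for every Λ > Λ₀ and every R ∈ (0, R_Λ), any positive radial solution u of (E) on (0,R) with limsup_{r→0⁺} r^{(n−2)/2} u(r) < ∞ extends to a positive radial solution ũ of (E) on (0, R_Λ], and this extension satisfies r^{(n−2)/2} ũ(r) < Λ for all r ∈ (0, R_Λ]. -/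
/-!
With `a = (n - 2) / 2`, `p = 2*(s)` and `l = λ`, the substitution `w t = r ^ a * u r`, `r = exp t`,
turns the radial equation into `w'' = a² w - w ^ (p - 1) + μ e ^ (l t) w ^ q`. Along a positive
solution the energy `E = w'² - F₀(w) - 2μ/(q+1) e ^ (l t) w ^ (q + 1)` is strictly decreasing
(`energy_lt`).

The boundedness of `w` near `-∞` forces `E < 0` at all times (`energy_neg`). Indeed, near `-∞`
the solution is uniformly concave wherever `w ≥ Λ₀`, so being bounded it must return below `Λ₀` at
arbitrarily early times (`exists_lt_of_bounded`). There `F₀ ≥ 0`, so that `E ≥ c² > 0` would give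
`|w'| ≥ c`, and `w` would be driven to zero (`false_of_sq_deriv_ge`).

Negative energy yields two barriers (`mem_trap_of_energy_neg`): `w = 0` is impossible since there
`E = w'² ≥ 0`, and `w = Λ` is impossible while `-F₀(Λ) ≥ 2μ/(q+1) e ^ (l t) Λ ^ (q + 1)`, that is,
while `r ≤ R_Λ`. Hence `0 < w < Λ`, and `w'` is bounded too. To continue the solution, the vector
field is clamped outside of this region, which makes it bounded and Lipschitz; the global solution
of the clamped system never leaves the region, so that it solves the original system past `R_Λ`
(`exists_extension`).
-/


open Filter Set Real
open scoped Topology ENNReal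

noncomputable section

/-- `F₀(ξ) = ((n-2)²/4) ξ² - (2/2*(s)) ξ^{2*(s)}`. -/
def F0 (n : ℕ) (s ξ : ℝ) : ℝ :=
  (((n : ℝ) - 2) ^ 2 / 4) * ξ ^ 2 - (2 / twoStarS n s) * ξ ^ (twoStarS n s)

/-- `Λ₀ = [(n-2)(n-s)/4]^{1/(2*(s)-2)}`. -/
def Lambda0 (n : ℕ) (s : ℝ) : ℝ :=
  (((n : ℝ) - 2) * ((n : ℝ) - s) / 4) ^ (1 / (twoStarS n s - 2))

/-- `R_Λ = [-(q+1)F₀(Λ)/(2μΛ^{q+1})]^{1/λ}`. -/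
def RLambda (n : ℕ) (s μ q Λ : ℝ) : ℝ :=
  (-((q + 1) * F0 n s Λ) / (2 * μ * Λ ^ (q + 1))) ^ (1 / lam n q)

namespace EmdenFowler

/-! ### The Emden–Fowler system and its energy -/

/-- The right-hand side of the Emden–Fowler equation `w'' = a² w - w ^ (p - 1) + μ e ^ (l t) w ^ q`
satisfied by `w t = r ^ a * u r`, `r = exp t`. -/
def force (a p q l μ t x : ℝ) : ℝ := a ^ 2 * x - x ^ (p - 1) + μ * Real.exp (l * t) * x ^ q

/-- The pair `(w, z)` solves the first-order system `w' = z`, `z' = force t w` at the points of `S`.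
Derivatives are two-sided, so `S` is meant to be open. -/
def IsSol (a p q l μ : ℝ) (S : Set ℝ) (w z : ℝ → ℝ) : Prop :=
  ∀ t ∈ S, HasDerivAt w (z t) t ∧ HasDerivAt z (force a p q l μ t (w t)) t

/-- The energy `y² - F₀(x) - 2μ/(q+1) e ^ (l t) x ^ (q + 1)` at time `t`, position `x` and
velocity `y`, where `F₀(x) = a² x² - (2/p) x ^ p`. -/
def energy (a p q l μ t x y : ℝ) : ℝ :=
  y ^ 2 - a ^ 2 * x ^ 2 + 2 / p * x ^ p - 2 * μ / (q + 1) * Real.exp (l * t) * x ^ (q + 1)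

variable {a p q l μ : ℝ}

/-- Along a solution only the explicit time dependence contributes to the derivative of the energy,
which is negative while `w > 0` when `l, μ > 0`. -/
lemma hasDerivAt_energy (hp : 2 < p) (hq : 1 < q) {w z : ℝ → ℝ} {t : ℝ}
    (hw : HasDerivAt w (z t) t) (hz : HasDerivAt z (force a p q l μ t (w t)) t) :
    HasDerivAt (fun t => energy a p q l μ t (w t) (z t))
      (-(2 * μ * l / (q + 1) * (Real.exp (l * t) * w t ^ (q + 1)))) t := by
  have h1 := hw.rpow_const (p := p) (Or.inr (by linarith))
  have h2 := hw.rpow_const (p := q + 1) (Or.inr (by linarith))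
  have h3 : HasDerivAt (fun t => Real.exp (l * t)) (Real.exp (l * t) * l) t := by
    simpa using ((hasDerivAt_id t).const_mul l).exp
  have h := (((hz.pow 2).sub ((hw.pow 2).const_mul (a ^ 2))).add (h1.const_mul (2 / p))).sub
    ((h3.const_mul (2 * μ / (q + 1))).mul h2)
  refine h.congr_deriv ?_
  have hp0 : p ≠ 0 := by linarith
  have hq0 : q + 1 ≠ 0 := by linarith
  rw [show q + 1 - 1 = q by ring]
  simp only [force]
  field_simp
  push_cast
  ring

lemma mul_sub_le_of_le_hasDerivAt {f f' : ℝ → ℝ} {m x y : ℝ} (hxy : x ≤ y)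
    (hf : ∀ t ∈ Icc x y, HasDerivAt f (f' t) t) (hm : ∀ t ∈ Icc x y, m ≤ f' t) :
    m * (y - x) ≤ f y - f x := by
  refine (convex_Icc x y).mul_sub_le_image_sub_of_le_deriv
    (fun t ht => (hf t ht).continuousAt.continuousWithinAt)
    (fun t ht => (hf t (interior_subset ht)).differentiableAt.differentiableWithinAt) ?_
    x (left_mem_Icc.2 hxy) y (right_mem_Icc.2 hxy) hxy
  intro t ht
  rw [(hf t (interior_subset ht)).deriv]
  exact hm t (interior_subset ht)

/-- The system is only required in the interior, so that this applies up to an exit time and from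
an initial time at which only one-sided derivatives are known. -/
lemma energy_le (hp : 2 < p) (hq : 1 < q) (hl : 0 < l) (hμ : 0 < μ) {w z : ℝ → ℝ} {x y : ℝ}
    (hxy : x ≤ y) (hs : IsSol a p q l μ (Ioo x y) w z) (hwc : ContinuousOn w (Icc x y))
    (hzc : ContinuousOn z (Icc x y)) (hw : ∀ t ∈ Ioo x y, 0 < w t) :
    energy a p q l μ y (w y) (z y) ≤ energy a p q l μ x (w x) (z x) := by
  refine antitoneOn_of_hasDerivWithinAt_nonpos (convex_Icc x y)
    (f := fun t => energy a p q l μ t (w t) (z t))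
    (f' := fun t => -(2 * μ * l / (q + 1) * (Real.exp (l * t) * w t ^ (q + 1))))
    ?_ ?_ ?_ (left_mem_Icc.2 hxy) (right_mem_Icc.2 hxy) hxy
  · have h1 : ContinuousOn (fun t => w t ^ p) (Icc x y) :=
      hwc.rpow_const fun t _ => Or.inr (by linarith)
    have h2 : ContinuousOn (fun t => w t ^ (q + 1)) (Icc x y) :=
      hwc.rpow_const fun t _ => Or.inr (by linarith)
    unfold energy
    fun_prop
  · intro t ht
    rw [interior_Icc] at ht
    have h := hs t ht
    exact (hasDerivAt_energy hp hq h.1 h.2).hasDerivWithinAt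
  · intro t ht
    rw [interior_Icc] at ht
    have := hw t ht
    have : 0 ≤ 2 * μ * l / (q + 1) * (Real.exp (l * t) * w t ^ (q + 1)) := by positivity
    linarith

lemma energy_lt (hp : 2 < p) (hq : 1 < q) (hl : 0 < l) (hμ : 0 < μ) {w z : ℝ → ℝ} {x y : ℝ}
    (hxy : x < y) (hs : IsSol a p q l μ (Icc x y) w z) (hw : ∀ t ∈ Icc x y, 0 < w t) :
    energy a p q l μ y (w y) (z y) < energy a p q l μ x (w x) (z x) := by
  refine strictAntiOn_of_hasDerivWithinAt_neg (convex_Icc x y)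
    (f := fun t => energy a p q l μ t (w t) (z t))
    (f' := fun t => -(2 * μ * l / (q + 1) * (Real.exp (l * t) * w t ^ (q + 1))))
    ?_ ?_ ?_ (left_mem_Icc.2 hxy.le) (right_mem_Icc.2 hxy.le) hxy
  · intro t ht
    exact (hasDerivAt_energy hp hq (hs t ht).1 (hs t ht).2).continuousAt.continuousWithinAt
  · intro t ht
    have h := hs t (interior_subset ht)
    exact (hasDerivAt_energy hp hq h.1 h.2).hasDerivWithinAt
  · intro t ht
    have := hw t (interior_subset ht)
    have : 0 < 2 * μ * l / (q + 1) * (Real.exp (l * t) * w t ^ (q + 1)) := by positivity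
    linarith

/-! ### Behaviour at `t → -∞` -/

/-- A positive function on `[0, L]` starting below `k` with nonpositive slope cannot have slope at
least `c` in absolute value whenever it is below `k`, if `k < c * L`: its slope would never change
sign and it would reach zero before time `L`. -/
lemma false_of_sq_deriv_ge {f g : ℝ → ℝ} {k c L : ℝ} (hc : 0 < c) (hL : 0 ≤ L) (hk : k < c * L)
    (hfg : ∀ t ∈ Icc 0 L, HasDerivAt f (g t) t) (hgc : ContinuousOn g (Icc 0 L))
    (hf : ∀ t ∈ Icc 0 L, 0 < f t) (hf0 : f 0 < k) (hg0 : g 0 ≤ 0)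
    (h : ∀ t ∈ Icc 0 L, f t ≤ k → c ^ 2 ≤ g t ^ 2) : False := by
  have h0 : (0 : ℝ) ∈ Icc 0 L := ⟨le_rfl, hL⟩
  have hg0' : g 0 < 0 := by
    have := h 0 h0 hf0.le
    rcases hg0.lt_or_eq with h' | h'
    · exact h'
    · rw [h'] at this; nlinarith
  have hneg : ∀ y ∈ Icc 0 L, g y < 0 := by
    by_contra! hcon
    obtain ⟨y, hy, hgy⟩ := hcon
    -- `τ` is the first time at which the slope is nonnegative.
    have hcpt : IsCompact (Icc 0 L ∩ g ⁻¹' Ici 0) :=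
      isCompact_Icc.of_isClosed_subset (hgc.preimage_isClosed_of_isClosed isClosed_Icc isClosed_Ici)
        inter_subset_left
    obtain ⟨τ, ⟨hτ, hgτ⟩, hmin⟩ := hcpt.exists_isLeast ⟨y, hy, hgy⟩
    have hlt : ∀ x ∈ Ico 0 τ, g x < 0 := by
      intro x hx
      by_contra! hcon
      exact absurd (hmin ⟨⟨hx.1, hx.2.le.trans hτ.2⟩, hcon⟩) (not_le.2 hx.2)
    have hτ0 : 0 < τ := by
      rcases hτ.1.lt_or_eq with h' | h'
      · exact h'
      · rw [← h'] at hgτ; exact absurd hgτ (not_le.2 hg0')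
    have hsub : Icc 0 τ ⊆ Icc 0 L := Icc_subset_Icc_right hτ.2
    have hanti : AntitoneOn f (Icc 0 τ) := by
      refine antitoneOn_of_hasDerivWithinAt_nonpos (convex_Icc 0 τ) (f' := g)
        (fun t ht => (hfg t (hsub ht)).continuousAt.continuousWithinAt)
        (fun t ht => (hfg t (hsub (interior_subset ht))).hasDerivWithinAt) ?_
      intro t ht
      rw [interior_Icc] at ht
      exact (hlt t ⟨ht.1.le, ht.2⟩).le
    have hle : f τ ≤ k := (hanti (left_mem_Icc.2 hτ0.le) (right_mem_Icc.2 hτ0.le) hτ0.le).trans hf0.le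
    have hle2 : ∀ x ∈ Ico 0 τ, g x ≤ -c := by
      intro x hx
      have hx' : x ∈ Icc 0 τ := ⟨hx.1, hx.2.le⟩
      have h1 : f x ≤ k := (hanti (left_mem_Icc.2 hτ0.le) hx' hx.1).trans hf0.le
      have h2 := h x (hsub hx') h1
      have h3 := hlt x hx
      nlinarith
    have hcl : g τ ≤ -c := by
      have hcw : ContinuousWithinAt g (Ico 0 τ) τ :=
        (hgc τ hτ).mono (fun x hx => ⟨hx.1, hx.2.le.trans hτ.2⟩)
      have : τ ∈ closure (Ico 0 τ) := by
        rw [closure_Ico hτ0.ne]; exact right_mem_Icc.2 hτ0.le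
      exact hcw.closure_le this continuousWithinAt_const hle2
    have : 0 ≤ g τ := hgτ
    linarith
  have hanti : AntitoneOn f (Icc 0 L) :=
    antitoneOn_of_hasDerivWithinAt_nonpos (convex_Icc 0 L) (f' := g)
      (fun t ht => (hfg t ht).continuousAt.continuousWithinAt)
      (fun t ht => (hfg t (interior_subset ht)).hasDerivWithinAt)
      (fun t ht => (hneg t (interior_subset ht)).le)
  have h1 := mul_sub_le_of_le_hasDerivAt (f := fun t => -f t) (f' := fun t => -g t) (m := c) hL
    (fun t ht => (hfg t ht).neg) (fun t ht => by
      have h1 : f t ≤ k := (hanti h0 ht ht.1).trans hf0.le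
      have h2 := h t ht h1
      have h3 := hneg t ht
      nlinarith)
  have := hf L ⟨hL, le_rfl⟩
  linarith

/-- A bounded positive solution on a half-line `(-∞, b)` takes values below the zero `k` of `F₀`:
above `k` the force is, near `-∞`, bounded by a negative constant, and a uniformly concave function
cannot stay between two bounds on a half-line. -/
lemma exists_lt_of_bounded (ha : 0 < a) (hp : 2 < p) (hq : 1 < q) (hl : 0 < l) (hμ : 0 < μ)
    {k : ℝ} (hk : 0 < k) (hkp : k ^ (p - 2) = a ^ 2 * p / 2) {w z : ℝ → ℝ} {b M : ℝ}
    (hs : IsSol a p q l μ (Iio b) w z) (hw : ∀ t < b, 0 < w t) (hM : ∀ t < b, w t ≤ M) :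
    ∃ t < b, w t < k := by
  by_contra! hcon
  have hM0 : 0 < M := (hw (b - 1) (by linarith)).trans_le (hM _ (by linarith))
  set κ : ℝ := k * (a ^ 2 * (p / 2 - 1)) with hκ
  have hκ0 : 0 < κ := by
    have : 0 < p / 2 - 1 := by linarith
    positivity
  have hlim : Tendsto (fun t : ℝ => μ * Real.exp (l * t) * M ^ q) atBot (𝓝 0) := by
    have h1 : Tendsto (fun t : ℝ => Real.exp (l * t)) atBot (𝓝 0) :=
      Real.tendsto_exp_atBot.comp (tendsto_id.const_mul_atBot hl)
    simpa using (h1.const_mul μ).mul_const (M ^ q)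
  obtain ⟨c, hc⟩ := eventually_atBot.1 (hlim.eventually_lt_const (half_pos hκ0))
  set d := min c (b - 1) with hd
  have hdb : d < b := (min_le_right _ _).trans_lt (by linarith)
  have hforce : ∀ t ≤ d, force a p q l μ t (w t) ≤ -(κ / 2) := by
    intro t ht
    have htb : t < b := ht.trans_lt hdb
    have h1 := hc t (ht.trans (min_le_left _ _))
    have hwt := hw t htb
    have h2 : μ * Real.exp (l * t) * w t ^ q ≤ μ * Real.exp (l * t) * M ^ q := by
      have := Real.rpow_le_rpow hwt.le (hM t htb) (by linarith : (0 : ℝ) ≤ q)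
      gcongr
    have h3 : w t ^ (p - 1) = w t * w t ^ (p - 2) := by
      rw [show p - 1 = 1 + (p - 2) by ring, Real.rpow_add hwt, Real.rpow_one]
    have h4 : a ^ 2 * p / 2 ≤ w t ^ (p - 2) := by
      rw [← hkp]; exact Real.rpow_le_rpow hk.le (hcon t htb) (by linarith)
    have h5 : a ^ 2 * (p / 2 - 1) ≤ w t ^ (p - 2) - a ^ 2 := by linarith
    have h6 : κ ≤ w t * (w t ^ (p - 2) - a ^ 2) := by
      have : 0 ≤ a ^ 2 * (p / 2 - 1) := by
        have : 0 < p / 2 - 1 := by linarith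
        positivity
      exact mul_le_mul (hcon t htb) h5 this hwt.le
    unfold force
    rw [h3]
    linarith
  have hz : ∀ t ≤ d, κ / 2 * (d - t) ≤ z t - z d := by
    intro t ht
    have := mul_sub_le_of_le_hasDerivAt (f := fun t => -z t) (m := κ / 2) ht
      (fun x hx => (hs x (hx.2.trans_lt hdb)).2.neg)
      (fun x hx => by linarith [hforce x hx.2])
    linarith
  -- Before the time `e` the slope is at least `1`.
  set e := d - (1 + |z d|) / (κ / 2) with he
  have hed : e ≤ d := by
    have : 0 ≤ (1 + |z d|) / (κ / 2) := by positivity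
    linarith
  have hz1 : ∀ t ≤ e, 1 ≤ z t := by
    intro t ht
    have h1 := hz t (ht.trans hed)
    have h2 : (1 + |z d|) / (κ / 2) ≤ d - t := by linarith
    rw [div_le_iff₀ (half_pos hκ0)] at h2
    have := neg_abs_le (z d)
    linarith
  have := mul_sub_le_of_le_hasDerivAt (f := w) (m := 1) (x := e - M) (y := e) (by linarith)
    (fun x hx => (hs x (hx.2.trans_lt (hed.trans_lt hdb))).1) (fun x hx => hz1 x hx.2)
  have h1 := hw (e - M) (by linarith)
  have h2 := hM e (by linarith)
  linarith

/-- A positive solution which is bounded near `-∞` has negative energy at all times. By strict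
monotonicity it suffices to see that the energy is nowhere positive. If it equalled `c² > 0` at
time `x`, then before `x` it would be at least `c²`, so that `|w'| ≥ c` whenever `w ≤ k`. From a
point far in the past where `w < k`, the solution would then reach zero, forward or backward in
time according to the sign of `w'`. -/
lemma energy_neg (ha : 0 < a) (hp : 2 < p) (hq : 1 < q) (hl : 0 < l) (hμ : 0 < μ)
    {k : ℝ} (hk : 0 < k) (hkp : k ^ (p - 2) = a ^ 2 * p / 2) {w z : ℝ → ℝ} {b b' M : ℝ}
    (hs : IsSol a p q l μ (Iio b) w z) (hw : ∀ t < b, 0 < w t)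
    (hb' : b' ≤ b) (hM : ∀ t < b', w t ≤ M) {t : ℝ} (ht : t < b) :
    energy a p q l μ t (w t) (z t) < 0 := by
  suffices H : ∀ x < b, energy a p q l μ x (w x) (z x) ≤ 0 from
    (energy_lt hp hq hl hμ (sub_one_lt t) (fun x hx => hs x (hx.2.trans_lt ht))
      (fun x hx => hw x (hx.2.trans_lt ht))).trans_le (H _ (by linarith))
  intro x hx
  by_contra! hpos
  set c := √(energy a p q l μ x (w x) (z x)) with hc
  have hc0 : 0 < c := Real.sqrt_pos.2 hpos
  have hc2 : c ^ 2 = energy a p q l μ x (w x) (z x) := Real.sq_sqrt hpos.le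
  have hsq : ∀ y ≤ x, w y ≤ k → c ^ 2 ≤ z y ^ 2 := by
    intro y hy hwk
    have hyb : ∀ t ∈ Icc y x, t < b := fun t ht => ht.2.trans_lt hx
    have h1 := energy_le hp hq hl hμ hy (fun t ht => hs t (hyb t (Ioo_subset_Icc_self ht)))
      (fun t ht => (hs t (hyb t ht)).1.continuousAt.continuousWithinAt)
      (fun t ht => (hs t (hyb t ht)).2.continuousAt.continuousWithinAt)
      (fun t ht => hw t (hyb t (Ioo_subset_Icc_self ht)))
    rw [← hc2] at h1
    have hwy := hw y (hy.trans_lt hx)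
    have h3 : w y ^ p = w y ^ 2 * w y ^ (p - 2) := by
      rw [← Real.rpow_natCast (w y) 2, ← Real.rpow_add hwy]; congr 1; push_cast; ring
    have h4 : w y ^ (p - 2) ≤ a ^ 2 * p / 2 := by
      rw [← hkp]; exact Real.rpow_le_rpow hwy.le hwk (by linarith)
    -- `F₀ (w y) ≥ 0` since `w y ≤ k`.
    have h5 : 2 / p * w y ^ p ≤ a ^ 2 * w y ^ 2 := by
      have hp0 : 0 < p := by linarith
      calc 2 / p * w y ^ p = 2 / p * w y ^ 2 * w y ^ (p - 2) := by rw [h3]; ring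
        _ ≤ 2 / p * w y ^ 2 * (a ^ 2 * p / 2) := by gcongr
        _ = a ^ 2 * w y ^ 2 := by field_simp
    have h6 : 0 ≤ 2 * μ / (q + 1) * Real.exp (l * y) * w y ^ (q + 1) := by positivity
    unfold energy at h1
    linarith
  set L := k / c + 1 with hL
  have hL0 : 0 ≤ L := by positivity
  have hLk : k < c * L := by
    rw [hL, mul_add, mul_div_cancel₀ _ hc0.ne']; linarith
  have hle : min b' (x - L) ≤ b := (min_le_left _ _).trans hb'
  obtain ⟨y, hy, hyk⟩ := exists_lt_of_bounded ha hp hq hl hμ hk hkp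
    (b := min b' (x - L)) (M := M) (fun t ht => hs t (lt_of_lt_of_le ht hle))
    (fun t ht => hw t (ht.trans_le hle)) (fun t ht => hM t (ht.trans_le (min_le_left _ _)))
  have hyx : y < x - L := hy.trans_le (min_le_right _ _)
  rcases le_total (z y) 0 with hzy | hzy
  · have hb : ∀ t ∈ Icc 0 L, y + t < b := fun t ht => by linarith [ht.2]
    refine false_of_sq_deriv_ge (f := fun t => w (y + t)) (g := fun t => z (y + t)) hc0 hL0 hLk
      (fun t ht => (hs _ (hb t ht)).1.comp_const_add y t) ?_ (fun t ht => hw _ (hb t ht))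
      (by simpa using hyk) (by simpa using hzy) (fun t ht => hsq _ (by linarith [ht.2]))
    exact fun t ht =>
      ((hs _ (hb t ht)).2.comp_const_add y t).continuousAt.continuousWithinAt
  · have hb : ∀ t ∈ Icc 0 L, y - t < b := fun t ht => by linarith [ht.1]
    refine false_of_sq_deriv_ge (f := fun t => w (y - t)) (g := fun t => -z (y - t)) hc0 hL0 hLk
      (fun t ht => (hs _ (hb t ht)).1.comp_const_sub y t) ?_ (fun t ht => hw _ (hb t ht))
      (by simpa using hyk) (by simpa using hzy)
      (fun t ht hk => by rw [neg_sq]; exact hsq _ (by linarith [ht.1]) hk)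
    exact fun t ht =>
      ((hs _ (hb t ht)).2.comp_const_sub y t).neg.continuousAt.continuousWithinAt

/-! ### Global existence for a truncated system -/

lemma abs_rpow_sub_le {e Λ x y : ℝ} (he : 1 ≤ e) (hx : x ∈ Icc 0 Λ) (hy : y ∈ Icc 0 Λ) :
    |x ^ e - y ^ e| ≤ e * Λ ^ (e - 1) * |x - y| := by
  refine (convex_Icc 0 Λ).norm_image_sub_le_of_norm_hasDerivWithin_le
    (f := fun x => x ^ e) (f' := fun x => e * x ^ (e - 1))
    (fun t _ => (Real.hasDerivAt_rpow_const (Or.inr he)).hasDerivWithinAt) ?_ hy hx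
  intro t ht
  have : 0 ≤ t ^ (e - 1) := Real.rpow_nonneg ht.1 _
  rw [Real.norm_of_nonneg (by positivity)]
  have := Real.rpow_le_rpow ht.1 ht.2 (by linarith : 0 ≤ e - 1)
  gcongr

/-- The vector field of the Emden–Fowler system with the position clamped to `[0, Λ]`, the velocity
clamped to `[-Y, Y]` and time stopped at `T`. It is bounded and uniformly Lipschitz, and agrees
with the original field on `trap Λ Y` up to time `T`. -/
def clampedField (a p q l μ Λ Y T : ℝ) (t : ℝ) (v : ℝ × ℝ) : ℝ × ℝ :=
  (max (-Y) (min Y v.2), force a p q l μ (min t T) (max 0 (min Λ v.1)))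

lemma exists_lipschitz_clampedField (hp : 2 < p) (hq : 1 < q) (hl : 0 < l) (hμ : 0 < μ)
    {Λ : ℝ} (hΛ : 0 < Λ) (Y T : ℝ) :
    ∃ K, ∀ t, LipschitzWith K (clampedField a p q l μ Λ Y T t) := by
  set A := a ^ 2 + (p - 1) * Λ ^ (p - 1 - 1) + μ * Real.exp (l * T) * (q * Λ ^ (q - 1)) with hA
  have hA0 : 0 ≤ A := by
    have : 0 ≤ (p - 1) := by linarith
    positivity
  refine ⟨⟨1 + A, by linarith⟩, fun t => LipschitzWith.of_dist_le_mul fun v v' => ?_⟩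
  have hclamp : ∀ c d x y : ℝ, |max c (min d x) - max c (min d y)| ≤ |x - y| := by
    intro c d x y
    refine (abs_max_sub_max_le_max _ _ _ _).trans (max_le (by simp) ?_)
    exact (abs_min_sub_min_le_max _ _ _ _).trans (max_le (by simp) le_rfl)
  have hmem : ∀ x, max 0 (min Λ x) ∈ Icc 0 Λ := fun x =>
    ⟨le_max_left _ _, max_le hΛ.le (min_le_left _ _)⟩
  change dist _ _ ≤ (1 + A) * dist v v'
  have hd1 : |v.1 - v'.1| ≤ dist v v' := by
    rw [Prod.dist_eq, ← Real.dist_eq]; exact le_max_left _ _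
  have hd2 : |v.2 - v'.2| ≤ dist v v' := by
    rw [Prod.dist_eq, ← Real.dist_eq]; exact le_max_right _ _
  have hd0 : 0 ≤ dist v v' := dist_nonneg
  rw [Prod.dist_eq]
  refine max_le ?_ ?_
  · rw [Real.dist_eq]
    have := (hclamp (-Y) Y v.2 v'.2).trans hd2
    simp only [clampedField]
    nlinarith
  · rw [Real.dist_eq]
    simp only [clampedField]
    set x := max 0 (min Λ v.1)
    set y := max 0 (min Λ v'.1)
    have hx : x ∈ Icc 0 Λ := hmem _
    have hy : y ∈ Icc 0 Λ := hmem _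
    have hxy : |x - y| ≤ dist v v' := (hclamp _ _ _ _).trans hd1
    have h1 := abs_rpow_sub_le (e := p - 1) (by linarith) hx hy
    have h2 := abs_rpow_sub_le (e := q) hq.le hx hy
    have hexp : Real.exp (l * min t T) ≤ Real.exp (l * T) := by
      apply Real.exp_le_exp.2
      exact mul_le_mul_of_nonneg_left (min_le_right _ _) hl.le
    have h3 : |μ * Real.exp (l * min t T) * (x ^ q - y ^ q)|
        ≤ μ * Real.exp (l * T) * (q * Λ ^ (q - 1) * |x - y|) := by
      rw [abs_mul, abs_of_pos (by positivity)]
      gcongr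
    have h4 : force a p q l μ (min t T) x - force a p q l μ (min t T) y
        = a ^ 2 * (x - y) - (x ^ (p - 1) - y ^ (p - 1))
          + μ * Real.exp (l * min t T) * (x ^ q - y ^ q) := by
      unfold force; ring
    rw [h4]
    have h5 : |a ^ 2 * (x - y)| = a ^ 2 * |x - y| := by
      rw [abs_mul, abs_of_nonneg (sq_nonneg a)]
    have h6 := abs_add_le (a ^ 2 * (x - y) - (x ^ (p - 1) - y ^ (p - 1)))
      (μ * Real.exp (l * min t T) * (x ^ q - y ^ q))
    have h7 := abs_sub (a ^ 2 * (x - y)) (x ^ (p - 1) - y ^ (p - 1))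
    have h8 : A * |x - y| ≤ (1 + A) * dist v v' :=
      mul_le_mul (by linarith) hxy (abs_nonneg _) (by linarith)
    have h9 : A * |x - y| = a ^ 2 * |x - y| + (p - 1) * Λ ^ (p - 1 - 1) * |x - y|
        + μ * Real.exp (l * T) * (q * Λ ^ (q - 1) * |x - y|) := by rw [hA]; ring
    linarith

lemma exists_bound_clampedField (hp : 2 < p) (hq : 1 < q) (hl : 0 < l) (hμ : 0 < μ)
    {Λ Y : ℝ} (hΛ : 0 < Λ) (hY : 0 ≤ Y) (T : ℝ) :
    ∃ C, ∀ t v, ‖clampedField a p q l μ Λ Y T t v‖ ≤ C := by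
  refine ⟨Y + (a ^ 2 * Λ + Λ ^ (p - 1) + μ * Real.exp (l * T) * Λ ^ q), fun t v => ?_⟩
  have hpos : 0 ≤ a ^ 2 * Λ + Λ ^ (p - 1) + μ * Real.exp (l * T) * Λ ^ q := by positivity
  rw [Prod.norm_def]
  refine max_le ?_ ?_
  · simp only [clampedField, Real.norm_eq_abs]
    have : |max (-Y) (min Y v.2)| ≤ Y :=
      abs_le.2 ⟨le_max_left _ _, max_le (by linarith) (min_le_left _ _)⟩
    linarith
  · simp only [clampedField, Real.norm_eq_abs, force]
    set x := max 0 (min Λ v.1)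
    have hx0 : 0 ≤ x := le_max_left _ _
    have hx1 : x ≤ Λ := max_le hΛ.le (min_le_left _ _)
    have hexp : Real.exp (l * min t T) ≤ Real.exp (l * T) := by
      apply Real.exp_le_exp.2
      exact mul_le_mul_of_nonneg_left (min_le_right _ _) hl.le
    have h1 : x ^ (p - 1) ≤ Λ ^ (p - 1) := Real.rpow_le_rpow hx0 hx1 (by linarith)
    have h2 : x ^ q ≤ Λ ^ q := Real.rpow_le_rpow hx0 hx1 (by linarith)
    have h3 : μ * Real.exp (l * min t T) * x ^ q ≤ μ * Real.exp (l * T) * Λ ^ q := by gcongr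
    have h4 : a ^ 2 * x ≤ a ^ 2 * Λ := by gcongr
    have h5 : 0 ≤ x ^ (p - 1) := by positivity
    have h6 : 0 ≤ μ * Real.exp (l * min t T) * x ^ q := by positivity
    have h7 : 0 ≤ a ^ 2 * x := by positivity
    rw [abs_le]
    constructor <;> linarith

lemma continuous_clampedField (v : ℝ × ℝ) (Λ Y T : ℝ) :
    Continuous fun t => clampedField a p q l μ Λ Y T t v := by
  unfold clampedField force
  fun_prop

/-- Picard–Lindelöf on a time interval of arbitrary length: since the field is bounded by `C`, the
ball of radius `C * (T - t₀)` cannot be left. -/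
lemma exists_solution_of_lipschitz_of_bounded {f : ℝ → ℝ × ℝ → ℝ × ℝ} {K : NNReal} {C : ℝ}
    (hK : ∀ t, LipschitzWith K (f t)) (hf : ∀ v, Continuous (f · v)) (hC : ∀ t v, ‖f t v‖ ≤ C)
    {t₀ T : ℝ} (hT : t₀ ≤ T) (v₀ : ℝ × ℝ) :
    ∃ α : ℝ → ℝ × ℝ, α t₀ = v₀ ∧
      ∀ t ∈ Icc t₀ T, HasDerivWithinAt α (f t (α t)) (Icc t₀ T) t := by
  have hC0 : 0 ≤ C := (norm_nonneg _).trans (hC 0 0)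
  have h : IsPicardLindelof f (⟨t₀, left_mem_Icc.2 hT⟩ : Icc t₀ T) v₀
      (⟨C, hC0⟩ * ⟨T - t₀, sub_nonneg.2 hT⟩) 0 ⟨C, hC0⟩ K :=
    { lipschitzOnWith := fun t _ => (hK t).lipschitzOnWith
      continuousOn := fun v _ => (hf v).continuousOn
      norm_le := fun t _ v _ => hC t v
      mul_max_le := by simp [hT]; exact le_rfl }
  exact h.exists_eq_forall_mem_Icc_hasDerivWithinAt₀

/-! ### Confinement and continuation -/

/-- Continuous induction: a curve that starts in an open set and cannot leave it at a first exit
time never leaves it. -/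
lemma forall_mem_of_first_exit {α : ℝ → ℝ × ℝ} {U : Set (ℝ × ℝ)} (hU : IsOpen U) {t₀ T : ℝ}
    (hα : ContinuousOn α (Icc t₀ T)) (h0 : α t₀ ∈ U)
    (h : ∀ τ ∈ Ioc t₀ T, (∀ t ∈ Ico t₀ τ, α t ∈ U) → α τ ∈ U) : ∀ t ∈ Icc t₀ T, α t ∈ U := by
  by_contra! hcon
  obtain ⟨y, hy, hyU⟩ := hcon
  have hcpt : IsCompact (Icc t₀ T ∩ α ⁻¹' Uᶜ) :=
    isCompact_Icc.of_isClosed_subset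
      (hα.preimage_isClosed_of_isClosed isClosed_Icc hU.isClosed_compl) inter_subset_left
  obtain ⟨τ, ⟨hτ, hατ⟩, hmin⟩ := hcpt.exists_isLeast ⟨y, hy, hyU⟩
  refine hατ (h τ ⟨lt_of_le_of_ne hτ.1 ?_, hτ.2⟩ ?_)
  · rintro rfl; exact hατ h0
  · intro t ht
    by_contra hcon
    exact absurd (hmin ⟨⟨ht.1, ht.2.le.trans hτ.2⟩, hcon⟩) (not_le.2 ht.2)

/-- The region of phase space with position in `(0, Λ)` and velocity in `(-Y, Y)`. -/
def trap (Λ Y : ℝ) : Set (ℝ × ℝ) := Ioo 0 Λ ×ˢ Ioo (-Y) Y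

lemma clampedField_eq_of_mem {Λ Y T t : ℝ} {v : ℝ × ℝ} (hv : v ∈ trap Λ Y) (ht : t ≤ T) :
    clampedField a p q l μ Λ Y T t v = (v.2, force a p q l μ t v.1) := by
  obtain ⟨⟨h1, h2⟩, h3, h4⟩ := hv
  simp only [clampedField]
  rw [min_eq_right h4.le, max_eq_right h3.le, min_eq_right h2.le, max_eq_right h1.le,
    min_eq_left ht]

/-- A state of negative energy with position in `[0, Λ]` lies in the open region `trap Λ Y`. At
`x = 0` the energy is `y² ≥ 0`; at `x = Λ` it is nonnegative as long as `t ≤ T`, because of `hT`,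
which says that `T ≤ log R_Λ`. -/
lemma mem_trap_of_energy_neg (hp : 2 < p) (hq : 1 < q) (hl : 0 < l) (hμ : 0 < μ)
    {Λ Y T : ℝ} (hY : 0 ≤ Y)
    (hYT : a ^ 2 * Λ ^ 2 + 2 * μ / (q + 1) * Real.exp (l * T) * Λ ^ (q + 1) ≤ Y ^ 2)
    (hT : 2 * μ / (q + 1) * Real.exp (l * T) * Λ ^ (q + 1) ≤ 2 / p * Λ ^ p - a ^ 2 * Λ ^ 2)
    {t x y : ℝ} (ht : t ≤ T) (hx : x ∈ Icc 0 Λ) (hE : energy a p q l μ t x y < 0) :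
    (x, y) ∈ trap Λ Y := by
  have hexp : Real.exp (l * t) ≤ Real.exp (l * T) :=
    Real.exp_le_exp.2 (mul_le_mul_of_nonneg_left ht hl.le)
  have hp0 : 0 < p := by linarith
  have hΛ0 : 0 ≤ Λ := hx.1.trans hx.2
  have hxq : x ^ (q + 1) ≤ Λ ^ (q + 1) := Real.rpow_le_rpow hx.1 hx.2 (by linarith)
  have hxq0 : 0 ≤ x ^ (q + 1) := Real.rpow_nonneg hx.1 _
  have h1 : 2 * μ / (q + 1) * Real.exp (l * t) * x ^ (q + 1)
      ≤ 2 * μ / (q + 1) * Real.exp (l * T) * Λ ^ (q + 1) := by gcongr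
  have h2 : x ^ 2 ≤ Λ ^ 2 := by have := hx.1; have := hx.2; gcongr
  have h3 : 0 ≤ 2 / p * x ^ p := by
    have := Real.rpow_nonneg hx.1 p
    positivity
  unfold energy at hE
  refine ⟨⟨lt_of_le_of_ne hx.1 ?_, lt_of_le_of_ne hx.2 ?_⟩, ?_⟩
  · rintro rfl
    rw [Real.zero_rpow hp0.ne', Real.zero_rpow (by linarith)] at hE
    nlinarith [sq_nonneg y]
  · intro hxΛ
    simp only at hxΛ
    subst hxΛ
    nlinarith [sq_nonneg y]
  · have : y ^ 2 < Y ^ 2 := by nlinarith [sq_nonneg a]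
    exact abs_lt.1 (abs_lt_of_sq_lt_sq this hY)

/-- A bounded-at-`-∞` positive solution on `(-∞, b)`, `b < T`, continues beyond `T` inside `(0, Λ)`,
for every time `T` up to which the energy barrier at `Λ` holds. The continuation solves the clamped
system from time `b - 1`; negativity of the energy keeps it in the region where nothing has been
clamped. -/
theorem exists_extension (ha : 0 < a) (hp : 2 < p) (hq : 1 < q) (hl : 0 < l) (hμ : 0 < μ)
    {k : ℝ} (hk : 0 < k) (hkp : k ^ (p - 2) = a ^ 2 * p / 2) {Λ T : ℝ} (hkΛ : k < Λ)
    (hT : 2 * μ / (q + 1) * Real.exp (l * T) * Λ ^ (q + 1) ≤ 2 / p * Λ ^ p - a ^ 2 * Λ ^ 2)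
    {w z : ℝ → ℝ} {b b' M : ℝ} (hbT : b < T)
    (hs : IsSol a p q l μ (Iio b) w z) (hw : ∀ t < b, 0 < w t)
    (hb' : b' ≤ b) (hM : ∀ t < b', w t ≤ M) :
    ∃ T₁ > T, ∃ W Z : ℝ → ℝ, IsSol a p q l μ (Iio T₁) W Z ∧ (∀ t < T₁, 0 < W t) ∧
      (∀ t < T₁, W t < Λ) ∧ EqOn W w (Iio b) := by
  have hΛ : 0 < Λ := hk.trans hkΛ
  set Y := √(a ^ 2 * Λ ^ 2 + 2 * μ / (q + 1) * Real.exp (l * T) * Λ ^ (q + 1)) with hYdef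
  have hY : 0 ≤ Y := Real.sqrt_nonneg _
  have hY2 : a ^ 2 * Λ ^ 2 + 2 * μ / (q + 1) * Real.exp (l * T) * Λ ^ (q + 1) ≤ Y ^ 2 := by
    rw [hYdef, Real.sq_sqrt (by positivity)]
  have hneg : ∀ t < b, energy a p q l μ t (w t) (z t) < 0 := fun t ht =>
    energy_neg ha hp hq hl hμ hk hkp hs hw hb' hM ht
  -- `w` is below `k < Λ` at some early time and cannot cross the level `Λ`.
  have hwΛ : ∀ t < b, w t ≤ Λ := by
    intro t ht
    by_contra! hcon
    have hle : min b' t ≤ b := (min_le_left _ _).trans hb'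
    obtain ⟨y, hy, hyk⟩ := exists_lt_of_bounded ha hp hq hl hμ hk hkp
      (b := min b' t) (M := M) (fun t ht => hs t (lt_of_lt_of_le ht hle))
      (fun t ht => hw t (ht.trans_le hle)) (fun t ht => hM t (ht.trans_le (min_le_left _ _)))
    have hyt : y ≤ t := (hy.trans_le (min_le_right _ _)).le
    obtain ⟨τ, hτ, hτΛ⟩ := intermediate_value_Icc hyt
      (fun x hx => (hs x (hx.2.trans_lt ht)).1.continuousAt.continuousWithinAt)
      ⟨(hyk.trans hkΛ).le, hcon.le⟩
    have hτb : τ < b := hτ.2.trans_lt ht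
    have := mem_trap_of_energy_neg hp hq hl hμ hY hY2 hT (hτb.trans hbT).le
      (by rw [hτΛ]; exact ⟨hΛ.le, le_rfl⟩) (hneg τ hτb)
    exact absurd this.1.2 (by rw [hτΛ]; exact lt_irrefl _)
  have htrap : ∀ t < b, (w t, z t) ∈ trap Λ Y := fun t ht =>
    mem_trap_of_energy_neg hp hq hl hμ hY hY2 hT (ht.trans hbT).le ⟨(hw t ht).le, hwΛ t ht⟩
      (hneg t ht)
  set t₀ := b - 1 with ht₀
  have ht₀b : t₀ < b := sub_one_lt b
  obtain ⟨K, hK⟩ := exists_lipschitz_clampedField (a := a) hp hq hl hμ hΛ Y (T + 1)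
  obtain ⟨C, hC⟩ := exists_bound_clampedField (a := a) hp hq hl hμ hΛ hY (T + 1)
  obtain ⟨α, hα0, hα⟩ := exists_solution_of_lipschitz_of_bounded hK
    (fun v => continuous_clampedField v Λ Y (T + 1)) hC (by linarith : t₀ ≤ T + 1) (w t₀, z t₀)
  have hαc : ContinuousOn α (Icc t₀ (T + 1)) := fun t ht => (hα t ht).continuousWithinAt
  have hopen : IsOpen (trap Λ Y) := isOpen_Ioo.prod isOpen_Ioo
  have hαs : ∀ t ∈ Ioo t₀ (T + 1), α t ∈ trap Λ Y →
      HasDerivAt (fun t => (α t).1) (α t).2 t ∧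
      HasDerivAt (fun t => (α t).2) (force a p q l μ t (α t).1) t := by
    intro t ht htr
    have h := (hα t (Ioo_subset_Icc_self ht)).hasDerivAt (Icc_mem_nhds ht.1 ht.2)
    rw [clampedField_eq_of_mem htr ht.2.le] at h
    exact ⟨h.fst, h.snd⟩
  have hαtrap : ∀ t ∈ Icc t₀ T, α t ∈ trap Λ Y := by
    refine forall_mem_of_first_exit hopen (hαc.mono (Icc_subset_Icc_right (by linarith)))
      (by rw [hα0]; exact htrap t₀ ht₀b) ?_
    intro τ hτ hbefore
    have hsub : Icc t₀ τ ⊆ Icc t₀ (T + 1) := Icc_subset_Icc_right (by linarith [hτ.2])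
    have hle := energy_le (a := a) (w := fun t => (α t).1) (z := fun t => (α t).2) hp hq hl hμ
      hτ.1.le
      (fun t ht => hαs t ⟨ht.1, by linarith [ht.2, hτ.2]⟩ (hbefore t ⟨ht.1.le, ht.2⟩))
      (continuous_fst.comp_continuousOn (hαc.mono hsub))
      (continuous_snd.comp_continuousOn (hαc.mono hsub))
      (fun t ht => (hbefore t ⟨ht.1.le, ht.2⟩).1.1)
    have hlt : energy a p q l μ τ (α τ).1 (α τ).2 < 0 := by
      refine hle.trans_lt ?_
      simp only [hα0]
      exact hneg t₀ ht₀b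
    have hcl : (α τ).1 ∈ Icc 0 Λ := by
      have hcw : ContinuousWithinAt (fun t => (α t).1) (Ico t₀ τ) τ :=
        (continuous_fst.comp_continuousOn (hαc.mono hsub) τ (right_mem_Icc.2 hτ.1.le)).mono
          Ico_subset_Icc_self
      have hmem : τ ∈ closure (Ico t₀ τ) := by
        rw [closure_Ico hτ.1.ne]; exact right_mem_Icc.2 hτ.1.le
      exact ⟨continuousWithinAt_const.closure_le hmem hcw fun t ht => (hbefore t ht).1.1.le,
        hcw.closure_le hmem continuousWithinAt_const fun t ht => (hbefore t ht).1.2.le⟩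
    exact mem_trap_of_energy_neg hp hq hl hμ hY hY2 hT hτ.2 hcl hlt
  obtain ⟨T₁, hT₁, hT₁', hα₁⟩ : ∃ T₁ > T, T₁ ≤ T + 1 ∧ ∀ t ∈ Icc t₀ T₁, α t ∈ trap Λ Y := by
    have hTm : T ∈ Icc t₀ (T + 1) := ⟨by linarith, by linarith⟩
    have hcT : ContinuousAt α T :=
      (hαc T hTm).continuousAt (Icc_mem_nhds (by linarith) (by linarith))
    have hev := hcT.eventually_mem (hopen.mem_nhds (hαtrap T ⟨by linarith, le_rfl⟩))
    obtain ⟨ε, hε, hball⟩ := Metric.eventually_nhds_iff.1 hev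
    refine ⟨T + min (ε / 2) 1, by linarith [lt_min (half_pos hε) one_pos],
      by linarith [min_le_right (ε / 2) 1], fun t ht => ?_⟩
    rcases le_total t T with h | h
    · exact hαtrap t ⟨ht.1, h⟩
    · apply hball
      rw [Real.dist_eq, abs_of_nonneg (by linarith)]
      linarith [ht.2, min_le_left (ε / 2) 1]
  -- Uniqueness for the clamped system, which `w` solves as well.
  have heq : ∀ t ∈ Ico t₀ b, α t = (w t, z t) := by
    intro c hc
    refine ODE_solution_unique (v := clampedField a p q l μ Λ Y (T + 1)) hK (a := t₀) (b := c)
      (f := α) (g := fun t => (w t, z t))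
      (hαc.mono (Icc_subset_Icc_right (by linarith [hc.2])))
      (fun t ht => ?_) (fun t ht => ?_) (fun t ht => ?_) hα0 (right_mem_Icc.2 hc.1)
    · have htT : t < T + 1 := by linarith [ht.2, hc.2]
      exact (hα t ⟨ht.1, htT.le⟩).mono_of_mem_nhdsWithin (Icc_mem_nhdsGE_of_mem ⟨ht.1, htT⟩)
    · have htb : t < b := ht.2.trans_lt hc.2
      exact ((hs t htb).1.prodMk (hs t htb).2).continuousAt.continuousWithinAt
    · have htb : t < b := ht.2.trans hc.2
      rw [clampedField_eq_of_mem (htrap t htb) (by linarith)]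
      exact ((hs t htb).1.prodMk (hs t htb).2).hasDerivWithinAt
  refine ⟨T₁, hT₁, fun t => if t < b then w t else (α t).1,
    fun t => if t < b then z t else (α t).2, ?_, ?_, ?_, fun t ht => if_pos ht⟩
  · intro t ht
    by_cases htb : t < b
    · simp only [if_pos htb]
      have hnear := Iio_mem_nhds htb
      exact ⟨(hs t htb).1.congr_of_eventuallyEq
          (by filter_upwards [hnear] with x hx using if_pos hx),
        (hs t htb).2.congr_of_eventuallyEq
          (by filter_upwards [hnear] with x hx using if_pos hx)⟩
    · simp only [if_neg htb]
      have ht0 : t₀ < t := by linarith [not_lt.1 htb]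
      have hnear := Ioi_mem_nhds ht0
      have h := hαs t ⟨ht0, lt_of_lt_of_le ht hT₁'⟩ (hα₁ t ⟨ht0.le, le_of_lt ht⟩)
      refine ⟨h.1.congr_of_eventuallyEq ?_, h.2.congr_of_eventuallyEq ?_⟩ <;>
      · filter_upwards [hnear] with x hx
        split_ifs with hxb
        · rw [heq x ⟨le_of_lt hx, hxb⟩]
        · rfl
  · intro t ht
    dsimp only
    split_ifs with htb
    · exact hw t htb
    · exact (hα₁ t ⟨by linarith [not_lt.1 htb], ht.le⟩).1.1
  · intro t ht
    dsimp only
    split_ifs with htb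
    · exact (htrap t htb).1.2
    · exact (hα₁ t ⟨by linarith [not_lt.1 htb], ht.le⟩).1.2

/-! ### The Emden–Fowler change of variables -/

/-- How the nonlinearity transforms under `r = exp t`, `w = exp (a t) U`. The relation `hap`
encodes the criticality of the exponent `p`, which makes the first term autonomous; `hl` identifies
the exponent `l` of the time dependence of the second one. -/
lemma exp_mul_source {s t U : ℝ} (hap : a * (p - 1) = a + 2 - s) (hl : l = a + 2 - a * q)
    (hU : 0 < U) :
    Real.exp (a * t) * Real.exp t ^ 2 * (-(Real.exp t ^ (-s) * U ^ (p - 1)) + μ * U ^ q)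
      = force a p q l μ t (Real.exp (a * t) * U) - a ^ 2 * (Real.exp (a * t) * U) := by
  have h1 : (Real.exp (a * t) * U) ^ (p - 1)
      = Real.exp (a * t) * Real.exp t ^ 2 * Real.exp t ^ (-s) * U ^ (p - 1) := by
    rw [Real.mul_rpow (Real.exp_pos _).le hU.le]
    congr 1
    rw [← Real.exp_mul, ← Real.exp_mul, ← Real.exp_nat_mul, ← Real.exp_add, ← Real.exp_add]
    congr 1
    push_cast
    linear_combination t * hap
  have h2 : Real.exp (l * t) * (Real.exp (a * t) * U) ^ q
      = Real.exp (a * t) * Real.exp t ^ 2 * U ^ q := by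
    rw [Real.mul_rpow (Real.exp_pos _).le hU.le, ← mul_assoc]
    congr 1
    rw [← Real.exp_mul, ← Real.exp_nat_mul, ← Real.exp_add, ← Real.exp_add]
    congr 1
    push_cast
    rw [hl]
    ring
  unfold force
  rw [h1, mul_assoc μ, h2]
  ring

/-- A positive radial solution `u` gives a solution `w t = exp (a t) * u (exp t)` of the
Emden–Fowler system. Here `2 * a + 1` plays the role of `n - 1`. -/
lemma isSol_of_radial {s : ℝ} (hap : a * (p - 1) = a + 2 - s) (hl : l = a + 2 - a * q)
    {u u₁ u₂ : ℝ → ℝ} {S : Set ℝ}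
    {I : Set ℝ} (hSI : ∀ t ∈ S, Real.exp t ∈ I)
    (hu : ∀ r ∈ I, HasDerivAt u (u₁ r) r) (hu₁ : ∀ r ∈ I, HasDerivAt u₁ (u₂ r) r)
    (hpos : ∀ r ∈ I, 0 < u r)
    (heq : ∀ r ∈ I,
      u₂ r + (2 * a + 1) / r * u₁ r + r ^ (-s) * u r ^ (p - 1) - μ * u r ^ q = 0) :
    IsSol a p q l μ S (fun t => Real.exp (a * t) * u (Real.exp t))
      (fun t => Real.exp (a * t) * (a * u (Real.exp t) + Real.exp t * u₁ (Real.exp t))) := by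
  intro t ht
  have hr : Real.exp t ∈ I := hSI t ht
  have he : HasDerivAt (fun t => Real.exp (a * t)) (Real.exp (a * t) * a) t := by
    simpa using ((hasDerivAt_id t).const_mul a).exp
  have h0 := (hu _ hr).comp t (Real.hasDerivAt_exp t)
  have h1 := (hu₁ _ hr).comp t (Real.hasDerivAt_exp t)
  have hsrc := exp_mul_source (μ := μ) (t := t) hap hl (hpos _ hr)
  have hode := heq _ hr
  refine ⟨(he.mul h0).congr_deriv ?_,
    (he.mul ((h0.const_mul a).add ((Real.hasDerivAt_exp t).mul h1))).congr_deriv ?_⟩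
  · simp only [Function.comp_apply]; ring
  · simp only [Function.comp_apply, Pi.add_apply, Pi.mul_apply]
    have hne := (Real.exp_pos t).ne'
    have hode' : u₂ (Real.exp t) = -((2 * a + 1) / Real.exp t * u₁ (Real.exp t))
        + (-(Real.exp t ^ (-s) * u (Real.exp t) ^ (p - 1)) + μ * u (Real.exp t) ^ q) := by
      linarith
    rw [hode']
    have hcan : Real.exp t * ((2 * a + 1) / Real.exp t * u₁ (Real.exp t))
        = (2 * a + 1) * u₁ (Real.exp t) := by field_simp
    linear_combination hsrc - Real.exp (a * t) * Real.exp t * hcan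

/-- The converse change of variables: a positive solution `W` of the Emden–Fowler system gives the
solution `r ^ (-a) * W (log r)` of the radial equation, whose first two derivatives are exhibited
as `v₁` and `v₂`. The power is written with `exp` and `log` to match the time variable. -/
lemma radial_of_isSol {s : ℝ} (hap : a * (p - 1) = a + 2 - s) (hl : l = a + 2 - a * q)
    {W Z : ℝ → ℝ} {T₁ : ℝ} (hs : IsSol a p q l μ (Iio T₁) W Z) (hW : ∀ t < T₁, 0 < W t) :
    ∃ v₁ v₂ : ℝ → ℝ, ContinuousOn v₂ (Ioo 0 (Real.exp T₁)) ∧ ∀ r ∈ Ioo 0 (Real.exp T₁),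
      HasDerivAt (fun r => Real.exp (-a * Real.log r) * W (Real.log r)) (v₁ r) r ∧
      HasDerivAt v₁ (v₂ r) r ∧
      v₂ r + (2 * a + 1) / r * v₁ r
        + r ^ (-s) * (Real.exp (-a * Real.log r) * W (Real.log r)) ^ (p - 1)
        - μ * (Real.exp (-a * Real.log r) * W (Real.log r)) ^ q = 0 := by
  have hlog : ∀ r ∈ Ioo 0 (Real.exp T₁), Real.log r < T₁ := fun r hr =>
    (Real.log_lt_iff_lt_exp hr.1).2 hr.2
  refine ⟨fun r => r⁻¹ * (Real.exp (-a * Real.log r) * (Z (Real.log r) - a * W (Real.log r))),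
    fun r => (r ^ 2)⁻¹ * (Real.exp (-a * Real.log r) *
      (force a p q l μ (Real.log r) (W (Real.log r)) - (2 * a + 1) * Z (Real.log r)
        + a * (a + 1) * W (Real.log r))), ?_, fun r hr => ⟨?_, ?_, ?_⟩⟩
  · have hlc : ContinuousOn (fun r => Real.log r) (Ioo 0 (Real.exp T₁)) :=
      Real.continuousOn_log.mono fun r hr => hr.1.ne'
    have hWc : ContinuousOn (fun r => W (Real.log r)) (Ioo 0 (Real.exp T₁)) :=
      fun r hr => ((hs _ (hlog r hr)).1.continuousAt.comp
        (Real.continuousAt_log hr.1.ne')).continuousWithinAt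
    have hZc : ContinuousOn (fun r => Z (Real.log r)) (Ioo 0 (Real.exp T₁)) :=
      fun r hr => ((hs _ (hlog r hr)).2.continuousAt.comp
        (Real.continuousAt_log hr.1.ne')).continuousWithinAt
    have hWp : ∀ e : ℝ, ContinuousOn (fun r => W (Real.log r) ^ e) (Ioo 0 (Real.exp T₁)) :=
      fun e => hWc.rpow_const fun r hr => Or.inl (hW _ (hlog r hr)).ne'
    have hinv : ContinuousOn (fun r : ℝ => (r ^ 2)⁻¹) (Ioo 0 (Real.exp T₁)) :=
      (continuous_pow 2).continuousOn.inv₀ fun r hr => (pow_pos hr.1 2).ne'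
    have hexpc : ∀ e : ℝ, ContinuousOn (fun r => Real.exp (e * Real.log r))
        (Ioo 0 (Real.exp T₁)) := fun e => (continuousOn_const.mul hlc).rexp
    unfold force
    exact hinv.mul ((hexpc (-a)).mul (((((continuousOn_const.mul hWc).sub (hWp _)).add
      ((continuousOn_const.mul (hexpc l)).mul (hWp q))).sub (continuousOn_const.mul hZc)).add
      (continuousOn_const.mul hWc)))
  all_goals
    have hr0 : r ≠ 0 := hr.1.ne'
    have hln := Real.hasDerivAt_log hr0
    have hexp : HasDerivAt (fun r => Real.exp (-a * Real.log r))
      (Real.exp (-a * Real.log r) * (-a * r⁻¹)) r := (hln.const_mul (-a)).exp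
    have hWd := (hs _ (hlog r hr)).1.comp r hln
    have hZd := (hs _ (hlog r hr)).2.comp r hln
  · refine (hexp.mul hWd).congr_deriv ?_
    simp only [Function.comp_apply]
    ring
  · refine ((hasDerivAt_inv hr0).mul (hexp.mul (hZd.sub (hWd.const_mul a)))).congr_deriv ?_
    simp only [Function.comp_apply, Pi.mul_apply, Pi.sub_apply]
    field_simp
    ring
  · have hsrc := exp_mul_source (μ := μ) (t := Real.log r) (U := Real.exp (-a * Real.log r) *
      W (Real.log r)) hap hl (mul_pos (Real.exp_pos _) (hW _ (hlog r hr)))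
    have hinv : Real.exp (a * Real.log r) * Real.exp (-a * Real.log r) = 1 := by
      rw [← Real.exp_add]; simp
    rw [← mul_assoc, hinv, one_mul, Real.exp_log hr.1] at hsrc
    set V := Real.exp (-a * Real.log r) * W (Real.log r) with hV
    have hsrc' : -(r ^ (-s) * V ^ (p - 1)) + μ * V ^ q
        = (r ^ 2)⁻¹ * (Real.exp (-a * Real.log r) *
          (force a p q l μ (Real.log r) (W (Real.log r)) - a ^ 2 * W (Real.log r))) := by
      rw [← hsrc]
      have : (r ^ 2)⁻¹ * r ^ 2 = 1 := inv_mul_cancel₀ (pow_ne_zero 2 hr0)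
      linear_combination (-(-(r ^ (-s) * V ^ (p - 1)) + μ * V ^ q)) *
        (this + (r ^ 2)⁻¹ * r ^ 2 * hinv)
    have hpow : 1 / r * r⁻¹ = (r ^ 2)⁻¹ := by field_simp
    linear_combination -hsrc' + (2 * a + 1) * (Real.exp (-a * Real.log r) *
      (Z (Real.log r) - a * W (Real.log r))) * hpow

lemma contDiffOn_two_of_hasDerivAt {f f₁ f₂ : ℝ → ℝ} {S : Set ℝ} (hS : IsOpen S)
    (hf : ∀ x ∈ S, HasDerivAt f (f₁ x) x) (hf₁ : ∀ x ∈ S, HasDerivAt f₁ (f₂ x) x)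
    (hf₂ : ContinuousOn f₂ S) : ContDiffOn ℝ 2 f S := by
  have h1 : ContDiffOn ℝ 1 f₁ S := by
    rw [show (1 : WithTop ℕ∞) = 0 + 1 by norm_num, contDiffOn_succ_iff_deriv_of_isOpen hS]
    refine ⟨fun x hx => (hf₁ x hx).differentiableAt.differentiableWithinAt, by simp, ?_⟩
    exact contDiffOn_zero.2 (hf₂.congr fun x hx => (hf₁ x hx).deriv)
  rw [show (2 : WithTop ℕ∞) = 1 + 1 by norm_num, contDiffOn_succ_iff_deriv_of_isOpen hS]
  exact ⟨fun x hx => (hf x hx).differentiableAt.differentiableWithinAt, by simp,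
    h1.congr fun x hx => (hf x hx).deriv⟩

lemma exists_bound_of_upliBound {n : ℕ} {u : ℝ → ℝ} (h : UpliBound n u) :
    ∃ M δ : ℝ, 0 < δ ∧ ∀ r ∈ Ioo 0 δ, r ^ (((n : ℝ) - 2) / 2) * u r ≤ M := by
  obtain ⟨M, hM, hMtop⟩ := exists_between h
  have hev := eventually_lt_of_limsup_lt hM
  obtain ⟨δ, hδ, hsub⟩ := (mem_nhdsGT_iff_exists_Ioo_subset).1 hev
  refine ⟨M.toReal, δ, hδ, fun r hr => ?_⟩
  exact (ENNReal.ofReal_le_iff_le_toReal hMtop.ne).1 (le_of_lt (hsub hr))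

end EmdenFowler

theorem stmt10 (n : ℕ) (hn : 3 ≤ n) (s μ q : ℝ) (hs0 : 0 < s) (hs2 : s < 2)
    (hμ : 0 < μ) (hq1 : 1 < q) (hq2 : q < twoStar n - 1)
    (Λ : ℝ) (hΛ : Lambda0 n s < Λ)
    (R : ℝ) (hR0 : 0 < R) (hR : R < RLambda n s μ q Λ) (u : ℝ → ℝ)
    (hu : IsRadialSol n s μ q (Set.Ioo 0 R) u)
    (hbd : UpliBound n u) :
    ∃ v : ℝ → ℝ,
      IsRadialSol n s μ q (Set.Ioc 0 (RLambda n s μ q Λ)) v ∧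
      Set.EqOn v u (Set.Ioo 0 R) ∧
      ∀ r ∈ Set.Ioc (0 : ℝ) (RLambda n s μ q Λ), r ^ (((n : ℝ) - 2) / 2) * v r < Λ := by
  have hn' : (3 : ℝ) ≤ n := by exact_mod_cast hn
  set a : ℝ := ((n : ℝ) - 2) / 2 with ha_def
  set p : ℝ := twoStarS n s with hp_def
  have ha : 0 < a := by rw [ha_def]; linarith
  have hna : (n : ℝ) = 2 * a + 2 := by rw [ha_def]; ring
  have hpa : p * a = n - s := by
    rw [hp_def, twoStarS, ha_def]
    have : (n : ℝ) - 2 ≠ 0 := by linarith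
    field_simp
  have hp : 2 < p := by
    by_contra! h
    nlinarith
  have hp0 : 0 < p := by linarith
  have hap : a * (p - 1) = a + 2 - s := by linarith
  have hl : lam n q = a + 2 - a * q := by
    rw [lam, twoStar, hna]
    rw [show 2 * a + 2 - 2 = 2 * a by ring]
    field_simp
    ring
  have hl0 : 0 < lam n q := by
    rw [lam]
    have : 0 < (n : ℝ) - 2 := by linarith
    have : 0 < twoStar n - 1 - q := by linarith
    positivity
  -- `Λ₀` is the positive zero of `F₀`.
  have hbase : ((n : ℝ) - 2) * (n - s) / 4 = a ^ 2 * p / 2 := by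
    rw [← hpa, ha_def]; ring
  have hk : 0 < Lambda0 n s := by
    rw [Lambda0, hbase]; positivity
  have hkp : Lambda0 n s ^ (p - 2) = a ^ 2 * p / 2 := by
    rw [Lambda0, hbase, ← Real.rpow_mul (by positivity), one_div,
      inv_mul_cancel₀ (by linarith), Real.rpow_one]
  have hΛ0 : 0 < Λ := hk.trans hΛ
  have hF : F0 n s Λ = a ^ 2 * Λ ^ 2 - 2 / p * Λ ^ p := by
    rw [F0, ha_def]; ring
  have hFneg : F0 n s Λ < 0 := by
    have h1 : a ^ 2 * p / 2 < Λ ^ (p - 2) := by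
      rw [← hkp]; exact Real.rpow_lt_rpow hk.le hΛ (by linarith)
    have h2 : Λ ^ p = Λ ^ 2 * Λ ^ (p - 2) := by
      rw [← Real.rpow_natCast Λ 2, ← Real.rpow_add hΛ0]; congr 1; push_cast; ring
    have h3 : a ^ 2 * Λ ^ 2 = 2 / p * Λ ^ 2 * (a ^ 2 * p / 2) := by field_simp
    have h4 : 2 / p * Λ ^ 2 * (a ^ 2 * p / 2) < 2 / p * Λ ^ 2 * Λ ^ (p - 2) := by gcongr
    rw [hF, h2]
    linarith
  set ρ := RLambda n s μ q Λ with hρ_def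
  have hρ0 : 0 < ρ := hR0.trans hR
  have hρl : Real.exp (lam n q * Real.log ρ)
      = -((q + 1) * F0 n s Λ) / (2 * μ * Λ ^ (q + 1)) := by
    rw [mul_comm, Real.exp_mul, Real.exp_log hρ0, hρ_def, RLambda, ← Real.rpow_mul, one_div,
      inv_mul_cancel₀ hl0.ne', Real.rpow_one]
    have : 0 ≤ -((q + 1) * F0 n s Λ) := by nlinarith
    positivity
  have hT : 2 * μ / (q + 1) * Real.exp (lam n q * Real.log ρ) * Λ ^ (q + 1)
      ≤ 2 / p * Λ ^ p - a ^ 2 * Λ ^ 2 := by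
    rw [hρl]
    have h1 : Λ ^ (q + 1) ≠ 0 := (Real.rpow_pos_of_pos hΛ0 _).ne'
    have h2 : q + 1 ≠ 0 := by linarith
    have h3 : 2 * μ / (q + 1) * (-((q + 1) * F0 n s Λ) / (2 * μ * Λ ^ (q + 1))) * Λ ^ (q + 1)
        = -F0 n s Λ := by field_simp
    rw [h3, hF]
    linarith
  obtain ⟨huC, hupos, hueq⟩ := hu
  have himg : ∀ t ∈ Iio (Real.log R), Real.exp t ∈ Ioo 0 R := fun t ht =>
    ⟨Real.exp_pos t, (Real.lt_log_iff_exp_lt hR0).1 ht⟩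
  obtain ⟨hud, -, hudC⟩ := (contDiffOn_succ_iff_deriv_of_isOpen (n := 1) isOpen_Ioo).1
    (by simpa [one_add_one_eq_two] using huC)
  have hsol : EmdenFowler.IsSol a p q (lam n q) μ (Iio (Real.log R)) _ _ :=
    EmdenFowler.isSol_of_radial (u := u) (u₁ := deriv u) (u₂ := deriv (deriv u)) hap hl himg
      (fun r hr =>
        (hud.differentiableAt (isOpen_Ioo.mem_nhds hr)).hasDerivAt)
      (fun r hr =>
        ((hudC.differentiableOn one_ne_zero).differentiableAt
          (isOpen_Ioo.mem_nhds hr)).hasDerivAt)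
      hupos
      (fun r hr => by
        have := hueq r hr
        rw [radialEq, ← hp_def, hna] at this
        rw [← this]
        ring)
  obtain ⟨M, δ, hδ, hM⟩ := EmdenFowler.exists_bound_of_upliBound hbd
  rw [← ha_def] at hM
  obtain ⟨T₁, hT₁, W, Z, hWs, hWpos, hWΛ, hWeq⟩ := EmdenFowler.exists_extension ha hp hq1 hl0 hμ hk
    hkp hΛ hT (Real.log_lt_log hR0 hR) hsol
    (fun t ht => mul_pos (Real.exp_pos _) (hupos _ (himg t ht)))
    (min_le_right (Real.log δ) (Real.log R)) (M := M) (fun t ht => by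
      have h := hM (Real.exp t) ⟨Real.exp_pos t,
        (Real.lt_log_iff_exp_lt hδ).1 (ht.trans_le (min_le_left _ _))⟩
      rwa [← Real.exp_mul, mul_comm t] at h)
  obtain ⟨v₁, v₂, hv₂, hv⟩ := EmdenFowler.radial_of_isSol hap hl hWs hWpos
  have hsub : Ioc 0 ρ ⊆ Ioo 0 (Real.exp T₁) := fun r hr =>
    ⟨hr.1, hr.2.trans_lt ((Real.log_lt_iff_lt_exp hρ0).1 hT₁)⟩
  have hlog : ∀ r ∈ Ioc 0 ρ, Real.log r < T₁ := fun r hr =>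
    (Real.log_le_log hr.1 hr.2).trans_lt hT₁
  refine ⟨fun r => Real.exp (-a * Real.log r) * W (Real.log r), ⟨?_, ?_, ?_⟩, ?_, ?_⟩
  · exact (EmdenFowler.contDiffOn_two_of_hasDerivAt isOpen_Ioo (fun r hr => (hv r hr).1)
      (fun r hr => (hv r hr).2.1) hv₂).mono hsub
  · exact fun r hr => mul_pos (Real.exp_pos _) (hWpos _ (hlog r hr))
  · intro r hr
    have hr' := hsub hr
    obtain ⟨h1, h2, h3⟩ := hv r hr'
    have hd : deriv (fun r => Real.exp (-a * Real.log r) * W (Real.log r)) =ᶠ[𝓝 r] v₁ := by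
      filter_upwards [isOpen_Ioo.mem_nhds hr'] with x hx using (hv x hx).1.deriv
    rw [radialEq, hd.deriv_eq, h1.deriv, h2.deriv, ← hp_def, hna]
    rw [← h3]
    ring
  · intro r hr
    have hWr : W (Real.log r) = Real.exp (a * Real.log r) * u (Real.exp (Real.log r)) :=
      hWeq (Real.log_lt_log hr.1 hr.2)
    simp only
    rw [hWr, Real.exp_log hr.1, ← mul_assoc, ← Real.exp_add]
    simp
  · intro r hr
    have h : r ^ a = Real.exp (a * Real.log r) := by rw [Real.rpow_def_of_pos hr.1, mul_comm]
    simp only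
    rw [h, ← mul_assoc, ← Real.exp_add]
    simpa using hWΛ _ (hlog r hr)
end
end

section
/- Let 1 < q < 2* − 1 and assume moreover q > 2* − 2. Then there exist R > 0 and a positive radial solution u of (E) on (0,R) such that liminf_{r→0⁺} r^{(n−2)/2} u(r) = 0 and 0 < limsup_{r→0⁺} r^{(n−2)/2} u(r) < ∞ (a multi-bump (MB) solution). -/
/-!
In the Emden–Fowler variables `u r = r ^ (-a) * v (-log r)`, `a = (n - 2) / 2`, the equation becomes
`v'' = a² v - v ^ p + μ e ^ (-κ t) v ^ q` with `p = 2*(s) - 1` and `κ = a (2* - 1 - q)`, and the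
hypotheses on `q` say exactly that `0 < κ < a`. A solution is needed on a half line which is positive
and bounded, comes arbitrarily close to `0` and keeps returning to some height `δ > 0`.

The Hamiltonian `F = v'² / 2 - a² v² / 2 + v ^ (p + 1) / (p + 1) - μ e ^ (-κ t) v ^ (q + 1) / (q + 1)`
is nondecreasing in time. Its level `0` for `μ = 0` is the homoclinic orbit of the saddle `0`, with
maximum `V0`. After a shift of time `μ` is small, and then `F < 0` confines `(v, v')` to a bounded
region with `v > 0` (`Par.region`); outside of it the system is truncated, which makes all solutions
global.

For large `T` take the solution through `(V0, 0)` at time `T`. There `F` is negative of order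
`e ^ (-κ T)` (`Par.F_start`), hence `F < 0` on `[0, T]`. Since all gains of `F` after time `t` are
`O(e ^ (-κ t))`, moreover `F t = O(e ^ (-κ t))` uniformly in `T` (`Par.IsTraj.F_lower`). The main
estimate is `Par.gap`: the time between bumps is bounded independently of `T`. A bump at time `s`
raises `F` by at least `c e ^ (-κ s)`, so before it `-F ≥ c e ^ (-κ s)`, which keeps `v` above a
multiple of `e ^ (-κ s / 2)`; but near the saddle, where `v'' ≥ b² v` with `κ < b < a`, an excursion of
length `L` ending at height of order one comes as low as a multiple of `e ^ (-b L / 2)`, and this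
bounds `L`.

Hence a limit of these solutions as `T → ∞` (`Par.exists_limit`) still has recurrent bumps, while its
Hamiltonian is negative and tends to `0`. It cannot stay above a level `ε > 0`: if it did, `v' / v`
would have derivative about `-(p - 1) / (p + 1) * v ^ (p - 1)`, and this bounded quantity would
decrease to `-∞` (`Par.IsTraj.exists_small`).
-/

open Filter Set Real
open scoped Topology ENNReal

noncomputable section

/-! ### Ordinary differential equations with bounded Lipschitz right-hand side -/

/-- Global existence for a bounded, globally Lipschitz, time-continuous vector field. The bound lets
the Picard–Lindelöf theorem run on `[-N, N]` in a single step, and uniqueness glues these pieces. -/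
theorem exists_global_solution {E : Type*} [NormedAddCommGroup E] [NormedSpace ℝ E]
    [CompleteSpace E] (f : ℝ → E → E) (K M : NNReal) (hK : ∀ t, LipschitzWith K (f t))
    (hM : ∀ t x, ‖f t x‖ ≤ M) (hc : ∀ x, Continuous (fun t => f t x)) (t₀ : ℝ) (x₀ : E) :
    ∃ X : ℝ → E, X t₀ = x₀ ∧ ∀ t, HasDerivAt X (f t (X t)) t := by
  have key : ∀ N : ℕ, ∃ X : ℝ → E, X t₀ = x₀ ∧
      ∀ t ∈ Ioo (t₀ - (N + 1)) (t₀ + (N + 1)), HasDerivAt X (f t (X t)) t := by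
    intro N
    have hN : (0 : ℝ) < N + 1 := by positivity
    have hmem : t₀ ∈ Icc (t₀ - (N + 1 : ℝ)) (t₀ + (N + 1)) := ⟨by linarith, by linarith⟩
    have hpl : IsPicardLindelof f (⟨t₀, hmem⟩ : Icc (t₀ - (N + 1 : ℝ)) (t₀ + (N + 1))) x₀
        (M * (N + 1)) 0 M K := by
      refine ⟨fun t _ => (hK t).lipschitzOnWith, fun x _ => (hc x).continuousOn,
        fun t _ x _ => hM t x, ?_⟩
      have : max (t₀ + ((N : ℝ) + 1) - t₀) (t₀ - (t₀ - ((N : ℝ) + 1))) = N + 1 := by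
        rw [show t₀ + ((N : ℝ) + 1) - t₀ = N + 1 by ring,
          show t₀ - (t₀ - ((N : ℝ) + 1)) = N + 1 by ring, max_self]
      simp only [this]
      push_cast
      simp
    obtain ⟨X, hX0, hX⟩ := hpl.exists_eq_forall_mem_Icc_hasDerivWithinAt₀
    exact ⟨X, hX0, fun t ht => (hX t (Ioo_subset_Icc_self ht)).hasDerivAt
      (Icc_mem_nhds ht.1 ht.2)⟩
  choose Y hY0 hY using key
  have agree : ∀ N L : ℕ, N ≤ L →
      EqOn (Y N) (Y L) (Ioo (t₀ - (N + 1 : ℝ)) (t₀ + (N + 1))) := by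
    intro N L h
    have hNL : (N : ℝ) ≤ L := by exact_mod_cast h
    have hN : (0 : ℝ) < N + 1 := by positivity
    refine ODE_solution_unique_of_mem_Ioo (v := f) (s := fun _ => univ) (K := K) (t₀ := t₀)
      (fun t _ => (hK t).lipschitzOnWith) ⟨by linarith, by linarith⟩
      (fun t ht => ⟨hY N t ht, trivial⟩) (fun t ht => ⟨hY L t ⟨?_, ?_⟩, trivial⟩)
      (by rw [hY0, hY0])
    · linarith [ht.1]
    · linarith [ht.2]
  have agree' : ∀ N L : ℕ, ∀ t, |t - t₀| < N + 1 → |t - t₀| < L + 1 → Y N t = Y L t := by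
    intro N L t h1 h2
    rw [abs_lt] at h1 h2
    rcases le_total N L with h | h
    · exact agree N L h ⟨by linarith, by linarith⟩
    · exact (agree L N h ⟨by linarith, by linarith⟩).symm
  refine ⟨fun t => Y ⌈|t - t₀|⌉₊ t, hY0 _, fun t => ?_⟩
  set N := ⌈|t - t₀|⌉₊ with hN
  have h1 : |t - t₀| < N + 1 := (Nat.le_ceil _).trans_lt (by linarith)
  have h2 : HasDerivAt (Y N) (f t (Y N t)) t := by
    refine hY N t ?_
    rw [abs_lt] at h1
    exact ⟨by linarith, by linarith⟩
  refine h2.congr_of_eventuallyEq ?_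
  have : ∀ᶠ τ in 𝓝 t, |τ - t₀| < N + 1 := by
    have hcont : Continuous fun τ : ℝ => |τ - t₀| := by fun_prop
    exact hcont.continuousAt.eventually_lt continuousAt_const h1
  filter_upwards [this] with τ hτ
  exact agree' _ _ τ ((Nat.le_ceil _).trans_lt (by linarith)) hτ

/-- Forward continuous dependence on the initial value (Grönwall). -/
theorem dist_solutions_le {E : Type*} [NormedAddCommGroup E] [NormedSpace ℝ E]
    (f : ℝ → E → E) (K : NNReal) (hK : ∀ t, LipschitzWith K (f t)) (X Y : ℝ → E)
    (hX : ∀ t, HasDerivAt X (f t (X t)) t) (hY : ∀ t, HasDerivAt Y (f t (Y t)) t)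
    (t : ℝ) (ht : 0 ≤ t) :
    dist (X t) (Y t) ≤ dist (X 0) (Y 0) * exp (K * t) := by
  have := dist_le_of_trajectories_ODE (v := f) (K := K) (a := 0) (b := t) hK
    (fun s _ => (hX s).continuousAt.continuousWithinAt)
    (fun s _ => (hX s).hasDerivWithinAt)
    (fun s _ => (hY s).continuousAt.continuousWithinAt)
    (fun s _ => (hY s).hasDerivWithinAt) le_rfl t ⟨ht, le_rfl⟩
  simpa using this

/-! ### Truncations and primitives -/

/-- Truncation of `x` to the interval `[l, h]`. -/
def clip (l h x : ℝ) : ℝ := max l (min h x)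

theorem clip_continuous (l h : ℝ) : Continuous (clip l h) := by unfold clip; fun_prop

theorem clip_lipschitz (l h : ℝ) : LipschitzWith 1 (clip l h) :=
  (LipschitzWith.id.const_min h).const_max l

theorem clip_mem {l h : ℝ} (hlh : l ≤ h) (x : ℝ) : clip l h x ∈ Icc l h := by
  unfold clip; constructor <;> simp [hlh]

theorem clip_of_mem {l h x : ℝ} (h1 : l ≤ x) (h2 : x ≤ h) : clip l h x = x := by
  unfold clip; rw [min_eq_right h2, max_eq_right h1]

theorem clip_of_le {l h x : ℝ} (hlh : l ≤ h) (h1 : x ≤ l) : clip l h x = l := by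
  unfold clip; rw [min_eq_right (h1.trans hlh), max_eq_left h1]

theorem clip_of_ge {l h x : ℝ} (hlh : l ≤ h) (h1 : h ≤ x) : clip l h x = h := by
  unfold clip; rw [min_eq_left h1, max_eq_right hlh]

/-- The primitive of `g` vanishing at the origin. -/
def prim (g : ℝ → ℝ) (x : ℝ) : ℝ := ∫ y in (0 : ℝ)..x, g y

theorem prim_hasDerivAt {g : ℝ → ℝ} (hg : Continuous g) (x : ℝ) :
    HasDerivAt (prim g) (g x) x :=
  intervalIntegral.integral_hasDerivAt_right (hg.intervalIntegrable _ _)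
    hg.aestronglyMeasurable.stronglyMeasurableAtFilter hg.continuousAt

theorem prim_continuous {g : ℝ → ℝ} (hg : Continuous g) : Continuous (prim g) :=
  continuous_iff_continuousAt.2 fun x => (prim_hasDerivAt hg x).continuousAt

theorem prim_zero (g : ℝ → ℝ) : prim g 0 = 0 := by simp [prim]

theorem prim_sub_le {g k : ℝ → ℝ} (hg : Continuous g) (hk : Continuous k) {x y : ℝ} (hxy : x ≤ y)
    (h : ∀ z ∈ Icc x y, g z ≤ k z) : prim g y - prim g x ≤ prim k y - prim k x := by
  unfold prim
  rw [intervalIntegral.integral_interval_sub_left (hg.intervalIntegrable _ _)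
    (hg.intervalIntegrable _ _), intervalIntegral.integral_interval_sub_left
    (hk.intervalIntegrable _ _) (hk.intervalIntegrable _ _)]
  exact intervalIntegral.integral_mono_on hxy (hg.intervalIntegrable _ _)
    (hk.intervalIntegrable _ _) h

theorem prim_congr {g k : ℝ → ℝ} {x : ℝ} (hx : 0 ≤ x) (h : ∀ z ∈ Icc 0 x, g z = k z) :
    prim g x = prim k x := by
  unfold prim
  refine intervalIntegral.integral_congr fun z hz => h z ?_
  rwa [uIcc_of_le hx] at hz

/-- A primitive computed from any antiderivative of the integrand. -/
theorem prim_eq_of_hasDerivAt {g G : ℝ → ℝ} (hg : Continuous g) {x : ℝ}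
    (h : ∀ z, HasDerivAt G (g z) z) : prim g x = G x - G 0 := by
  unfold prim
  exact intervalIntegral.integral_eq_sub_of_hasDerivAt (fun z _ => h z)
    (hg.intervalIntegrable _ _)

theorem prim_of_nonpos {g : ℝ → ℝ} {x : ℝ} (hx : x ≤ 0) (h : ∀ z ≤ 0, g z = 0) :
    prim g x = 0 := by
  unfold prim
  rw [intervalIntegral.integral_congr (g := fun _ => 0)]
  · simp
  · intro z hz
    rw [uIcc_of_ge hx] at hz
    exact h z hz.2

theorem rpow_lipschitz_clip {p V : ℝ} (hp : 1 ≤ p) (hV : 0 ≤ V) :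
    ∃ K : NNReal, LipschitzWith K (fun x : ℝ => clip 0 V x ^ p) := by
  have h1 : LipschitzOnWith (p * V ^ (p - 1)).toNNReal (fun x : ℝ => x ^ p) (Icc 0 V) := by
    refine (convex_Icc 0 V).lipschitzOnWith_of_nnnorm_hasDerivWithin_le
      (f' := fun x => p * x ^ (p - 1)) (fun x _ =>
        (hasDerivAt_rpow_const (Or.inr hp)).hasDerivWithinAt) fun x hx => ?_
    rw [← NNReal.coe_le_coe, Real.coe_toNNReal _ (by positivity), coe_nnnorm, Real.norm_eq_abs,
      abs_of_nonneg (mul_nonneg (by linarith) (rpow_nonneg hx.1 _))]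
    exact mul_le_mul_of_nonneg_left (rpow_le_rpow hx.1 hx.2 (by linarith)) (by linarith)
  refine ⟨(p * V ^ (p - 1)).toNNReal * 1, ?_⟩
  rw [← lipschitzOnWith_univ]
  exact h1.comp ((clip_lipschitz 0 V).lipschitzOnWith (s := univ)) fun x _ => clip_mem hV x

/-! ### The truncated Hamiltonian system -/

/-- Parameters of the Emden–Fowler equation `v'' = a² v - v ^ p + μ e ^ (-κ t) v ^ q`, together with
truncation levels: `2 * V0` for `v` and `W` for `v'`. The level `V0` is the height of the homoclinic
orbit of the autonomous equation, and the last three fields express that `μ` is small and `W`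
large. -/
structure Par where
  (a p q κ μ V0 W : ℝ)
  ha : 0 < a
  hp : 1 < p
  hq : 1 < q
  hκ : 0 < κ
  hκa : κ < a
  hμ : 0 < μ
  hV0 : 0 < V0
  hW : 0 < W
  hV0eq : V0 ^ (p - 1) = (p + 1) * a ^ 2 / 2
  h1 : a ^ 2 * (2 * V0) - (2 * V0) ^ p + μ * (2 * V0) ^ q ≤ 0
  h2 : a ^ 2 * (2 * V0) ^ 2 / 2 - (2 * V0) ^ (p + 1) / (p + 1)
    + μ * ((2 * V0) ^ (q + 1) / (q + 1)) ≤ 0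
  h3 : a ^ 2 * (2 * V0) ^ 2 / 2 + μ * ((2 * V0) ^ (q + 1) / (q + 1)) ≤ W ^ 2 / 2

namespace Par

variable (P : Par)

/-- The truncation level for `v`. -/
def V : ℝ := 2 * P.V0

/-- The truncation of the autonomous force `x ↦ a² x - x ^ p`. -/
def al (x : ℝ) : ℝ := P.a ^ 2 * clip 0 P.V x - clip 0 P.V x ^ P.p

/-- The truncation of `x ↦ x ^ q`. -/
def be (x : ℝ) : ℝ := clip 0 P.V x ^ P.q

/-- The truncated velocity. -/
def sg (y : ℝ) : ℝ := clip (-P.W) P.W y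

/-- The coefficient `μ e ^ (-κ t)`, frozen for `t ≤ 0` so as to be bounded. -/
def m (t : ℝ) : ℝ := P.μ * exp (-P.κ * max t 0)

/-- The truncated system for `(v, v')`, as a vector field on the plane. -/
def f (t : ℝ) (x : ℝ × ℝ) : ℝ × ℝ := (P.sg x.2, P.al x.1 + P.m t * P.be x.1)

/-- The Hamiltonian of the truncated system. -/
def F (t : ℝ) (x : ℝ × ℝ) : ℝ := prim P.sg x.2 - prim P.al x.1 - P.m t * prim P.be x.1

theorem V_pos : 0 < P.V := by have := P.hV0; unfold V; linarith

theorem al_cont : Continuous P.al := by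
  unfold al
  have := clip_continuous 0 P.V
  exact (continuous_const.mul this).sub (this.rpow_const fun _ => Or.inr (by linarith [P.hp]))

theorem be_cont : Continuous P.be :=
  (clip_continuous 0 P.V).rpow_const fun _ => Or.inr (by linarith [P.hq])

theorem sg_cont : Continuous P.sg := clip_continuous _ _

theorem m_cont : Continuous P.m := by unfold m; fun_prop

theorem m_pos (t : ℝ) : 0 < P.m t := mul_pos P.hμ (exp_pos _)

theorem m_le (t : ℝ) : P.m t ≤ P.μ := by
  unfold m
  have : exp (-P.κ * max t 0) ≤ 1 := by
    rw [exp_le_one_iff]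
    have := P.hκ
    have := le_max_right t 0
    nlinarith
  nlinarith [P.hμ]

theorem m_eq {t : ℝ} (ht : 0 ≤ t) : P.m t = P.μ * exp (-P.κ * t) := by
  unfold m; rw [max_eq_left ht]

theorem m_hasDerivAt {t : ℝ} (ht : 0 < t) : HasDerivAt P.m (-P.κ * P.m t) t := by
  have h : HasDerivAt (fun t => P.μ * exp (-P.κ * t)) (P.μ * (exp (-P.κ * t) * (-P.κ * 1))) t :=
    (((hasDerivAt_id t).const_mul (-P.κ)).exp).const_mul P.μ
  rw [P.m_eq ht.le]
  refine (h.congr_of_eventuallyEq ?_).congr_deriv (by ring)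
  filter_upwards [lt_mem_nhds ht] with s hs using P.m_eq hs.le

theorem m_anti {s t : ℝ} (hst : s ≤ t) : P.m t ≤ P.m s := by
  unfold m
  have := P.hκ
  have h : max s 0 ≤ max t 0 := max_le_max_right 0 hst
  have : exp (-P.κ * max t 0) ≤ exp (-P.κ * max s 0) := exp_le_exp.2 (by nlinarith)
  exact mul_le_mul_of_nonneg_left this P.hμ.le

theorem be_nonneg (x : ℝ) : 0 ≤ P.be x := rpow_nonneg (clip_mem P.V_pos.le x).1 _

theorem be_of_nonpos (x : ℝ) (hx : x ≤ 0) : P.be x = 0 := by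
  unfold be
  rw [clip_of_le P.V_pos.le hx, zero_rpow (by linarith [P.hq])]

theorem al_of_nonpos (x : ℝ) (hx : x ≤ 0) : P.al x = 0 := by
  unfold al
  rw [clip_of_le P.V_pos.le hx, zero_rpow (by linarith [P.hp])]
  simp

theorem be_of_mem {x : ℝ} (h0 : 0 ≤ x) (h1 : x ≤ P.V) : P.be x = x ^ P.q := by
  unfold be; rw [clip_of_mem h0 h1]

theorem al_of_mem {x : ℝ} (h0 : 0 ≤ x) (h1 : x ≤ P.V) : P.al x = P.a ^ 2 * x - x ^ P.p := by
  unfold al; rw [clip_of_mem h0 h1]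

theorem be_le (x : ℝ) : P.be x ≤ P.V ^ P.q :=
  rpow_le_rpow (clip_mem P.V_pos.le x).1 (clip_mem P.V_pos.le x).2 (by linarith [P.hq])

theorem prim_be_nonneg (x : ℝ) : 0 ≤ prim P.be x := by
  rcases le_total x 0 with h | h
  · rw [prim_of_nonpos h P.be_of_nonpos]
  · have := prim_sub_le continuous_const P.be_cont h fun z _ => P.be_nonneg z
    simpa [prim] using this

theorem prim_be_mono {x y : ℝ} (h : x ≤ y) : prim P.be x ≤ prim P.be y := by
  have := prim_sub_le continuous_const P.be_cont h fun z _ => P.be_nonneg z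
  simp only [prim, intervalIntegral.integral_zero, sub_zero] at this
  exact sub_nonneg.1 this

theorem prim_rpow {r x : ℝ} (hr : 0 < r) : prim (fun y => y ^ r) x = x ^ (r + 1) / (r + 1) := by
  unfold prim
  rw [integral_rpow (Or.inl (by linarith)), zero_rpow (by linarith)]
  simp

theorem prim_be_of_mem {x : ℝ} (h0 : 0 ≤ x) (h1 : x ≤ P.V) :
    prim P.be x = x ^ (P.q + 1) / (P.q + 1) := by
  rw [← prim_rpow (by linarith [P.hq])]
  exact prim_congr h0 fun z hz => P.be_of_mem hz.1 (hz.2.trans h1)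

theorem prim_al_of_mem {x : ℝ} (h0 : 0 ≤ x) (h1 : x ≤ P.V) :
    prim P.al x = P.a ^ 2 * x ^ 2 / 2 - x ^ (P.p + 1) / (P.p + 1) := by
  have hp := P.hp
  rw [prim_congr (k := fun z => P.a ^ 2 * z - z ^ P.p) h0
    fun z hz => P.al_of_mem hz.1 (hz.2.trans h1)]
  rw [prim_eq_of_hasDerivAt (G := fun z => P.a ^ 2 * z ^ 2 / 2 - z ^ (P.p + 1) / (P.p + 1))]
  · rw [zero_rpow (by linarith)]; simp
  · exact (continuous_const.mul continuous_id).sub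
      (continuous_id.rpow_const fun _ => Or.inr (by linarith))
  · intro z
    have h1 := ((hasDerivAt_pow 2 z).const_mul (P.a ^ 2)).div_const 2
    have h2 := (hasDerivAt_rpow_const (x := z) (p := P.p + 1) (Or.inr (by linarith))).div_const
      (P.p + 1)
    refine (h1.sub h2).congr_deriv ?_
    rw [add_sub_cancel_right]
    have : P.p + 1 ≠ 0 := by linarith
    field_simp
    push_cast
    ring

theorem sg_of_abs_le {y : ℝ} (h : |y| ≤ P.W) : P.sg y = y :=
  clip_of_mem (abs_le.1 h).1 (abs_le.1 h).2

theorem prim_sg_of_abs_le {y : ℝ} (h : |y| ≤ P.W) : prim P.sg y = y ^ 2 / 2 := by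
  have : prim P.sg y = prim (fun z => z) y := by
    unfold prim
    refine intervalIntegral.integral_congr fun z hz => P.sg_of_abs_le ?_
    have := abs_sub_left_of_mem_uIcc hz
    simp only [sub_zero] at this
    exact this.trans h
  rw [this]; simp [prim, integral_id]

theorem prim_sg_ge (y : ℝ) (h : P.W ≤ |y|) : P.W ^ 2 / 2 ≤ prim P.sg y := by
  have hW := P.hW
  have hW' : -P.W ≤ P.W := by linarith
  rcases le_abs.1 h with h | h
  · have h1 := prim_sub_le continuous_const P.sg_cont h (g := fun _ => 0) fun z hz => by
      rw [sg, clip_of_ge hW' hz.1]; exact hW.le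
    rw [P.prim_sg_of_abs_le (abs_of_pos hW).le] at h1
    simp only [prim, intervalIntegral.integral_zero, sub_zero] at h1 ⊢
    linarith
  · have h1 := prim_sub_le P.sg_cont continuous_const (k := fun _ => 0)
      (show y ≤ -P.W by linarith) fun z hz => by
        rw [sg, clip_of_le hW' hz.2]; linarith
    rw [P.prim_sg_of_abs_le (by rw [abs_neg, abs_of_pos hW])] at h1
    simp only [prim, intervalIntegral.integral_zero, sub_zero] at h1 ⊢
    nlinarith

theorem prim_sg_nonneg (y : ℝ) : 0 ≤ prim P.sg y := by
  rcases le_total P.W |y| with h | h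
  · have := P.prim_sg_ge y h; nlinarith [sq_nonneg P.W]
  · rw [P.prim_sg_of_abs_le h]; positivity

/-- The sublevel set `F < 0` lies inside the region where no truncation is active. -/
theorem region {t : ℝ} {x : ℝ × ℝ} (h : P.F t x < 0) : 0 < x.1 ∧ x.1 < P.V ∧ |x.2| < P.W := by
  have hV := P.V_pos
  have hm := P.m_pos t
  have hmμ := P.m_le t
  have hsg := P.prim_sg_nonneg x.2
  have hbV := P.prim_be_of_mem hV.le le_rfl
  have haV := P.prim_al_of_mem hV.le le_rfl
  have h1 := P.h1
  have h2 := P.h2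
  have h3 := P.h3
  rw [show 2 * P.V0 = P.V from rfl] at h1 h2 h3
  have hbV0 := P.prim_be_nonneg P.V
  have hx0 : 0 < x.1 := by
    by_contra! hx
    rw [F, prim_of_nonpos hx P.al_of_nonpos, prim_of_nonpos hx P.be_of_nonpos] at h
    linarith
  have hxV : x.1 < P.V := by
    by_contra! hx
    have hcomb : prim P.al x.1 + P.μ * prim P.be x.1 ≤ prim P.al P.V + P.μ * prim P.be P.V := by
      have e1 := prim_sub_le P.al_cont continuous_const (k := fun _ => P.al P.V) hx fun z hz => by
        unfold al; rw [clip_of_ge hV.le hz.1, clip_of_ge hV.le le_rfl]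
      have e2 := prim_sub_le P.be_cont continuous_const (k := fun _ => P.be P.V) hx fun z hz => by
        unfold be; rw [clip_of_ge hV.le hz.1, clip_of_ge hV.le le_rfl]
      have e3 : P.al P.V + P.μ * P.be P.V ≤ 0 := by
        rw [P.al_of_mem hV.le le_rfl, P.be_of_mem hV.le le_rfl]; exact h1
      simp only [prim, intervalIntegral.integral_const, smul_eq_mul, sub_zero] at e1 e2 ⊢
      nlinarith [P.hμ]
    have hb := P.prim_be_nonneg x.1
    have : P.m t * prim P.be x.1 ≤ P.μ * prim P.be x.1 := mul_le_mul_of_nonneg_right hmμ hb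
    unfold F at h
    rw [haV, hbV] at hcomb
    linarith
  refine ⟨hx0, hxV, ?_⟩
  by_contra! hx
  have e1 := P.prim_sg_ge _ hx
  have e2 := P.prim_be_mono hxV.le
  have e3 : prim P.al x.1 ≤ P.a ^ 2 * P.V ^ 2 / 2 := by
    have hpp : 0 < P.p + 1 := by linarith [P.hp]
    rw [P.prim_al_of_mem hx0.le hxV.le]
    have : 0 ≤ x.1 ^ (P.p + 1) / (P.p + 1) := by positivity
    have : P.a ^ 2 * x.1 ^ 2 ≤ P.a ^ 2 * P.V ^ 2 := by gcongr
    linarith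
  have e4 : P.m t * prim P.be x.1 ≤ P.μ * prim P.be P.V :=
    mul_le_mul hmμ e2 (P.prim_be_nonneg _) P.hμ.le
  unfold F at h
  rw [hbV] at e4
  linarith

theorem F_cont (t : ℝ) : Continuous (P.F t) := by
  unfold F
  have h1 := (prim_continuous P.sg_cont).comp (continuous_snd (X := ℝ) (Y := ℝ))
  have h2 := (prim_continuous P.al_cont).comp (continuous_fst (X := ℝ) (Y := ℝ))
  have h3 := (prim_continuous P.be_cont).comp (continuous_fst (X := ℝ) (Y := ℝ))
  exact (h1.sub h2).sub (continuous_const.mul h3)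

theorem f_lipschitz : ∃ K : NNReal, ∀ t, LipschitzWith K (P.f t) := by
  obtain ⟨K1, hK1⟩ := rpow_lipschitz_clip (p := P.p) P.hp.le P.V_pos.le
  obtain ⟨K2, hK2⟩ := rpow_lipschitz_clip (p := P.q) P.hq.le P.V_pos.le
  have hc := (clip_lipschitz 0 P.V)
  have hal : LipschitzWith (‖P.a ^ 2‖₊ * 1 + K1) P.al :=
    LipschitzWith.sub ((lipschitzWith_smul (P.a ^ 2)).comp hc) hK1
  refine ⟨max (1 * 1) ((‖P.a ^ 2‖₊ * 1 + K1) * 1 + P.μ.toNNReal * K2 * 1), fun t => ?_⟩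
  have hmb : LipschitzWith (P.μ.toNNReal * K2) (fun x => P.m t * P.be x) := by
    have h := (lipschitzWith_smul (P.m t)).comp hK2
    refine h.weaken (mul_le_mul_left ?_ K2)
    rw [← NNReal.coe_le_coe, Real.coe_toNNReal _ P.hμ.le, coe_nnnorm, Real.norm_eq_abs,
      abs_of_pos (P.m_pos t)]
    exact P.m_le t
  exact ((clip_lipschitz (-P.W) P.W).comp LipschitzWith.prod_snd).prodMk
    ((hal.comp LipschitzWith.prod_fst).add (hmb.comp LipschitzWith.prod_fst))

theorem f_bounded : ∃ M : NNReal, ∀ t x, ‖P.f t x‖ ≤ M := by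
  have hV := P.V_pos
  refine ⟨(max P.W (P.a ^ 2 * P.V + P.V ^ P.p + P.μ * P.V ^ P.q)).toNNReal, fun t x => ?_⟩
  rw [Real.coe_toNNReal _ (le_max_of_le_left P.hW.le), Prod.norm_def]
  refine max_le_max ?_ ?_
  · rw [Real.norm_eq_abs, abs_le]
    exact clip_mem (by linarith [P.hW]) _
  · have hc := clip_mem hV.le x.1
    have e1 : clip 0 P.V x.1 ^ P.p ≤ P.V ^ P.p := rpow_le_rpow hc.1 hc.2 (by linarith [P.hp])
    have e2 : 0 ≤ clip 0 P.V x.1 ^ P.p := rpow_nonneg hc.1 _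
    have e3 : P.m t * P.be x.1 ≤ P.μ * P.V ^ P.q :=
      mul_le_mul (P.m_le t) (P.be_le _) (P.be_nonneg _) P.hμ.le
    have e4 : 0 ≤ P.m t * P.be x.1 := mul_nonneg (P.m_pos t).le (P.be_nonneg _)
    have e5 : 0 ≤ P.a ^ 2 * clip 0 P.V x.1 := mul_nonneg (sq_nonneg _) hc.1
    have e6 : P.a ^ 2 * clip 0 P.V x.1 ≤ P.a ^ 2 * P.V :=
      mul_le_mul_of_nonneg_left hc.2 (sq_nonneg _)
    have e7 : 0 ≤ P.V ^ P.q := rpow_nonneg hV.le _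
    have e8 := P.hμ
    rw [Real.norm_eq_abs]
    change |P.al x.1 + P.m t * P.be x.1| ≤ _
    rw [abs_le]
    unfold al
    constructor <;> nlinarith

theorem f_time_cont (x : ℝ × ℝ) : Continuous fun t => P.f t x := by
  unfold f
  exact continuous_const.prodMk (continuous_const.add (P.m_cont.mul continuous_const))

/-- A trajectory of the truncated system, defined for all times. -/
def IsTraj (X : ℝ → ℝ × ℝ) : Prop := ∀ t, HasDerivAt X (P.f t (X t)) t

theorem exists_traj (t₀ : ℝ) (x₀ : ℝ × ℝ) : ∃ X, X t₀ = x₀ ∧ P.IsTraj X := by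
  obtain ⟨K, hK⟩ := P.f_lipschitz
  obtain ⟨M, hM⟩ := P.f_bounded
  exact exists_global_solution P.f K M hK hM P.f_time_cont t₀ x₀

variable {P} {X : ℝ → ℝ × ℝ}

theorem IsTraj.cont (hX : P.IsTraj X) : Continuous X :=
  continuous_iff_continuousAt.2 fun t => (hX t).continuousAt

theorem IsTraj.d1 (hX : P.IsTraj X) (t : ℝ) :
    HasDerivAt (fun s => (X s).1) (P.sg (X t).2) t := (hX t).fst

theorem IsTraj.d2 (hX : P.IsTraj X) (t : ℝ) :
    HasDerivAt (fun s => (X s).2) (P.al (X t).1 + P.m t * P.be (X t).1) t := (hX t).snd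

/-- Along a trajectory the Hamiltonian changes only through its explicit dependence on time. -/
theorem IsTraj.F_hasDerivAt (hX : P.IsTraj X) {t : ℝ} (ht : 0 < t) :
    HasDerivAt (fun s => P.F s (X s)) (P.κ * P.m t * prim P.be (X t).1) t := by
  have h1 := (prim_hasDerivAt P.sg_cont (X t).2).comp t (hX.d2 t)
  have h2 := (prim_hasDerivAt P.al_cont (X t).1).comp t (hX.d1 t)
  have h3 := (prim_hasDerivAt P.be_cont (X t).1).comp t (hX.d1 t)
  refine ((h1.sub h2).sub ((P.m_hasDerivAt ht).mul h3)).congr_deriv ?_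
  simp only [Function.comp]
  ring

theorem IsTraj.F_continuous (hX : P.IsTraj X) : Continuous fun s => P.F s (X s) := by
  have hc := hX.cont
  have h1 := (prim_continuous P.sg_cont).comp (continuous_snd.comp hc)
  have h2 := (prim_continuous P.al_cont).comp (continuous_fst.comp hc)
  have h3 := (prim_continuous P.be_cont).comp (continuous_fst.comp hc)
  exact (h1.sub h2).sub (P.m_cont.mul h3)

theorem IsTraj.F_mono (hX : P.IsTraj X) : MonotoneOn (fun s => P.F s (X s)) (Ici 0) := by
  refine monotoneOn_of_hasDerivWithinAt_nonneg (convex_Ici 0) hX.F_continuous.continuousOn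
    (f' := fun t => P.κ * P.m t * prim P.be (X t).1) ?_ ?_
  · intro t ht
    rw [interior_Ici] at ht
    exact (hX.F_hasDerivAt ht).hasDerivWithinAt
  · intro t _
    exact mul_nonneg (mul_nonneg P.hκ.le (P.m_pos t).le) (P.prim_be_nonneg _)

theorem IsTraj.F_neg_of_le (hX : P.IsTraj X) {s t : ℝ} (hs : 0 ≤ s) (hst : s ≤ t)
    (h : P.F t (X t) < 0) : P.F s (X s) < 0 :=
  (hX.F_mono hs (mem_Ici.2 (hs.trans hst)) hst).trans_lt h

end Par

/-! ### The time between bumps -/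

/-- If `v'' ≥ b² v` and `v ≥ ε` on `[t, s]` while `b v + |v'| ≤ Z`, then `s - t` is bounded: `v' + b v`
grows and `b v - v'` decays at rate `b`, and both are at least `b ε` at a minimum of `v`. -/
theorem hyperbolic_gap {v w w' : ℝ → ℝ} {t s b ε Z : ℝ} (hts : t ≤ s) (hb : 0 < b) (hε : 0 < ε)
    (hv : ∀ τ ∈ Icc t s, HasDerivAt v (w τ) τ) (hw : ∀ τ, HasDerivAt w (w' τ) τ)
    (hw' : ∀ τ ∈ Ioo t s, b ^ 2 * v τ ≤ w' τ) (hvε : ∀ τ ∈ Icc t s, ε ≤ v τ)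
    (hZ : ∀ τ ∈ Icc t s, b * v τ + |w τ| ≤ Z) :
    b ^ 2 * ε ^ 2 * exp (b * (s - t)) ≤ Z ^ 2 := by
  have hts' : t ∈ Icc t s := ⟨le_rfl, hts⟩
  have hss' : s ∈ Icc t s := ⟨hts, le_rfl⟩
  have dp : ∀ τ ∈ Icc t s, HasDerivAt (fun τ => (w τ + b * v τ) * exp (-b * τ))
      ((w' τ - b ^ 2 * v τ) * exp (-b * τ)) τ := fun τ hτ => by
    have e : HasDerivAt (fun τ => exp (-b * τ)) (exp (-b * τ) * (-b * 1)) τ :=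
      ((hasDerivAt_id τ).const_mul (-b)).exp
    exact (((hw τ).add ((hv τ hτ).const_mul b)).mul e).congr_deriv (by
      simp only [Pi.add_apply]; ring)
  have dm : ∀ τ ∈ Icc t s, HasDerivAt (fun τ => (b * v τ - w τ) * exp (b * τ))
      (-(w' τ - b ^ 2 * v τ) * exp (b * τ)) τ := fun τ hτ => by
    have e : HasDerivAt (fun τ => exp (b * τ)) (exp (b * τ) * (b * 1)) τ :=
      ((hasDerivAt_id τ).const_mul b).exp
    exact ((((hv τ hτ).const_mul b).sub (hw τ)).mul e).congr_deriv (by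
      simp only [Pi.sub_apply]; ring)
  have mono : MonotoneOn (fun τ => (w τ + b * v τ) * exp (-b * τ)) (Icc t s) := by
    refine monotoneOn_of_hasDerivWithinAt_nonneg (convex_Icc t s)
      (fun τ hτ => (dp τ hτ).continuousAt.continuousWithinAt)
      (fun τ hτ => (dp τ (interior_subset hτ)).hasDerivWithinAt) fun τ hτ => ?_
    rw [interior_Icc] at hτ
    exact mul_nonneg (by linarith [hw' τ hτ]) (exp_pos _).le
  have anti : AntitoneOn (fun τ => (b * v τ - w τ) * exp (b * τ)) (Icc t s) := by
    refine antitoneOn_of_hasDerivWithinAt_nonpos (convex_Icc t s)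
      (fun τ hτ => (dm τ hτ).continuousAt.continuousWithinAt)
      (fun τ hτ => (dm τ (interior_subset hτ)).hasDerivWithinAt) fun τ hτ => ?_
    rw [interior_Icc] at hτ
    exact mul_nonpos_of_nonpos_of_nonneg (by linarith [hw' τ hτ]) (exp_pos _).le
  have forward : ∀ m ∈ Icc t s, 0 ≤ w m → b * ε * exp (b * (s - m)) ≤ Z := by
    intro m hm hwm
    have h1 := mono hm hss' hm.2
    simp only at h1
    have h2 : b * ε ≤ w m + b * v m := by nlinarith [hvε m hm]
    have h3 : b * ε * exp (-b * m) ≤ Z * exp (-b * s) := by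
      have := hZ s hss'
      have := le_abs_self (w s)
      calc _ ≤ (w m + b * v m) * exp (-b * m) := by gcongr
        _ ≤ _ := h1
        _ ≤ _ := by gcongr; linarith
    calc b * ε * exp (b * (s - m)) = b * ε * exp (-b * m) * exp (b * s) := by
          rw [mul_assoc (b * ε), ← exp_add]; ring_nf
      _ ≤ Z * exp (-b * s) * exp (b * s) := by gcongr
      _ = Z := by rw [mul_assoc, ← exp_add]; simp
  have backward : ∀ m ∈ Icc t s, w m ≤ 0 → b * ε * exp (b * (m - t)) ≤ Z := by
    intro m hm hwm
    have h1 := anti hts' hm hm.1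
    simp only at h1
    have h2 : b * ε ≤ b * v m - w m := by nlinarith [hvε m hm]
    have h3 : b * ε * exp (b * m) ≤ Z * exp (b * t) := by
      have := hZ t hts'
      have := neg_le_abs (w t)
      calc _ ≤ (b * v m - w m) * exp (b * m) := by gcongr
        _ ≤ _ := h1
        _ ≤ _ := by gcongr; linarith
    calc b * ε * exp (b * (m - t)) = b * ε * exp (b * m) * exp (-b * t) := by
          rw [mul_assoc (b * ε), ← exp_add]; ring_nf
      _ ≤ Z * exp (b * t) * exp (-b * t) := by gcongr
      _ = Z := by rw [mul_assoc, ← exp_add]; simp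
  have hbε : b * ε ≤ Z := by nlinarith [hvε t hts', hZ t hts', abs_nonneg (w t)]
  have hbε0 : 0 < b * ε := mul_pos hb hε
  rcases le_total 0 (w t) with h | h
  · have := forward t hts' h
    nlinarith [exp_pos (b * (s - t))]
  rcases le_total (w s) 0 with h' | h'
  · have := backward s hss' h'
    nlinarith [exp_pos (b * (s - t))]
  obtain ⟨m, hm, hm0⟩ : (0 : ℝ) ∈ w '' Icc t s :=
    intermediate_value_Icc hts (fun τ _ => (hw τ).continuousAt.continuousWithinAt) ⟨h, h'⟩
  have e1 := forward m hm hm0.ge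
  have e2 := backward m hm hm0.le
  calc b ^ 2 * ε ^ 2 * exp (b * (s - t))
      = (b * ε * exp (b * (s - m))) * (b * ε * exp (b * (m - t))) := by
        rw [show b * (s - t) = b * (s - m) + b * (m - t) by ring, exp_add]; ring
    _ ≤ Z * Z := mul_le_mul e1 e2 (by positivity) (by linarith)
    _ = Z ^ 2 := by ring

namespace Par

variable {P : Par} {X : ℝ → ℝ × ℝ}

/-- Near the saddle the Hamiltonian is quadratically small. -/
theorem neg_F_le {t : ℝ} {x : ℝ × ℝ} (h0 : 0 ≤ x.1) (h1 : x.1 ≤ P.V) :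
    -P.F t x ≤ (P.a ^ 2 / 2 + P.μ * P.V ^ (P.q - 1)) * x.1 ^ 2 := by
  have hp := P.hp
  have hq := P.hq
  have hsg := P.prim_sg_nonneg x.2
  have e1 : prim P.al x.1 ≤ P.a ^ 2 / 2 * x.1 ^ 2 := by
    rw [P.prim_al_of_mem h0 h1]
    have : 0 ≤ x.1 ^ (P.p + 1) / (P.p + 1) := div_nonneg (rpow_nonneg h0 _) (by linarith)
    linarith
  have e2 : prim P.be x.1 ≤ P.V ^ (P.q - 1) * x.1 ^ 2 := by
    rw [P.prim_be_of_mem h0 h1, show P.q + 1 = (P.q - 1) + (2 : ℕ) by push_cast; ring,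
      rpow_add_natCast' h0 (by push_cast; linarith)]
    have : x.1 ^ (P.q - 1) ≤ P.V ^ (P.q - 1) := rpow_le_rpow h0 h1 (by linarith)
    rw [div_le_iff₀ (by push_cast; linarith)]
    have h3 : x.1 ^ (P.q - 1) * x.1 ^ 2 ≤ P.V ^ (P.q - 1) * x.1 ^ 2 := by gcongr
    have h4 : 0 ≤ x.1 ^ (P.q - 1) * x.1 ^ 2 := mul_nonneg (rpow_nonneg h0 _) (sq_nonneg _)
    push_cast
    nlinarith
  have e3 : P.m t * prim P.be x.1 ≤ P.μ * (P.V ^ (P.q - 1) * x.1 ^ 2) :=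
    mul_le_mul (P.m_le t) e2 (P.prim_be_nonneg _) P.hμ.le
  unfold F
  linarith

/-- The bumps of a trajectory which is at height `V0` with negative Hamiltonian at time `T` recur with
delays bounded independently of `T`. Each bump raises the Hamiltonian by at least a multiple of
`e ^ (-κ s)`; so before a bump at time `s` the solution stays above a multiple of `e ^ (-κ s / 2)`,
and, since `κ < b < a`, the hyperbolic estimate yields a preceding bump not much earlier. -/
theorem gap (P : Par) : ∃ δ h : ℝ, 0 < δ ∧ 0 < h ∧ ∃ Φ : ℝ → ℝ, ∀ X, P.IsTraj X → ∀ T,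
    P.F T (X T) < 0 → (X T).1 = P.V0 → ∀ t, 0 ≤ t → t ≤ T - h →
    ∃ s, t ≤ s ∧ s ≤ Φ t ∧ s ≤ T ∧ δ ≤ (X s).1 := by
  have ha := P.ha
  have hp := P.hp
  have hq := P.hq
  have hκ := P.hκ
  have hκa := P.hκa
  have hμ := P.hμ
  have hV0 := P.hV0
  have hW := P.hW
  have hV := P.V_pos
  obtain ⟨b, hb1, hb2⟩ := exists_between hκa
  have hb : 0 < b := hκ.trans hb1
  have hab : 0 < P.a ^ 2 - b ^ 2 := by nlinarith
  -- below the height `δ`, the autonomous force is at least `b² v`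
  obtain ⟨δ, hδ0, hδV, hδab⟩ : ∃ δ : ℝ, 0 < δ ∧ δ ≤ P.V0 / 2 ∧ δ ^ (P.p - 1) ≤ P.a ^ 2 - b ^ 2 := by
    refine ⟨min (P.V0 / 2) ((P.a ^ 2 - b ^ 2) ^ (1 / (P.p - 1))), lt_min (by linarith)
      (by positivity), min_le_left _ _, ?_⟩
    calc _ ≤ ((P.a ^ 2 - b ^ 2) ^ (1 / (P.p - 1))) ^ (P.p - 1) :=
          rpow_le_rpow (le_min (by linarith) (by positivity)) (min_le_right _ _) (by linarith)
      _ = _ := by rw [← rpow_mul hab.le, one_div_mul_cancel (by linarith), rpow_one]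
  have hδV' : δ < P.V := by unfold V; linarith
  -- since `|v'| ≤ W`, the solution varies by at most `δ / 2` during a time `h`
  set h := δ / (2 * P.W) with hh
  have hh0 : 0 < h := by positivity
  have hWh : P.W * h = δ / 2 := by rw [hh]; field_simp
  set Bd := prim P.be (δ / 2) with hBd
  have hBd0 : 0 < Bd := by
    rw [hBd, P.prim_be_of_mem (by linarith) (by linarith)]; positivity
  set Kc := P.a ^ 2 / 2 + P.μ * P.V ^ (P.q - 1) with hKc
  have hKc0 : 0 < Kc := by positivity
  set c1 := P.κ * P.μ * exp (-P.κ * h) * Bd * h / Kc with hc1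
  have hc10 : 0 < c1 := by positivity
  set Z := b * P.V + P.W with hZ
  refine ⟨δ, h, hδ0, hh0, fun t => max t ((b * t + log (Z ^ 2 / (b ^ 2 * c1))) / (b - P.κ)), ?_⟩
  intro X hX T hFT hXT t ht htT
  have reg : ∀ s, 0 ≤ s → s ≤ T → 0 < (X s).1 ∧ (X s).1 < P.V ∧ |(X s).2| < P.W :=
    fun s h0 h1 => P.region (hX.F_neg_of_le h0 h1 hFT)
  by_cases hvt : δ ≤ (X t).1
  · exact ⟨t, le_rfl, le_max_left _ _, by linarith, hvt⟩
  have slow : ∀ x y, x ≤ y → |(X y).1 - (X x).1| ≤ P.W * (y - x) := by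
    intro x y hxy
    have := (convex_Icc x y).norm_image_sub_le_of_norm_hasDerivWithin_le (C := P.W)
      (f := fun s => (X s).1) (fun s _ => (hX.d1 s).hasDerivWithinAt) (fun s _ => by
        rw [Real.norm_eq_abs, abs_le]; exact clip_mem (by linarith) _)
      (left_mem_Icc.2 hxy) (right_mem_Icc.2 hxy)
    rwa [Real.norm_eq_abs, Real.norm_eq_abs, abs_of_nonneg (sub_nonneg.2 hxy)] at this
  have hcont : Continuous fun s => (X s).1 := continuous_fst.comp hX.cont
  have hend : δ ≤ (X (T - h)).1 := by
    have := abs_le.1 (slow (T - h) T (by linarith))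
    rw [hXT, sub_sub_cancel, hWh] at this
    linarith [this.2]
  -- the first bump after `t`
  obtain ⟨t2, ⟨⟨ht2a, ht2b⟩, ht2c⟩, hleast⟩ :
      ∃ t2, IsLeast (Icc t (T - h) ∩ {s | δ ≤ (X s).1}) t2 :=
    (isCompact_Icc.inter_right (isClosed_le continuous_const hcont)).exists_isLeast
      ⟨T - h, ⟨htT, le_rfl⟩, hend⟩
  have hbefore : ∀ τ, t ≤ τ → τ < t2 → (X τ).1 < δ := by
    intro τ h1 h2
    by_contra! h3
    exact absurd (hleast ⟨⟨h1, by linarith⟩, h3⟩) (not_le.2 h2)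
  -- the gain of the Hamiltonian over the bump on `[t2, t2 + h]`
  have hgain : c1 * Kc * exp (-P.κ * t2) ≤ -P.F t2 (X t2) := by
    have hmv : P.κ * P.m (t2 + h) * Bd * (t2 + h - t2) ≤
        P.F (t2 + h) (X (t2 + h)) - P.F t2 (X t2) := by
      refine (convex_Icc t2 (t2 + h)).mul_sub_le_image_sub_of_le_deriv
        (f := fun s => P.F s (X s)) hX.F_continuous.continuousOn
        (fun s hs => ?_) (fun s hs => ?_) t2 ⟨le_rfl, by linarith⟩ (t2 + h) ⟨by linarith, le_rfl⟩
        (by linarith)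
      · rw [interior_Icc] at hs
        exact (hX.F_hasDerivAt (by linarith [hs.1])).differentiableAt.differentiableWithinAt
      · rw [interior_Icc] at hs
        rw [(hX.F_hasDerivAt (by linarith [hs.1])).deriv]
        have e1 : P.m (t2 + h) ≤ P.m s := P.m_anti hs.2.le
        have e2 : Bd ≤ prim P.be (X s).1 := by
          refine P.prim_be_mono ?_
          have := (abs_le.1 (slow t2 s hs.1.le)).1
          have h3 : P.W * (s - t2) ≤ P.W * h := by gcongr; linarith [hs.2]
          have h4 : δ ≤ (X t2).1 := ht2c
          linarith
        have := (P.m_pos (t2 + h)).le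
        have := (P.m_pos s).le
        gcongr
    have hneg := hX.F_neg_of_le (s := t2 + h) (by linarith) (by linarith) hFT
    have hm : P.m (t2 + h) = P.μ * (exp (-P.κ * h) * exp (-P.κ * t2)) := by
      rw [P.m_eq (by linarith), ← exp_add]; ring_nf
    have : c1 * Kc * exp (-P.κ * t2) = P.κ * P.m (t2 + h) * Bd * (t2 + h - t2) := by
      rw [hm, hc1]; field_simp; ring
    linarith
  set ε := sqrt (c1 * exp (-P.κ * t2)) with hε
  have hε2 : ε ^ 2 = c1 * exp (-P.κ * t2) := sq_sqrt (by positivity)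
  have hε0 : 0 < ε := sqrt_pos.2 (by positivity)
  have hlow : ∀ τ ∈ Icc t t2, ε ≤ (X τ).1 := by
    intro τ hτ
    obtain ⟨r1, r2, -⟩ := reg τ (by linarith [hτ.1]) (by linarith [hτ.2])
    have e1 : -P.F τ (X τ) ≤ Kc * (X τ).1 ^ 2 := neg_F_le r1.le r2.le
    have e2 : P.F τ (X τ) ≤ P.F t2 (X t2) :=
      hX.F_mono (mem_Ici.2 (by linarith [hτ.1])) (mem_Ici.2 (by linarith)) hτ.2
    refine le_of_sq_le_sq ?_ r1.le
    rw [hε2]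
    have e3 : Kc * (c1 * exp (-P.κ * t2)) ≤ Kc * (X τ).1 ^ 2 := by nlinarith
    exact le_of_mul_le_mul_left e3 hKc0
  have hgap := hyperbolic_gap (v := fun s => (X s).1) (w := fun s => (X s).2)
    (w' := fun s => P.al (X s).1 + P.m s * P.be (X s).1) (Z := Z) ht2a hb hε0
    (fun τ hτ => by
      have := hX.d1 τ
      rwa [P.sg_of_abs_le (reg τ (by linarith [hτ.1]) (by linarith [hτ.2])).2.2.le] at this)
    hX.d2 (fun τ hτ => by
      obtain ⟨r1, r2, -⟩ := reg τ (by linarith [hτ.1]) (by linarith [hτ.2])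
      have h3 := hbefore τ hτ.1.le hτ.2
      have h4 : 0 ≤ P.m τ * P.be (X τ).1 := mul_nonneg (P.m_pos _).le (P.be_nonneg _)
      have h5 : (X τ).1 ^ (P.p - 1) ≤ P.a ^ 2 - b ^ 2 :=
        (rpow_le_rpow r1.le h3.le (by linarith)).trans hδab
      have h6 : (X τ).1 ^ P.p = (X τ).1 ^ (P.p - 1) * (X τ).1 := by
        rw [← rpow_add_one r1.ne', sub_add_cancel]
      rw [P.al_of_mem r1.le r2.le, h6]
      nlinarith) hlow
    (fun τ hτ => by
      obtain ⟨r1, r2, r3⟩ := reg τ (by linarith [hτ.1]) (by linarith [hτ.2])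
      rw [hZ]
      gcongr)
  rw [hε2] at hgap
  refine ⟨t2, ht2a, le_max_of_le_right ?_, by linarith, ht2c⟩
  rw [le_div_iff₀ (by linarith)]
  have hexp : exp (b * (t2 - t) - P.κ * t2) ≤ Z ^ 2 / (b ^ 2 * c1) := by
    rw [le_div_iff₀ (by positivity), sub_eq_add_neg, exp_add, ← neg_mul]
    linarith
  have := (le_log_iff_exp_le (by positivity)).2 hexp
  linarith

end Par

namespace Par

variable {P : Par} {X : ℝ → ℝ × ℝ}

/-! ### The limit trajectory -/

/-- All the later gains of the Hamiltonian together are at most a multiple of `e ^ (-κ t)`. -/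
theorem IsTraj.F_lower (hX : P.IsTraj X) {T : ℝ} (hneg : P.F T (X T) < 0)
    (hT : 0 ≤ P.F T (X T) + P.m T * prim P.be P.V) {t : ℝ} (ht : 0 ≤ t) (htT : t ≤ T) :
    -(P.m t * prim P.be P.V) ≤ P.F t (X t) := by
  have hanti : AntitoneOn (fun s => P.F s (X s) + P.m s * prim P.be P.V) (Icc t T) := by
    refine antitoneOn_of_hasDerivWithinAt_nonpos (convex_Icc t T)
      (f' := fun s => P.κ * P.m s * prim P.be (X s).1 + -P.κ * P.m s * prim P.be P.V)
      (hX.F_continuous.add (P.m_cont.mul continuous_const)).continuousOn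
      (fun s hs => ?_) fun s hs => ?_
    · rw [interior_Icc] at hs
      have h0 : 0 < s := ht.trans_lt hs.1
      exact ((hX.F_hasDerivAt h0).add ((P.m_hasDerivAt h0).mul_const _)).hasDerivWithinAt
    · rw [interior_Icc] at hs
      obtain ⟨-, h1, -⟩ := P.region (hX.F_neg_of_le (ht.trans hs.1.le) hs.2.le hneg)
      have h2 := P.prim_be_mono h1.le
      have h3 : 0 ≤ P.κ * P.m s := mul_nonneg P.hκ.le (P.m_pos s).le
      nlinarith
  have := hanti ⟨le_rfl, htT⟩ ⟨htT, le_rfl⟩ htT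
  simp only at this
  linarith

theorem F_start (P : Par) (t : ℝ) : P.F t (P.V0, 0) = -(P.m t * prim P.be P.V0) := by
  have hV0 := P.hV0
  have hp := P.hp
  have e : prim P.al P.V0 = 0 := by
    rw [P.prim_al_of_mem hV0.le (by unfold V; linarith),
      show P.p + 1 = (P.p - 1) + (2 : ℕ) by push_cast; ring, rpow_add_natCast hV0.ne', P.hV0eq]
    push_cast
    have : P.p - 1 + 2 ≠ 0 := by linarith
    field_simp
    ring
  unfold F
  rw [e, prim_zero]
  ring

/-- A trajectory whose Hamiltonian tends to zero from below but which does not tend to the saddle.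
It is a limit of trajectories passing through `(V0, 0)` at later and later times. -/
theorem exists_limit (P : Par) : ∃ X, P.IsTraj X ∧
    (∀ t, 0 ≤ t → P.F t (X t) < 0 ∧ -(P.m t * prim P.be P.V) ≤ P.F t (X t)) ∧
    ∃ δ, 0 < δ ∧ ∀ T, ∃ s, T < s ∧ δ ≤ (X s).1 := by
  obtain ⟨δ, h, hδ, hh, Φ, hΦ⟩ := P.gap
  have hV0 := P.hV0
  have hV := P.V_pos
  choose Y hY0 hY using fun k : ℕ => P.exists_traj (k + h) (P.V0, 0)
  have hT0 : ∀ k : ℕ, (0 : ℝ) ≤ k + h := fun k => by positivity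
  have hneg : ∀ k : ℕ, P.F (k + h) (Y k (k + h)) < 0 := fun k => by
    rw [hY0, F_start, P.prim_be_of_mem hV0.le (by unfold V; linarith)]
    have := P.m_pos (k + h)
    have := P.hq
    have : 0 < P.V0 ^ (P.q + 1) / (P.q + 1) := by positivity
    nlinarith
  have hlow : ∀ k : ℕ, ∀ t, 0 ≤ t → t ≤ k + h →
      -(P.m t * prim P.be P.V) ≤ P.F t (Y k t) := fun k t h0 h1 => by
    refine (hY k).F_lower (hneg k) ?_ h0 h1
    rw [hY0, F_start]
    have := P.prim_be_mono (show P.V0 ≤ P.V by unfold V; linarith)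
    nlinarith [P.m_pos (k + h)]
  have hcpt : ∀ k, Y k 0 ∈ Icc ((0 : ℝ), -P.W) (P.V, P.W) := fun k => by
    obtain ⟨h1, h2, h3⟩ := P.region ((hY k).F_neg_of_le le_rfl (hT0 k) (hneg k))
    rw [abs_lt] at h3
    exact ⟨⟨h1.le, h3.1.le⟩, ⟨h2.le, h3.2.le⟩⟩
  obtain ⟨x, -, φ, hφ, hlim⟩ := isCompact_Icc.tendsto_subseq hcpt
  obtain ⟨X, hX0, hX⟩ := P.exists_traj 0 x
  obtain ⟨K, hK⟩ := P.f_lipschitz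
  have hdist : ∀ k, ∀ t, 0 ≤ t →
      dist (Y (φ k) t) (X t) ≤ dist (Y (φ k) 0) x * exp (K * t) := fun k t ht => by
    have := dist_solutions_le P.f K hK _ _ (hY (φ k)) hX t ht
    rwa [hX0] at this
  have hd0 : Tendsto (fun k => dist (Y (φ k) 0) x) atTop (𝓝 0) :=
    tendsto_iff_dist_tendsto_zero.1 hlim
  have hpt : ∀ t, 0 ≤ t → Tendsto (fun k => Y (φ k) t) atTop (𝓝 (X t)) := fun t ht => by
    rw [tendsto_iff_dist_tendsto_zero]
    refine squeeze_zero (fun _ => dist_nonneg) (fun k => hdist k t ht) ?_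
    simpa using hd0.mul_const (exp (K * t))
  have hlate : ∀ t : ℝ, ∀ᶠ k in atTop, t ≤ φ k := fun t =>
    (tendsto_natCast_atTop_atTop.comp hφ.tendsto_atTop).eventually_ge_atTop t
  have hFle : ∀ t, 0 ≤ t → P.F t (X t) ≤ 0 := fun t ht => by
    refine le_of_tendsto (((P.F_cont t).tendsto _).comp (hpt t ht)) ?_
    filter_upwards [hlate t] with k hk
    exact ((hY (φ k)).F_neg_of_le ht (by linarith) (hneg _)).le
  have hFge : ∀ t, 0 ≤ t → -(P.m t * prim P.be P.V) ≤ P.F t (X t) := fun t ht => by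
    refine ge_of_tendsto (((P.F_cont t).tendsto _).comp (hpt t ht)) ?_
    filter_upwards [hlate t] with k hk
    exact hlow _ t ht (by linarith)
  have hbump : ∀ T, ∃ s, T < s ∧ δ / 2 ≤ (X s).1 := fun T => by
    set t := max T 0 + 1 with ht
    have ht0 : 0 ≤ t := by have := le_max_right T 0; linarith
    have hsmall : ∀ᶠ k in atTop, dist (Y (φ k) 0) x * exp (K * Φ t) < δ / 2 := by
      have : Tendsto (fun k => dist (Y (φ k) 0) x * exp (K * Φ t)) atTop (𝓝 0) := by
        simpa using hd0.mul_const (exp (K * Φ t))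
      exact this.eventually_lt_const (by linarith)
    obtain ⟨k, hk1, hk2⟩ := (hsmall.and (hlate t)).exists
    obtain ⟨s, hs1, hs2, -, hs3⟩ := hΦ _ (hY (φ k)) _ (hneg _) (by rw [hY0]) t ht0 (by linarith)
    refine ⟨s, by have := le_max_left T 0; linarith, ?_⟩
    have h1 : dist (Y (φ k) s) (X s) < δ / 2 := by
      refine ((hdist k s (ht0.trans hs1)).trans ?_).trans_lt hk1
      gcongr
    have h2 : |(Y (φ k) s).1 - (X s).1| ≤ dist (Y (φ k) s) (X s) := by
      rw [← Real.dist_eq]; exact le_max_left _ _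
    have := (abs_le.1 (h2.trans h1.le)).2
    linarith
  refine ⟨X, hX, fun t ht => ⟨?_, hFge t ht⟩, δ / 2, by linarith, hbump⟩
  -- if `F` vanished at `t`, it would vanish on `[t, ∞)`, although it strictly increases at bumps
  by_contra! hF0
  obtain ⟨s, hs, hδs⟩ := hbump t
  have hs0 : 0 < s := ht.trans_lt hs
  have hzero : (fun τ => P.F τ (X τ)) =ᶠ[𝓝 s] fun _ => 0 := by
    filter_upwards [lt_mem_nhds hs] with τ hτ
    exact le_antisymm (hFle τ (ht.trans hτ.le))
      (hF0.trans (hX.F_mono (mem_Ici.2 ht) (mem_Ici.2 (ht.trans hτ.le)) hτ.le))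
  have hd := (hX.F_hasDerivAt hs0).unique
    ((hasDerivAt_const s (0 : ℝ)).congr_of_eventuallyEq hzero)
  have hmin : 0 < min (δ / 2) P.V := lt_min (by linarith) hV
  have hpos : 0 < prim P.be (X s).1 := by
    refine lt_of_lt_of_le ?_ (P.prim_be_mono ((min_le_left (δ / 2) P.V).trans hδs))
    rw [P.prim_be_of_mem hmin.le (min_le_right _ _)]
    have := P.hq
    positivity
  have := P.hκ
  have := P.m_pos s
  have : 0 < P.κ * P.m s * prim P.be (X s).1 := by positivity
  linarith

/-- A trajectory whose Hamiltonian tends to zero cannot stay away from the saddle: along it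
`(v' / v)'` is, up to an exponentially small error, at most `-(p - 1) / (p + 1) * v ^ (p - 1)`. -/
theorem IsTraj.exists_small (hX : P.IsTraj X)
    (hF : ∀ t, 0 ≤ t → P.F t (X t) < 0 ∧ -(P.m t * prim P.be P.V) ≤ P.F t (X t))
    {ε : ℝ} (hε : 0 < ε) (T : ℝ) : ∃ s, T < s ∧ (X s).1 < ε := by
  by_contra! hcon
  have hp := P.hp
  have hq := P.hq
  have hV := P.V_pos
  have hW := P.hW
  set c := (P.p - 1) / (P.p + 1) * ε ^ (P.p - 1) with hc
  have hc0 : 0 < c := by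
    have : 0 < P.p - 1 := by linarith
    positivity
  set D := P.V ^ P.q * P.V + 2 * prim P.be P.V with hD
  have hmt : Tendsto (fun t => P.m t * D) atTop (𝓝 0) := by
    have h1 : Tendsto (fun t => P.μ * exp (-P.κ * t) * D) atTop (𝓝 (P.μ * 0 * D)) := by
      refine (Tendsto.const_mul _ (tendsto_exp_atBot.comp ?_)).mul_const _
      exact tendsto_id.const_mul_atTop_of_neg (by linarith [P.hκ])
    rw [mul_zero, zero_mul] at h1
    refine h1.congr' ?_
    filter_upwards [eventually_ge_atTop 0] with t ht
    rw [P.m_eq ht]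
  obtain ⟨T1, hT1⟩ := eventually_atTop.1
    (hmt.eventually_lt_const (show 0 < c / 2 * ε ^ 2 by positivity))
  set T2 := max (max T 0) T1 + 1 with hT2
  have hgeT : ∀ t, T2 ≤ t → T < t ∧ 0 < t ∧ T1 ≤ t := fun t ht => by
    have h1 := le_max_left (max T 0) T1
    have h2 := le_max_right (max T 0) T1
    have h3 := le_max_left T 0
    have h4 := le_max_right T 0
    refine ⟨?_, ?_, ?_⟩ <;> linarith
  have reg : ∀ t, T2 ≤ t → ε ≤ (X t).1 ∧ (X t).1 < P.V ∧ |(X t).2| < P.W := fun t ht =>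
    ⟨hcon t (hgeT t ht).1, (P.region (hF t (hgeT t ht).2.1.le).1).2⟩
  have hder : ∀ t, T2 ≤ t → HasDerivAt (fun s => (X s).2 / (X s).1 + c / 2 * s)
      (((P.al (X t).1 + P.m t * P.be (X t).1) * (X t).1 - (X t).2 * (X t).2) / (X t).1 ^ 2
        + c / 2 * 1) t := fun t ht => by
    obtain ⟨r1, r2, r3⟩ := reg t ht
    have hd1 := hX.d1 t
    rw [P.sg_of_abs_le r3.le] at hd1
    exact ((hX.d2 t).div hd1 (by linarith)).add ((hasDerivAt_id t).const_mul _)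
  have hder_le : ∀ t, T2 ≤ t →
      ((P.al (X t).1 + P.m t * P.be (X t).1) * (X t).1 - (X t).2 * (X t).2) / (X t).1 ^ 2
        + c / 2 * 1 ≤ 0 := fun t ht => by
    obtain ⟨r1, r2, r3⟩ := reg t ht
    have hv0 : 0 < (X t).1 := hε.trans_le r1
    have hm0 := P.m_pos t
    have hFt := (hF t (hgeT t ht).2.1.le).2
    have hmD := hT1 t (hgeT t ht).2.2
    have e1 : (X t).2 ^ 2 / 2 = P.F t (X t) + prim P.al (X t).1 + P.m t * prim P.be (X t).1 := by
      unfold F; rw [P.prim_sg_of_abs_le r3.le]; ring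
    have e2 := P.prim_al_of_mem hv0.le r2.le
    have e3 := P.al_of_mem hv0.le r2.le
    have e4 : P.m t * (P.be (X t).1 * (X t).1) ≤ P.m t * (P.V ^ P.q * P.V) := by
      refine mul_le_mul_of_nonneg_left ?_ hm0.le
      exact mul_le_mul (P.be_le _) r2.le hv0.le (rpow_nonneg hV.le _)
    have e5 : 0 ≤ P.m t * prim P.be (X t).1 := mul_nonneg hm0.le (P.prim_be_nonneg _)
    have e6 : (X t).1 ^ (P.p + 1) = (X t).1 ^ (P.p - 1) * (X t).1 ^ 2 := by
      rw [show P.p + 1 = (P.p - 1) + (2 : ℕ) by push_cast; ring, rpow_add_natCast hv0.ne']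
    have e7 : (X t).1 ^ P.p * (X t).1 = (X t).1 ^ (P.p - 1) * (X t).1 ^ 2 := by
      rw [← e6, rpow_add_one hv0.ne']
    have e8 : c * (X t).1 ^ 2 ≤ (P.p - 1) / (P.p + 1) * ((X t).1 ^ (P.p - 1) * (X t).1 ^ 2) := by
      rw [hc, mul_assoc]
      have h0 : 0 ≤ (P.p - 1) / (P.p + 1) := div_nonneg (by linarith) (by linarith)
      have : ε ^ (P.p - 1) ≤ (X t).1 ^ (P.p - 1) := rpow_le_rpow hε.le r1 (by linarith)
      gcongr
    have e9 : P.m t * D ≤ c / 2 * (X t).1 ^ 2 := by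
      have : ε ^ 2 ≤ (X t).1 ^ 2 := by gcongr
      nlinarith
    have e10 : (P.al (X t).1) * (X t).1 - 2 * prim P.al (X t).1 =
        -((P.p - 1) / (P.p + 1) * ((X t).1 ^ (P.p - 1) * (X t).1 ^ 2)) := by
      rw [e3, e2, e6, sub_mul, e7]
      have : P.p + 1 ≠ 0 := by linarith
      field_simp
      ring
    have hnum : (P.al (X t).1 + P.m t * P.be (X t).1) * (X t).1 - (X t).2 * (X t).2
        ≤ -(c / 2) * (X t).1 ^ 2 := by
      rw [hD] at e9
      nlinarith
    have : ((P.al (X t).1 + P.m t * P.be (X t).1) * (X t).1 - (X t).2 * (X t).2) / (X t).1 ^ 2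
        ≤ -(c / 2) := by
      rwa [div_le_iff₀ (by positivity)]
    linarith
  have hanti : AntitoneOn (fun s => (X s).2 / (X s).1 + c / 2 * s) (Ici T2) := by
    refine antitoneOn_of_hasDerivWithinAt_nonpos (convex_Ici T2)
      (fun t ht => (hder t ht).continuousAt.continuousWithinAt)
      (fun t ht => (hder t (interior_subset ht)).hasDerivWithinAt)
      (fun t ht => hder_le t (interior_subset ht))
  have hbd : ∀ t, T2 ≤ t → |(X t).2 / (X t).1| ≤ P.W / ε := fun t ht => by
    obtain ⟨r1, r2, r3⟩ := reg t ht
    rw [abs_div, abs_of_pos (hε.trans_le r1)]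
    gcongr
  -- after a time `L`, the bounded quantity `v' / v` would have dropped by more than `2 * W / ε`
  set L := (2 * (P.W / ε) + 1) * (2 / c) with hL
  have hL0 : 0 ≤ L := by positivity
  have h1 := hanti (mem_Ici.2 le_rfl) (mem_Ici.2 (show T2 ≤ T2 + L by linarith)) (by linarith)
  have h2 := abs_le.1 (hbd T2 le_rfl)
  have h3 := abs_le.1 (hbd (T2 + L) (by linarith))
  have h4 : c / 2 * L = 2 * (P.W / ε) + 1 := by rw [hL]; field_simp
  simp only at h1
  nlinarith [h2.1, h2.2, h3.1, h3.2]

end Par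

/-! ### Choice of the parameters -/

/-- For small `μ` the truncation levels can be chosen. -/
theorem exists_par {a p q κ : ℝ} (ha : 0 < a) (hp : 1 < p) (hq : 1 < q) (hκ : 0 < κ)
    (hκa : κ < a) : ∃ μ₀ > 0, ∀ μ, 0 < μ → μ ≤ μ₀ →
    ∃ P : Par, P.a = a ∧ P.p = p ∧ P.q = q ∧ P.κ = κ ∧ P.μ = μ := by
  set V0 := ((p + 1) * a ^ 2 / 2) ^ (1 / (p - 1)) with hV0
  have hpp : 0 < (p + 1) * a ^ 2 / 2 := by positivity
  have hV00 : 0 < V0 := by positivity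
  have hV0eq : V0 ^ (p - 1) = (p + 1) * a ^ 2 / 2 := by
    rw [hV0, ← rpow_mul hpp.le, one_div_mul_cancel (by linarith), rpow_one]
  set V := 2 * V0 with hV
  have hV0' : 0 < V := by positivity
  have hVgt : (p + 1) * a ^ 2 / 2 < V ^ (p - 1) := by
    rw [← hV0eq]
    exact rpow_lt_rpow hV00.le (by linarith) (by linarith)
  have hVp : V ^ p = V ^ (p - 1) * V := by rw [← rpow_add_one hV0'.ne', sub_add_cancel]
  have hVp1 : V ^ (p + 1) = V ^ (p - 1) * V ^ 2 := by
    rw [show p + 1 = (p - 1) + (2 : ℕ) by push_cast; ring, rpow_add_natCast hV0'.ne']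
  have g1 : 0 < V ^ p - a ^ 2 * V := by
    rw [hVp]
    have : a ^ 2 < V ^ (p - 1) := by nlinarith
    nlinarith
  have g2 : 0 < V ^ (p + 1) / (p + 1) - a ^ 2 * V ^ 2 / 2 := by
    rw [hVp1, sub_pos, lt_div_iff₀ (by linarith)]
    have : 0 < V ^ 2 := by positivity
    nlinarith
  set N1 := V ^ q with hN1
  set N2 := V ^ (q + 1) / (q + 1) with hN2
  have hN10 : 0 < N1 := by positivity
  have hN20 : 0 < N2 := by positivity
  refine ⟨min ((V ^ p - a ^ 2 * V) / N1) ((V ^ (p + 1) / (p + 1) - a ^ 2 * V ^ 2 / 2) / N2),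
    lt_min (by positivity) (by positivity), fun μ hμ0 hμ => ?_⟩
  have k1 : μ * N1 ≤ V ^ p - a ^ 2 * V :=
    (le_div_iff₀ hN10).1 (hμ.trans (min_le_left _ _))
  have k2 : μ * N2 ≤ V ^ (p + 1) / (p + 1) - a ^ 2 * V ^ 2 / 2 :=
    (le_div_iff₀ hN20).1 (hμ.trans (min_le_right _ _))
  have k3 : 0 < 2 * (a ^ 2 * V ^ 2 / 2 + μ * N2) := by positivity
  refine ⟨⟨a, p, q, κ, μ, V0, √(2 * (a ^ 2 * V ^ 2 / 2 + μ * N2)), ha, hp, hq, hκ, hκa, hμ0, hV00,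
    sqrt_pos.2 k3, hV0eq, by linarith, by linarith, ?_⟩, rfl, rfl, rfl, rfl, rfl⟩
  rw [sq_sqrt k3.le]
  linarith

/-- The multi-bump solution in Emden–Fowler variables. -/
theorem exists_emdenFowler {a p q κ μ : ℝ} (ha : 0 < a) (hp : 1 < p) (hq : 1 < q) (hκ : 0 < κ)
    (hκa : κ < a) (hμ : 0 < μ) : ∃ T₀ V : ℝ, ∃ v w : ℝ → ℝ,
    (∀ t, T₀ < t → 0 < v t ∧ v t ≤ V ∧ HasDerivAt v (w t) t ∧
      HasDerivAt w (a ^ 2 * v t - v t ^ p + μ * exp (-κ * t) * v t ^ q) t) ∧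
    (∀ ε > 0, ∀ T, ∃ s, T < s ∧ v s < ε) ∧
    ∃ δ > 0, ∀ T, ∃ s, T < s ∧ δ ≤ v s := by
  obtain ⟨μ₀, hμ₀, hP⟩ := exists_par ha hp hq hκ hκa
  have htend : Tendsto (fun t => μ * exp (-κ * t)) atTop (𝓝 (μ * 0)) :=
    Tendsto.const_mul _ (tendsto_exp_atBot.comp
      (tendsto_id.const_mul_atTop_of_neg (by linarith)))
  rw [mul_zero] at htend
  -- a time shift makes the coefficient `μ e ^ (-κ T₀)` small
  obtain ⟨T₀, hT₀⟩ := (htend.eventually_lt_const hμ₀).exists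
  obtain ⟨P, rfl, rfl, rfl, rfl, hPμ⟩ := hP (μ * exp (-κ * T₀)) (by positivity) hT₀.le
  obtain ⟨X, hX, hF, δ, hδ, hbump⟩ := P.exists_limit
  refine ⟨T₀, P.V, fun t => (X (t - T₀)).1, fun t => (X (t - T₀)).2, fun t ht => ?_,
    fun ε hε T => ?_, δ, hδ, fun T => ?_⟩
  · have ht0 : 0 < t - T₀ := sub_pos.2 ht
    obtain ⟨r1, r2, r3⟩ := P.region (hF _ ht0.le).1
    have hsub : HasDerivAt (fun t => t - T₀) 1 t := (hasDerivAt_id t).sub_const T₀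
    have d1 := (hX.d1 (t - T₀)).comp t hsub
    have d2 := (hX.d2 (t - T₀)).comp t hsub
    rw [P.sg_of_abs_le r3.le, mul_one] at d1
    rw [mul_one, P.al_of_mem r1.le r2.le, P.be_of_mem r1.le r2.le, P.m_eq ht0.le, hPμ,
      mul_assoc μ, ← exp_add] at d2
    refine ⟨r1, r2.le, d1, d2.congr_deriv ?_⟩
    ring_nf
  · obtain ⟨s, h1, h2⟩ := hX.exists_small hF hε (T - T₀)
    exact ⟨s + T₀, by linarith, by simpa using h2⟩
  · obtain ⟨s, h1, h2⟩ := hbump (T - T₀)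
    exact ⟨s + T₀, by linarith, by simpa using h2⟩

/-! ### Return to the radial equation -/

/-- Solutions of a second-order system with continuous right-hand side are `C²`. -/
theorem contDiffOn_two_of_system {v w g : ℝ → ℝ} {T₀ : ℝ}
    (hv : ∀ t, T₀ < t → HasDerivAt v (w t) t) (hw : ∀ t, T₀ < t → HasDerivAt w (g t) t)
    (hg : ContinuousOn g (Ioi T₀)) : ContDiffOn ℝ 2 v (Ioi T₀) := by
  have hw1 : ContDiffOn ℝ 1 w (Ioi T₀) := by
    rw [show (1 : WithTop ℕ∞) = 0 + 1 by norm_num, contDiffOn_succ_iff_deriv_of_isOpen isOpen_Ioi]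
    refine ⟨fun t ht => (hw t ht).differentiableAt.differentiableWithinAt, by simp, ?_⟩
    rw [contDiffOn_zero]
    exact hg.congr fun t ht => (hw t ht).deriv
  rw [show (2 : WithTop ℕ∞) = 1 + 1 by norm_num, contDiffOn_succ_iff_deriv_of_isOpen isOpen_Ioi]
  exact ⟨fun t ht => (hv t ht).differentiableAt.differentiableWithinAt, by simp,
    hw1.congr fun t ht => (hv t ht).deriv⟩

/-- The derivative of `u r = r ^ (-a) * v (-log r)` has the same form, with exponent `a + 1` and with
`-(a v + v')` in place of `v`. -/
theorem emdenFowler_deriv {v w : ℝ → ℝ} {a r : ℝ} (hr : 0 < r)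
    (hv : HasDerivAt v (w (-log r)) (-log r)) :
    HasDerivAt (fun r => r ^ (-a) * v (-log r))
      (-(r ^ (-a - 1)) * (a * v (-log r) + w (-log r))) r := by
  have h1 := hasDerivAt_rpow_const (x := r) (p := -a) (Or.inl hr.ne')
  have h2 : HasDerivAt (fun r => v (-log r)) (w (-log r) * -r⁻¹) r :=
    hv.comp r (hasDerivAt_log hr.ne').neg
  refine (h1.mul h2).congr_deriv ?_
  rw [rpow_sub_one hr.ne']
  field_simp
  ring

/-- Large times `s` correspond to small radii `e ^ (-s)`. -/
theorem frequently_of_unbounded {p : ℝ → Prop} (h : ∀ T, ∃ s, T < s ∧ p s) :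
    ∃ᶠ r in 𝓝[>] (0 : ℝ), 0 < r ∧ p (-log r) := by
  have ht : Tendsto (fun s : ℝ => exp (-s)) atTop (𝓝[>] 0) :=
    tendsto_exp_atBot_nhdsGT.comp tendsto_neg_atTop_atBot
  refine ht.frequently (frequently_atTop.2 fun T => ?_)
  obtain ⟨s, hs, hps⟩ := h T
  exact ⟨s, hs.le, exp_pos _, by simpa using hps⟩

theorem stmt11 (n : ℕ) (hn : 3 ≤ n) (s μ q : ℝ) (hs0 : 0 < s) (hs2 : s < 2)
    (hμ : 0 < μ) (hq1 : 1 < q) (hq2 : q < twoStar n - 1) (hq3 : twoStar n - 2 < q) :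
    ∃ R : ℝ, 0 < R ∧ ∃ u : ℝ → ℝ,
      IsRadialSol n s μ q (Set.Ioo 0 R) u ∧
      Filter.liminf (fun r : ℝ => ENNReal.ofReal (r ^ (((n : ℝ) - 2) / 2) * u r))
        (𝓝[>] (0 : ℝ)) = 0 ∧
      0 < Filter.limsup (fun r : ℝ => ENNReal.ofReal (r ^ (((n : ℝ) - 2) / 2) * u r))
        (𝓝[>] (0 : ℝ)) ∧
      Filter.limsup (fun r : ℝ => ENNReal.ofReal (r ^ (((n : ℝ) - 2) / 2) * u r))
        (𝓝[>] (0 : ℝ)) < ⊤ := by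
  have hn3 : (3 : ℝ) ≤ n := by exact_mod_cast hn
  have hn2 : (0 : ℝ) < (n : ℝ) - 2 := by linarith
  obtain ⟨a, ha_def⟩ : ∃ a : ℝ, a = ((n : ℝ) - 2) / 2 := ⟨_, rfl⟩
  have ha : 0 < a := by rw [ha_def]; positivity
  have hna : (n : ℝ) = 2 * a + 2 := by rw [ha_def]; ring
  obtain ⟨p, hp_def⟩ : ∃ p : ℝ, p = twoStarS n s - 1 := ⟨_, rfl⟩
  have hpa : a * p = a + 2 - s := by
    rw [hp_def, twoStarS, hna, add_sub_cancel_right]; field_simp; ring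
  have hp : 1 < p := by nlinarith
  have hstar : a * twoStar n = 2 * a + 2 := by
    rw [twoStar, hna, add_sub_cancel_right]; field_simp
  -- the decay rate of the perturbation; `κ < a` is exactly the condition `2* - 2 < q`
  obtain ⟨κ, hκ_def⟩ : ∃ κ : ℝ, κ = a + 2 - a * q := ⟨_, rfl⟩
  have hκ : 0 < κ := by nlinarith
  have hκa : κ < a := by nlinarith
  obtain ⟨T₀, V, v, w, hsys, hsmall, δ, hδ, hlarge⟩ := exists_emdenFowler ha hp hq1 hκ hκa hμ
  have hlogR : ∀ r ∈ Ioo 0 (exp (-T₀)), T₀ < -log r := fun r hr => by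
    have := (log_lt_iff_lt_exp hr.1).2 hr.2
    linarith
  have hval : ∀ r : ℝ, 0 < r →
      r ^ (((n : ℝ) - 2) / 2) * (r ^ (-a) * v (-log r)) = v (-log r) := fun r hr => by
    rw [← ha_def, ← mul_assoc, ← rpow_add hr, add_neg_cancel, rpow_zero, one_mul]
  refine ⟨exp (-T₀), exp_pos _, fun r => r ^ (-a) * v (-log r), ⟨?_, fun r hr => ?_, fun r hr => ?_⟩,
    ?_, ?_, ?_⟩
  · have hv2 : ContDiffOn ℝ 2 v (Ioi T₀) := by
      refine contDiffOn_two_of_system (fun t ht => (hsys t ht).2.2.1)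
        (fun t ht => (hsys t ht).2.2.2) fun t ht => ContinuousAt.continuousWithinAt ?_
      have hc : ContinuousAt v t := (hsys t ht).2.2.1.continuousAt
      have hcp := hc.rpow_const (p := p) (Or.inr (by linarith))
      have hcq := hc.rpow_const (p := q) (Or.inr (by linarith))
      exact ((continuousAt_const.mul hc).sub hcp).add
        ((by fun_prop : ContinuousAt (fun t => μ * exp (-κ * t)) t).mul hcq)
    have hid : ContDiffOn ℝ 2 (fun r : ℝ => r) (Ioo 0 (exp (-T₀))) := contDiffOn_id
    exact (hid.rpow_const_of_ne fun r hr => hr.1.ne').mul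
      (hv2.comp (hid.log fun r hr => hr.1.ne').neg hlogR)
  · exact mul_pos (rpow_pos_of_pos hr.1 _) (hsys _ (hlogR r hr)).1
  · have hr0 : 0 < r := hr.1
    obtain ⟨v0, -, d1, d2⟩ := hsys _ (hlogR r hr)
    have hder : deriv (fun r => r ^ (-a) * v (-log r)) =ᶠ[𝓝 r]
        fun r => -(r ^ (-(a + 1)) * (a * v (-log r) + w (-log r))) := by
      filter_upwards [isOpen_Ioo.mem_nhds hr] with x hx
      rw [(emdenFowler_deriv hx.1 (hsys _ (hlogR x hx)).2.2.1).deriv]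
      ring_nf
    have hder2 := (emdenFowler_deriv (a := a + 1) (v := fun t => a * v t + w t)
      (w := fun t => a * w t + (a ^ 2 * v t - v t ^ p + μ * exp (-κ * t) * v t ^ q))
      hr0 ((d1.const_mul a).add d2)).neg
    unfold radialEq
    rw [hder.deriv_eq, hder.self_of_nhds]
    rw [show (fun r => -(r ^ (-(a + 1)) * (a * v (-log r) + w (-log r)))) =
      -(fun r => r ^ (-(a + 1)) * (a * v (-log r) + w (-log r))) from rfl, hder2.deriv, Pi.neg_apply]
    rw [← hp_def, mul_rpow (rpow_nonneg hr0.le _) v0.le, mul_rpow (rpow_nonneg hr0.le _) v0.le,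
      ← rpow_mul hr0.le, ← rpow_mul hr0.le, ← mul_assoc (r ^ (-s)), ← rpow_add hr0]
    have e1 : r ^ (-s + -a * p) = r ^ (-(a + 1) - 1) := by
      congr 1; linarith
    have e2 : r ^ (-a * q) = r ^ (-(a + 1) - 1) * exp (-κ * -log r) := by
      rw [show -κ * -log r = log r * κ by ring, ← rpow_def_of_pos hr0, ← rpow_add hr0]
      congr 1; rw [hκ_def]; ring
    have e3 : r ^ (-(a + 1)) = r ^ (-(a + 1) - 1) * r := by
      rw [← rpow_add_one hr0.ne', sub_add_cancel]
    rw [e1, e2, e3, hna]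
    field_simp
    ring
  · refine le_antisymm (le_of_forall_gt fun c hc => ?_) bot_le
    obtain ⟨ε, hε0, hεc⟩ := ENNReal.lt_iff_exists_nnreal_btwn.1 hc
    refine lt_of_le_of_lt (liminf_le_of_frequently_le ?_) hεc
    refine (frequently_of_unbounded (hsmall ε (by exact_mod_cast hε0))).mono fun r hr => ?_
    simp only
    rw [hval r hr.1]
    exact ENNReal.ofReal_le_of_le_toReal hr.2.le
  · refine lt_of_lt_of_le (ENNReal.ofReal_pos.2 hδ) (le_limsup_of_frequently_le ?_)
    refine (frequently_of_unbounded hlarge).mono fun r hr => ?_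
    simp only
    rw [hval r hr.1]
    exact ENNReal.ofReal_le_ofReal hr.2
  · refine lt_of_le_of_lt (limsup_le_of_le (a := ENNReal.ofReal V) (by isBoundedDefault) ?_)
      ENNReal.ofReal_lt_top
    filter_upwards [Ioo_mem_nhdsGT (exp_pos (-T₀))] with r hr
    rw [hval r hr.1]
    exact ENNReal.ofReal_le_ofReal (hsys _ (hlogR r hr)).2.1
end
end
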